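/- One-shot conversion of adaptive to parallel strategies: Let E, F : M_{d_A}(ℂ) → M_{d_B}(ℂ) be quantum channels with 𝐷̂_α(E‖F) < ∞ for some α ∈ (1,2], and set C := 8 · inf_{α ∈ (1,2]} (1/(α−1)) log(2^{(α−1)·𝐷̂_α(E‖F)} + 2). Let an n-step adaptive discrimination protocol be given with final states E(ρ_n) and F(σ_n). Then for all α_a, α_p ∈ (0,1), all μ > 0 and all m ≥ 1 there exists a state ν on (ℂ^{d_A})^{⊗m} ⊗ (ℂ^{d_A})^{⊗m} such that (1/n) D_H^{α_a}(E(ρ_n)‖F(σ_n)) ≤ (1/(1−α_a)) · (1/m) D_H^{α_p}((E^{⊗m} ⊗ id)(ν) ‖ (F^{⊗m} ⊗ id)(ν)) + f(α_a, α_p, m, n, μ), where f(α_a, α_p, m, n, μ) = (1/(1−α_a)) [ (C·n/√m) log(8/α_p) + (1/m)(log(1/α_p) − log(1 − α_p/4) + μ) + h(α_a)/n ]. -/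

import Mathlib

open scoped Kronecker ComplexOrder

noncomputable section

namespace QCD

attribute [local instance] Classical.propDecidable

variable {n m : Type} [Fintype n] [DecidableEq n] [Fintype m] [DecidableEq m]

/-- The real part of the trace of a complex matrix. -/
def rtr (A : Matrix n n ℂ) : ℝ := (A.trace).re

/-- A quantum state: positive semidefinite with trace one. -/
def IsState (ρ : Matrix n n ℂ) : Prop := ρ.PosSemidef ∧ ρ.trace = 1

/-- Loewner order: `A ≤ B` iff `B - A` is positive semidefinite. -/
def loewnerLE (A B : Matrix n n ℂ) : Prop := (B - A).PosSemidef

/-- Support containment (for PSD matrices): `ker σ ⊆ ker ρ`. -/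
def SuppLE (ρ σ : Matrix n n ℂ) : Prop := ∀ v : n → ℂ, σ.mulVec v = 0 → ρ.mulVec v = 0

/-- Functional calculus for Hermitian matrices (junk value `0` otherwise). -/
def matFun (f : ℝ → ℝ) (A : Matrix n n ℂ) : Matrix n n ℂ :=
  if hA : A.IsHermitian then
    (hA.eigenvectorUnitary : Matrix n n ℂ) *
      Matrix.diagonal (fun i => (f (hA.eigenvalues i) : ℂ)) *
      (star (hA.eigenvectorUnitary : Matrix n n ℂ))
  else 0

/-- Matrix square root via functional calculus. -/
def msqrt (A : Matrix n n ℂ) : Matrix n n ℂ := matFun Real.sqrt A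

/-- Matrix real power taken on the support (`0 ^ t := 0`). -/
def mpow (A : Matrix n n ℂ) (t : ℝ) : Matrix n n ℂ :=
  matFun (fun x => if x = 0 then 0 else x ^ t) A

/-- Matrix base-2 logarithm on the support. -/
def mlog (A : Matrix n n ℂ) : Matrix n n ℂ := matFun (Real.logb 2) A

/-- Positive part of a Hermitian matrix. -/
def mposPart (A : Matrix n n ℂ) : Matrix n n ℂ := matFun (fun x => max x 0) A

/-- Trace norm. -/
def traceNorm (A : Matrix n m ℂ) : ℝ := rtr (msqrt (A.conjTranspose * A))

/-- Base-2 logarithm as an extended real (`⊥` on nonpositive input). -/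
def elog (x : ℝ) : EReal := if x ≤ 0 then ⊥ else ((Real.logb 2 x : ℝ) : EReal)

/-- Base-2 logarithm of an extended real. -/
def elogE (x : EReal) : EReal := if x = ⊤ then ⊤ else elog x.toReal

/-- `2 ^ x` for an extended real `x`. -/
def epow2 (x : EReal) : EReal :=
  if x = ⊤ then ⊤ else if x = ⊥ then 0 else ((((2:ℝ) ^ x.toReal : ℝ)) : EReal)

/-- Umegaki relative entropy (base 2), `⊤` if the support condition fails. -/
def relEntropy (ρ σ : Matrix n n ℂ) : EReal :=
  if SuppLE ρ σ then ((rtr (ρ * (mlog ρ - mlog σ)) : ℝ) : EReal) else ⊤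

/-- Petz–Rényi divergence (base 2). -/
def petzRenyi (α : ℝ) (ρ σ : Matrix n n ℂ) : EReal :=
  if 1 < α ∧ ¬ SuppLE ρ σ then ⊤
  else (((α - 1)⁻¹ : ℝ) : EReal) * elog (rtr (mpow ρ α * mpow σ (1 - α)))

/-- Geometric (maximal) Rényi divergence (base 2). -/
def geomRenyi (α : ℝ) (ρ σ : Matrix n n ℂ) : EReal :=
  if SuppLE ρ σ then
    (((α - 1)⁻¹ : ℝ) : EReal) *
      elog (rtr (σ * mpow (mpow σ (-(1/2 : ℝ)) * ρ * mpow σ (-(1/2 : ℝ))) α))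
  else ⊤

/-- Max-relative entropy (base 2). -/
def dMax (ρ σ : Matrix n n ℂ) : EReal :=
  sInf {x : EReal | ∃ lam : ℝ, x = (lam : EReal) ∧ loewnerLE ρ ((((2:ℝ) ^ lam : ℝ) : ℂ) • σ)}

/-- Uhlmann fidelity. -/
def fidelity (ρ σ : Matrix n n ℂ) : ℝ := (rtr (msqrt (msqrt σ * ρ * msqrt σ))) ^ 2

/-- Sine (purified) distance. -/
def sineDist (ρ σ : Matrix n n ℂ) : ℝ := Real.sqrt (1 - fidelity ρ σ)

/-- Smoothed max-relative entropy: smoothing over states in the sine-distance ball. -/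
def dMaxSmooth (δ : ℝ) (ρ σ : Matrix n n ℂ) : EReal :=
  ⨅ (ρ' : Matrix n n ℂ) (_ : IsState ρ' ∧ sineDist ρ ρ' ≤ δ), dMax ρ' σ

/-- Hypothesis testing divergence (base 2). -/
def dH (ε : ℝ) (ρ σ : Matrix n n ℂ) : EReal :=
  - elog (sInf {x : ℝ | ∃ T : Matrix n n ℂ,
      T.PosSemidef ∧ ((1 : Matrix n n ℂ) - T).PosSemidef ∧ 1 - ε ≤ rtr (T * ρ) ∧ x = rtr (T * σ)})

/-- The quantity `c_γ(ρ‖σ)`. -/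
def cGamma (γ : ℝ) (ρ σ : Matrix n n ℂ) : EReal :=
  ((γ⁻¹ : ℝ) : EReal) *
    elogE (epow2 ((γ : ℝ) * petzRenyi (1 + γ) ρ σ) +
           epow2 (((-γ : ℝ) : EReal) * petzRenyi (1 - γ) ρ σ) + 1)

/-- Binary entropy (base 2). -/
def binEnt (x : ℝ) : ℝ := -(x * Real.logb 2 x) - (1 - x) * Real.logb 2 (1 - x)

/-- Action of `id_k ⊗ Φ` on block matrices. -/
def blockApply {k : Type} (Φ : Matrix n n ℂ →ₗ[ℂ] Matrix m m ℂ)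
    (M : Matrix (k × n) (k × n) ℂ) : Matrix (k × m) (k × m) ℂ :=
  Matrix.of fun p q => Φ (Matrix.of fun a b => M (p.1, a) (q.1, b)) p.2 q.2

/-- Action of `Φ ⊗ id_k` on block matrices. -/
def blockApplyRight {k : Type} (Φ : Matrix n n ℂ →ₗ[ℂ] Matrix m m ℂ)
    (M : Matrix (n × k) (n × k) ℂ) : Matrix (m × k) (m × k) ℂ :=
  Matrix.of fun p q => Φ (Matrix.of fun a b => M (a, p.2) (b, q.2)) p.1 q.1

/-- Quantum channel: trace preserving and completely positive. -/
def IsQChannel (Φ : Matrix n n ℂ →ₗ[ℂ] Matrix m m ℂ) : Prop :=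
  (∀ M : Matrix n n ℂ, (Φ M).trace = M.trace) ∧
  (∀ k : ℕ, 1 ≤ k → ∀ M : Matrix (Fin k × n) (Fin k × n) ℂ, M.PosSemidef →
    (blockApply Φ M).PosSemidef)

/-- `id_k ⊗ Φ` as a linear map. -/
def blockApplyL (k : Type) (Φ : Matrix n n ℂ →ₗ[ℂ] Matrix m m ℂ) :
    Matrix (k × n) (k × n) ℂ →ₗ[ℂ] Matrix (k × m) (k × m) ℂ where
  toFun := blockApply Φ
  map_add' M N := by
    ext p q
    show Φ (Matrix.of fun a b => (M + N) (p.1, a) (q.1, b)) p.2 q.2 = _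
    have h : (Matrix.of fun a b => (M + N) (p.1, a) (q.1, b)) =
        (Matrix.of fun a b => M (p.1, a) (q.1, b)) +
          (Matrix.of fun a b => N (p.1, a) (q.1, b)) := rfl
    rw [h, map_add]
    rfl
  map_smul' c M := by
    ext p q
    show Φ (Matrix.of fun a b => (c • M) (p.1, a) (q.1, b)) p.2 q.2 = _
    have h : (Matrix.of fun a b => (c • M) (p.1, a) (q.1, b)) =
        c • (Matrix.of fun a b => M (p.1, a) (q.1, b)) := rfl
    rw [h, map_smul]
    rfl

/-- `Φ ⊗ id_k` as a linear map. -/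
def blockApplyRightL (k : Type) (Φ : Matrix n n ℂ →ₗ[ℂ] Matrix m m ℂ) :
    Matrix (n × k) (n × k) ℂ →ₗ[ℂ] Matrix (m × k) (m × k) ℂ where
  toFun := blockApplyRight Φ
  map_add' M N := by
    ext p q
    show Φ (Matrix.of fun a b => (M + N) (a, p.2) (b, q.2)) p.1 q.1 = _
    have h : (Matrix.of fun a b => (M + N) (a, p.2) (b, q.2)) =
        (Matrix.of fun a b => M (a, p.2) (b, q.2)) +
          (Matrix.of fun a b => N (a, p.2) (b, q.2)) := rfl
    rw [h, map_add]
    rfl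
  map_smul' c M := by
    ext p q
    show Φ (Matrix.of fun a b => (c • M) (a, p.2) (b, q.2)) p.1 q.1 = _
    have h : (Matrix.of fun a b => (c • M) (a, p.2) (b, q.2)) =
        c • (Matrix.of fun a b => M (a, p.2) (b, q.2)) := rfl
    rw [h, map_smul]
    rfl

/-- Tensor product of two channels (Kronecker product action). -/
def tensorChannel {n₁ m₁ n₂ m₂ : Type}
    (E₁ : Matrix n₁ n₁ ℂ →ₗ[ℂ] Matrix m₁ m₁ ℂ) (E₂ : Matrix n₂ n₂ ℂ →ₗ[ℂ] Matrix m₂ m₂ ℂ) :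
    Matrix (n₁ × n₂) (n₁ × n₂) ℂ →ₗ[ℂ] Matrix (m₁ × m₂) (m₁ × m₂) ℂ :=
  (blockApplyRightL m₂ E₁).comp (blockApplyL n₁ E₂)

/-- Index type for `k`-fold tensor powers. -/
def tpow (ι : Type) : ℕ → Type
  | 0 => PUnit
  | (k+1) => tpow ι k × ι

def tpowFintype (ι : Type) [Fintype ι] : ∀ k : ℕ, Fintype (tpow ι k)
  | 0 => inferInstanceAs (Fintype PUnit)
  | (k+1) => letI := tpowFintype ι k; inferInstanceAs (Fintype (tpow ι k × ι))

instance (ι : Type) [Fintype ι] (k : ℕ) : Fintype (tpow ι k) := tpowFintype ι k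

def tpowDecEq (ι : Type) [DecidableEq ι] : ∀ k : ℕ, DecidableEq (tpow ι k)
  | 0 => inferInstanceAs (DecidableEq PUnit)
  | (k+1) => letI := tpowDecEq ι k; inferInstanceAs (DecidableEq (tpow ι k × ι))

instance (ι : Type) [DecidableEq ι] (k : ℕ) : DecidableEq (tpow ι k) := tpowDecEq ι k

/-- `k`-fold Kronecker tensor power of a matrix. -/
def tpowMat (ρ : Matrix n n ℂ) : ∀ k : ℕ, Matrix (tpow n k) (tpow n k) ℂ
  | 0 => 1
  | (k+1) => (tpowMat ρ k) ⊗ₖ ρ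

/-- `k`-fold tensor power of a channel. -/
def tpowChannel (Φ : Matrix n n ℂ →ₗ[ℂ] Matrix m m ℂ) :
    ∀ k : ℕ, Matrix (tpow n k) (tpow n k) ℂ →ₗ[ℂ] Matrix (tpow m k) (tpow m k) ℂ
  | 0 => LinearMap.id
  | (k+1) => tensorChannel (tpowChannel Φ k) Φ

/-- Channel divergence induced by a divergence `𝔇` on states:
sup over `k ≥ 1` and input states `ν` on `ℂ^k ⊗ ℂ^d`. -/
def chDiv (𝔇 : ∀ (p : Type) [Fintype p] [DecidableEq p], Matrix p p ℂ → Matrix p p ℂ → EReal)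
    (E F : Matrix n n ℂ →ₗ[ℂ] Matrix m m ℂ) : EReal :=
  ⨆ (k : ℕ) (_ : 1 ≤ k) (ν : Matrix (Fin k × n) (Fin k × n) ℂ) (_ : IsState ν),
    𝔇 (Fin k × m) (blockApply E ν) (blockApply F ν)

/-- The geometric Rényi divergence as a divergence family. -/
def geomD (α : ℝ) : ∀ (p : Type) [Fintype p] [DecidableEq p],
    Matrix p p ℂ → Matrix p p ℂ → EReal :=
  fun _ _ _ => geomRenyi α

/-- The Umegaki relative entropy as a divergence family. -/
def relD : ∀ (p : Type) [Fintype p] [DecidableEq p],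
    Matrix p p ℂ → Matrix p p ℂ → EReal :=
  fun _ _ _ => relEntropy

/-- The hypothesis testing divergence as a divergence family. -/
def dHD (ε : ℝ) : ∀ (p : Type) [Fintype p] [DecidableEq p],
    Matrix p p ℂ → Matrix p p ℂ → EReal :=
  fun _ _ _ => dH ε

/-- Regularized channel relative entropy. -/
def regRelEntropy (E F : Matrix n n ℂ →ₗ[ℂ] Matrix m m ℂ) : EReal :=
  ⨆ (k : ℕ) (_ : 1 ≤ k),
    (((k : ℝ)⁻¹ : ℝ) : EReal) * chDiv relD (tpowChannel E k) (tpowChannel F k)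

end QCD

namespace QCD

/-- An adaptive discrimination protocol: ancilla dimensions, initial state,
and preparation channels; states are indexed from `0`. -/
structure AdaptiveProtocol (dA dB : ℕ) where
  r : ℕ → ℕ
  init : Matrix (Fin dA × Fin (r 0)) (Fin dA × Fin (r 0)) ℂ
  init_isState : IsState init
  prep : (i : ℕ) → Matrix (Fin dB × Fin (r i)) (Fin dB × Fin (r i)) ℂ →ₗ[ℂ]
      Matrix (Fin dA × Fin (r (i + 1))) (Fin dA × Fin (r (i + 1))) ℂ
  prep_isChannel : ∀ i, IsQChannel (prep i)

/-- The state before the `(i+1)`-st channel use, when the black box is `Φ`. -/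
def AdaptiveProtocol.stateAt {dA dB : ℕ} (P : AdaptiveProtocol dA dB)
    (Φ : Matrix (Fin dA) (Fin dA) ℂ →ₗ[ℂ] Matrix (Fin dB) (Fin dB) ℂ) :
    (i : ℕ) → Matrix (Fin dA × Fin (P.r i)) (Fin dA × Fin (P.r i)) ℂ
  | 0 => P.init
  | (i + 1) => P.prep i (blockApplyRight Φ (P.stateAt Φ i))

/-- The final state of an `n`-step adaptive protocol with black box `Φ`. -/
def AdaptiveProtocol.finalState {dA dB : ℕ} (P : AdaptiveProtocol dA dB)
    (Φ : Matrix (Fin dA) (Fin dA) ℂ →ₗ[ℂ] Matrix (Fin dB) (Fin dB) ℂ) (nn : ℕ) :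
    Matrix (Fin dB × Fin (P.r (nn - 1))) (Fin dB × Fin (P.r (nn - 1))) ℂ :=
  blockApplyRight Φ (P.stateAt Φ (nn - 1))

/-- The constant `C = 8 inf_{α ∈ (1,2]} (1/(α-1)) log(2^{(α-1) D̂_α(E‖F)} + 2)`. -/
def Cconst {dA dB : ℕ}
    (E F : Matrix (Fin dA) (Fin dA) ℂ →ₗ[ℂ] Matrix (Fin dB) (Fin dB) ℂ) : ℝ :=
  8 * (⨅ α : {a : ℝ // 1 < a ∧ a ≤ 2},
      (if chDiv (geomD α.1) E F = ⊤ then (⊤ : EReal)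
       else (((α.1 - 1)⁻¹ *
          Real.logb 2 ((2:ℝ) ^ ((α.1 - 1) * (chDiv (geomD α.1) E F).toReal) + 2) : ℝ) :
            EReal))).toReal

/-!
Write `Q_γ(ρ‖σ) = Tr ρ ^ (1 + γ) σ ^ (-γ)`, whose logarithm divided by `γ` is the Petz–Rényi
divergence of order `1 + γ`, and follow `log Q_γ` along the protocol. Preparations do not
increase it. At a channel use with inputs `ρ`, `σ`, smoothing shows that `ρ^⊗l` is close to a
state dominated by roughly `Q_γ(ρ‖σ) ^ (l / γ) σ^⊗l`, so a test separating `(E ρ)^⊗l` from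
`(F σ)^⊗l` is also a test for the parallel channels `E^⊗l` and `F^⊗l`. Hence `-log Q_{-γ}` at
the outputs exceeds `log Q_γ` at the inputs by at most `γ / l` times the parallel divergence, up
to the smoothing errors. On the other hand `log Q_γ + log Q_{-γ}` is of second order in `γ`, as
long as `Q_a` stays bounded for some fixed `a`. The latter is supplied by the chain rule of the
geometric Rényi divergence, in the form of reverse tests: a joint Kraus family of the two
channels propagates a classical description of the pair of states through the whole protocol.
With `a` of order `1 / n` and `γ = a / √l`, summing over the `n` channel uses gives the error
term, and `Q_γ` at the end bounds the hypothesis testing divergence. By purification, ancillas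
of the dimension of the input suffice for the parallel channels.
-/

open Matrix

/-! ### Real traces and positive semidefinite matrices -/

section Trace

variable {n m : Type} [Fintype n] [Fintype m]

lemma rtr_add (A B : Matrix n n ℂ) : rtr (A + B) = rtr A + rtr B := by simp [rtr]

lemma rtr_sub (A B : Matrix n n ℂ) : rtr (A - B) = rtr A - rtr B := by simp [rtr]

lemma rtr_smul (c : ℝ) (A : Matrix n n ℂ) : rtr ((c : ℂ) • A) = c * rtr A := by simp [rtr]

lemma rtr_sum {ι : Type} (s : Finset ι) (f : ι → Matrix n n ℂ) :
    rtr (∑ i ∈ s, f i) = ∑ i ∈ s, rtr (f i) := by simp [rtr, trace_sum]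

lemma rtr_mul_comm (A : Matrix n m ℂ) (B : Matrix m n ℂ) : rtr (A * B) = rtr (B * A) := by
  rw [rtr, rtr, trace_mul_comm]

lemma rtr_conjTranspose (A : Matrix n n ℂ) : rtr Aᴴ = rtr A := by
  simp [rtr, trace_conjTranspose]

lemma rtr_nonneg {A : Matrix n n ℂ} (hA : A.PosSemidef) : 0 ≤ rtr A :=
  (Complex.le_def.1 hA.trace_nonneg).1

lemma trace_eq_rtr {A : Matrix n n ℂ} (hA : A.PosSemidef) : A.trace = (rtr A : ℂ) :=
  Complex.ext rfl (by simpa using (Complex.le_def.1 hA.trace_nonneg).2.symm)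

lemma rtr_mul_conjTranspose_of_isHermitian {A : Matrix n n ℂ} (hA : A.IsHermitian)
    (X : Matrix n n ℂ) : rtr (A * Xᴴ) = rtr (A * X) := by
  rw [← rtr_conjTranspose, conjTranspose_mul, conjTranspose_conjTranspose, hA.eq, rtr_mul_comm]

omit [Fintype n] in
lemma posSemidef_ofReal_smul {A : Matrix n n ℂ} (hA : A.PosSemidef) {c : ℝ} (hc : 0 ≤ c) :
    ((c : ℂ) • A).PosSemidef := hA.smul (by exact_mod_cast hc)

open scoped MatrixOrder in
lemma exists_eq_mul_conjTranspose {A : Matrix n n ℂ} (hA : A.PosSemidef) :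
    ∃ G : Matrix n n ℂ, A = G * Gᴴ := by
  classical
  obtain ⟨G, hG⟩ := CStarAlgebra.nonneg_iff_eq_mul_star_self.1 hA.nonneg
  exact ⟨G, hG⟩

lemma rtr_mul_nonneg {A B : Matrix n n ℂ} (hA : A.PosSemidef) (hB : B.PosSemidef) :
    0 ≤ rtr (A * B) := by
  obtain ⟨G, rfl⟩ := exists_eq_mul_conjTranspose hA
  rw [Matrix.mul_assoc, rtr_mul_comm]
  exact rtr_nonneg (hB.conjTranspose_mul_mul_same G)

lemma rtr_mul_le_rtr_mul {A B C : Matrix n n ℂ} (hA : A.PosSemidef) (h : (C - B).PosSemidef) :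
    rtr (A * B) ≤ rtr (A * C) := by
  have := rtr_mul_nonneg hA h
  rw [Matrix.mul_sub, rtr_sub] at this
  linarith

lemma rtr_mul_diagonal_mul_conjTranspose [DecidableEq m] (X Y : Matrix n m ℂ) (r : m → ℝ) :
    rtr (X * diagonal (fun i => (r i : ℂ)) * Yᴴ) =
      ∑ b, ∑ a, r a * (starRingEnd ℂ (Y b a) * X b a).re := by
  rw [rtr, trace, Complex.re_sum]
  refine Finset.sum_congr rfl fun b _ => ?_
  rw [diag_apply, mul_apply, Complex.re_sum]
  refine Finset.sum_congr rfl fun a _ => ?_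
  rw [mul_diagonal, conjTranspose_apply, RCLike.star_def]
  simp only [Complex.mul_re, Complex.mul_im, Complex.ofReal_re, Complex.ofReal_im, Complex.conj_re,
    Complex.conj_im]
  ring

omit [Fintype n] in
lemma posSemidef_mul_diagonal_mul_conjTranspose [Finite n] [DecidableEq m] (U : Matrix n m ℂ)
    {r : m → ℝ} (hr : ∀ i, 0 ≤ r i) :
    (U * diagonal (fun i => (r i : ℂ)) * Uᴴ).PosSemidef :=
  (PosSemidef.diagonal fun i => by simpa using hr i).mul_mul_conjTranspose_same U

end Trace

/-! ### Spectral decompositions and Nussbaum–Szkoła distributions -/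

/-- A spectral decomposition of a positive semidefinite matrix: a unitary matrix whose columns are
eigenvectors, with the eigenvalues. It is data rather than an existence statement because the
choice of eigenbasis enters `overlap` and everything built on it. -/
structure SpectralDecomp {n : Type} [Fintype n] [DecidableEq n] (A : Matrix n n ℂ) where
  basis : Matrix n n ℂ
  eig : n → ℝ
  conjTranspose_mul_basis : basisᴴ * basis = 1
  eig_nonneg : ∀ i, 0 ≤ eig i
  eq : A = basis * diagonal (fun i => (eig i : ℂ)) * basisᴴ

section Spectral

variable {n : Type} [Fintype n] [DecidableEq n]

/-- The spectral decomposition provided by the spectral theorem. -/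
def spectralDecomp {A : Matrix n n ℂ} (hA : A.PosSemidef) : SpectralDecomp A where
  basis := hA.1.eigenvectorUnitary
  eig := hA.1.eigenvalues
  conjTranspose_mul_basis := Unitary.star_mul_self_of_mem hA.1.eigenvectorUnitary.2
  eig_nonneg := hA.eigenvalues_nonneg
  eq := by
    conv_lhs => rw [hA.1.spectral_theorem, Unitary.conjStarAlgAut_apply]
    rfl

namespace SpectralDecomp

variable {A B : Matrix n n ℂ} (S : SpectralDecomp A) (T : SpectralDecomp B)

lemma basis_mul_conjTranspose : S.basis * S.basisᴴ = 1 :=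
  mul_eq_one_comm.1 S.conjTranspose_mul_basis

include S in
lemma posSemidef : A.PosSemidef := by
  rw [S.eq]
  exact posSemidef_mul_diagonal_mul_conjTranspose _ S.eig_nonneg

lemma rtr_eq_sum_eig : rtr A = ∑ i, S.eig i := by
  conv_lhs => rw [S.eq, rtr_mul_comm, ← Matrix.mul_assoc, S.conjTranspose_mul_basis,
    Matrix.one_mul]
  simp [rtr, trace]

/-- The matrix of the operator `X` from the eigenbasis of `A` to that of `B`. -/
def toEigenbases (X : Matrix n n ℂ) : Matrix n n ℂ := T.basisᴴ * X * S.basis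

lemma toEigenbases_conjTranspose (X : Matrix n n ℂ) :
    S.toEigenbases T Xᴴ = (T.toEigenbases S X)ᴴ := by
  simp [toEigenbases, Matrix.mul_assoc]

lemma toEigenbases_basis_mul (Y : Matrix n n ℂ) :
    S.toEigenbases T (T.basis * Y * S.basisᴴ) = Y := by
  simp only [toEigenbases, Matrix.mul_assoc, S.conjTranspose_mul_basis, Matrix.mul_one]
  rw [← Matrix.mul_assoc, T.conjTranspose_mul_basis, Matrix.one_mul]

lemma rtr_mul_conjTranspose_mul (X Y : Matrix n n ℂ) :
    rtr (A * (Yᴴ * X)) = ∑ b, ∑ a, S.eig a *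
      (starRingEnd ℂ (S.toEigenbases T Y b a) * S.toEigenbases T X b a).re := by
  rw [← rtr_mul_diagonal_mul_conjTranspose]
  conv_lhs => rw [S.eq]
  simp only [toEigenbases, conjTranspose_mul, conjTranspose_conjTranspose]
  rw [rtr_mul_comm, rtr_mul_comm _ (S.basisᴴ * (Yᴴ * T.basis))]
  simp only [Matrix.mul_assoc]
  rw [← Matrix.mul_assoc T.basis, T.basis_mul_conjTranspose, Matrix.one_mul, rtr_mul_comm S.basisᴴ]
  simp only [Matrix.mul_assoc]

lemma rtr_mul_conjTranspose_mul_self (X : Matrix n n ℂ) :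
    rtr (A * (Xᴴ * X)) = ∑ b, ∑ a, Complex.normSq (S.toEigenbases T X b a) * S.eig a := by
  rw [S.rtr_mul_conjTranspose_mul T]
  refine Finset.sum_congr rfl fun b _ => Finset.sum_congr rfl fun a _ => ?_
  rw [mul_comm (starRingEnd ℂ _), Complex.mul_conj, Complex.ofReal_re, mul_comm]

lemma rtr_mul_self_mul_conjTranspose (X : Matrix n n ℂ) :
    rtr (B * (X * Xᴴ)) = ∑ b, ∑ a, Complex.normSq (S.toEigenbases T X b a) * T.eig b := by
  have h := T.rtr_mul_conjTranspose_mul_self S Xᴴ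
  rw [conjTranspose_conjTranspose] at h
  rw [h, Finset.sum_comm]
  simp only [toEigenbases_conjTranspose, conjTranspose_apply, RCLike.star_def,
    Complex.normSq_conj]

/-- The squared modulus `|⟨f_b, e_a⟩|²` of the inner product of eigenvectors of `A` and `B`. -/
def overlap (b a : n) : ℝ := Complex.normSq (S.toEigenbases T 1 b a)

lemma overlap_nonneg (b a : n) : 0 ≤ S.overlap T b a := Complex.normSq_nonneg _

lemma overlap_comm (b a : n) : T.overlap S a b = S.overlap T b a := by
  rw [overlap, overlap, ← Complex.normSq_conj, ← RCLike.star_def, ← conjTranspose_apply,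
    ← toEigenbases_conjTranspose, conjTranspose_one]

lemma sum_overlap_right (b : n) : ∑ a, S.overlap T b a = 1 := by
  have h : S.toEigenbases T 1 * (S.toEigenbases T 1)ᴴ = 1 := by
    simp only [toEigenbases, Matrix.mul_one, conjTranspose_mul, conjTranspose_conjTranspose]
    rw [Matrix.mul_assoc, ← Matrix.mul_assoc S.basis, S.basis_mul_conjTranspose, Matrix.one_mul,
      T.conjTranspose_mul_basis]
  have hb := congrFun (congrFun h b) b
  rw [mul_apply] at hb
  simp only [conjTranspose_apply, RCLike.star_def, Complex.mul_conj, one_apply_eq] at hb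
  exact_mod_cast hb

lemma sum_overlap_left (a : n) : ∑ b, S.overlap T b a = 1 := by
  simpa only [overlap_comm] using T.sum_overlap_right S a

/-- Weights of the (first) Nussbaum–Szkoła distribution of a pair of matrices. -/
def nsWeight (i : n × n) : ℝ := S.overlap T i.1 i.2 * S.eig i.2

/-- Likelihood ratio of the Nussbaum–Szkoła distributions, with value `0` where the second
eigenvalue vanishes. -/
def nsRatio (i : n × n) : ℝ := S.eig i.2 / T.eig i.1

/-- The support condition `A ≪ B` in terms of the Nussbaum–Szkoła distributions. -/
def IsDominated : Prop := ∀ i : n × n, T.eig i.1 = 0 → S.nsWeight T i = 0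

lemma nsWeight_nonneg (i : n × n) : 0 ≤ S.nsWeight T i :=
  mul_nonneg (S.overlap_nonneg T _ _) (S.eig_nonneg _)

lemma nsRatio_nonneg (i : n × n) : 0 ≤ S.nsRatio T i :=
  div_nonneg (S.eig_nonneg _) (T.eig_nonneg _)

lemma sum_nsWeight : ∑ i, S.nsWeight T i = rtr A := by
  rw [Fintype.sum_prod_type, Finset.sum_comm, S.rtr_eq_sum_eig]
  refine Finset.sum_congr rfl fun a _ => ?_
  simp only [nsWeight]
  rw [← Finset.sum_mul, S.sum_overlap_left T, one_mul]

lemma sum_nsWeight_mul_inv_nsRatio_le :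
    ∑ i, S.nsWeight T i * (S.nsRatio T i)⁻¹ ≤ rtr B := by
  rw [Fintype.sum_prod_type, T.rtr_eq_sum_eig]
  refine Finset.sum_le_sum fun b _ => ?_
  calc ∑ a, S.nsWeight T (b, a) * (S.nsRatio T (b, a))⁻¹
      ≤ ∑ a, S.overlap T b a * T.eig b := by
        refine Finset.sum_le_sum fun a _ => ?_
        simp only [nsWeight, nsRatio, inv_div]
        by_cases h : S.eig a = 0
        · simpa [h] using mul_nonneg (S.overlap_nonneg T b a) (T.eig_nonneg b)
        · apply le_of_eq
          field_simp
    _ = T.eig b := by rw [← Finset.sum_mul, S.sum_overlap_right T, one_mul]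

lemma nsRatio_pos_of_nsWeight_ne_zero (hST : S.IsDominated T) {i : n × n}
    (hi : S.nsWeight T i ≠ 0) : 0 < S.nsRatio T i := by
  have hT : T.eig i.1 ≠ 0 := fun h => hi (hST i h)
  have hS : S.eig i.2 ≠ 0 := fun h => hi (by rw [nsWeight, h, mul_zero])
  exact div_pos ((S.eig_nonneg _).lt_of_ne' hS) ((T.eig_nonneg _).lt_of_ne' hT)

lemma conjTranspose_basis_mul_mul_basis :
    T.basisᴴ * B * T.basis = diagonal fun i => (T.eig i : ℂ) := by
  conv_lhs => enter [1, 2]; rw [T.eq]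
  simp only [Matrix.mul_assoc, T.conjTranspose_mul_basis, Matrix.mul_one]
  rw [← Matrix.mul_assoc, T.conjTranspose_mul_basis, Matrix.one_mul]

lemma conjTranspose_basis_mul_mul_basis_apply_self (b : n) :
    (T.basisᴴ * A * T.basis) b b = ((∑ a, S.nsWeight T (b, a) : ℝ) : ℂ) := by
  have h : T.basisᴴ * A * T.basis = S.toEigenbases T 1 * diagonal (fun i => (S.eig i : ℂ)) *
      (S.toEigenbases T 1)ᴴ := by
    conv_lhs => enter [1, 2]; rw [S.eq]
    simp only [toEigenbases, Matrix.mul_one, conjTranspose_mul, conjTranspose_conjTranspose,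
      Matrix.mul_assoc]
  rw [h, mul_apply, Complex.ofReal_sum]
  refine Finset.sum_congr rfl fun a _ => ?_
  rw [mul_diagonal, conjTranspose_apply, RCLike.star_def, mul_right_comm, Complex.mul_conj,
    nsWeight, overlap, Complex.ofReal_mul]

lemma isDominated_of_le {L : ℝ} (hL : ((L : ℂ) • B - A).PosSemidef) : S.IsDominated T := by
  rintro ⟨b, a⟩ (hb : T.eig b = 0)
  have h := (hL.conjTranspose_mul_mul_same T.basis).diag_nonneg (i := b)
  rw [Matrix.mul_sub, Matrix.sub_mul, Matrix.mul_smul, Matrix.smul_mul, Matrix.sub_apply,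
    Matrix.smul_apply,
    T.conjTranspose_basis_mul_mul_basis, S.conjTranspose_basis_mul_mul_basis_apply_self T,
    diagonal_apply_eq, hb, Complex.ofReal_zero, smul_zero, zero_sub, Left.nonneg_neg_iff] at h
  exact (Finset.sum_eq_zero_iff_of_nonneg fun a _ => S.nsWeight_nonneg T (b, a)).1
    (le_antisymm (by exact_mod_cast h) (Finset.sum_nonneg fun a _ => S.nsWeight_nonneg T (b, a)))
    a (Finset.mem_univ a)

end SpectralDecomp

end Spectral

/-! ### Kraus maps -/

section Kraus

variable {n m κ : Type} [Fintype n] [Fintype m] [Fintype κ]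

/-- The completely positive map with Kraus operators `K`. -/
def krausMap (K : κ → Matrix m n ℂ) (A : Matrix n n ℂ) : Matrix m m ℂ :=
  ∑ k, K k * A * (K k)ᴴ

omit [Fintype m] in
lemma posSemidef_krausMap [Finite m] (K : κ → Matrix m n ℂ) {A : Matrix n n ℂ}
    (hA : A.PosSemidef) : (krausMap K A).PosSemidef :=
  posSemidef_sum _ fun _ _ => hA.mul_mul_conjTranspose_same _

lemma rtr_krausMap_mul (K : κ → Matrix m n ℂ) (A : Matrix n n ℂ) (X : Matrix m m ℂ) :
    rtr (krausMap K A * X) = rtr (A * krausMap (fun k => (K k)ᴴ) X) := by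
  simp only [krausMap, Finset.sum_mul, Finset.mul_sum, rtr_sum, conjTranspose_conjTranspose]
  refine Finset.sum_congr rfl fun k _ => ?_
  rw [Matrix.mul_assoc, Matrix.mul_assoc, rtr_mul_comm]
  simp only [Matrix.mul_assoc]

omit [Fintype m] in
lemma conjTranspose_krausMap (K : κ → Matrix m n ℂ) (A : Matrix n n ℂ) :
    (krausMap K A)ᴴ = krausMap K Aᴴ := by
  simp [krausMap, conjTranspose_sum, conjTranspose_mul, Matrix.mul_assoc]

-- For the isometry `V = ∑ K k ⊗ e_k` and `X = diag (X k)`, this is `Vᴴ Xᴴ (1 - V Vᴴ) X V ≥ 0`.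
lemma kadison_schwarz [DecidableEq n] {K : κ → Matrix m n ℂ} (hK : ∑ k, (K k)ᴴ * K k = 1)
    (X : κ → Matrix m m ℂ) :
    (∑ k, (K k)ᴴ * ((X k)ᴴ * X k) * K k -
      (∑ k, (K k)ᴴ * X k * K k)ᴴ * ∑ k, (K k)ᴴ * X k * K k).PosSemidef := by
  set Y := ∑ k, (K k)ᴴ * X k * K k with hY
  have expand : ∀ k, (X k * K k - K k * Y)ᴴ * (X k * K k - K k * Y) =
      (K k)ᴴ * ((X k)ᴴ * X k) * K k - ((K k)ᴴ * X k * K k)ᴴ * Y - Yᴴ * ((K k)ᴴ * X k * K k)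
        + Yᴴ * ((K k)ᴴ * K k) * Y := by
    intro k
    simp only [conjTranspose_sub, conjTranspose_mul, conjTranspose_conjTranspose,
      Matrix.sub_mul, Matrix.mul_sub, Matrix.mul_assoc]
    abel
  have sum_squares : ∑ k, (K k)ᴴ * ((X k)ᴴ * X k) * K k - Yᴴ * Y =
      ∑ k, (X k * K k - K k * Y)ᴴ * (X k * K k - K k * Y) := by
    simp only [expand, Finset.sum_add_distrib, Finset.sum_sub_distrib]
    rw [← Finset.sum_mul, ← Finset.sum_mul, ← Finset.mul_sum, ← Finset.mul_sum, hK,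
      ← conjTranspose_sum, ← hY, Matrix.mul_one]
    abel
  rw [sum_squares]
  exact posSemidef_sum _ fun k _ => posSemidef_conjTranspose_mul_self _

lemma posSemidef_sum_sq_smul_sub_sq [DecidableEq n] {P : κ → Matrix n n ℂ}
    (hP : ∀ x, (P x).PosSemidef) (hP1 : ∑ x, P x = 1) (y : κ → ℝ) :
    (∑ x, ((y x ^ 2 : ℝ) : ℂ) • P x -
      (∑ x, (y x : ℂ) • P x) * ∑ x, (y x : ℂ) • P x).PosSemidef := by
  choose G hG using fun x => exists_eq_mul_conjTranspose (hP x)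
  have h := kadison_schwarz (K := fun x => (G x)ᴴ) (by simpa [← hG] using hP1)
    fun x => (y x : ℂ) • (1 : Matrix n n ℂ)
  simp only [conjTranspose_conjTranspose, conjTranspose_smul, conjTranspose_one, RCLike.star_def,
    Complex.conj_ofReal, Matrix.mul_smul, Matrix.smul_mul, Matrix.mul_one, ← hG, smul_smul,
    conjTranspose_sum, fun x => (hP x).1.eq] at h
  simpa only [pow_two, Complex.ofReal_mul] using h

end Kraus

/-! ### The resolvent functional -/

section Resolvent

variable {n m κ : Type} [Fintype n] [Fintype m] [Fintype κ] {A B : Matrix n n ℂ}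

/-- The concave quadratic form in `X` whose maximum is `SpectralDecomp.resolvent`. -/
def quadForm (A B : Matrix n n ℂ) (t : ℝ) (X : Matrix n n ℂ) : ℝ :=
  2 * rtr (A * X) - rtr (A * (Xᴴ * X)) - t * rtr (B * (X * Xᴴ))

lemma quadForm_krausMap_le [DecidableEq n] {K : κ → Matrix m n ℂ} (hK : ∑ k, (K k)ᴴ * K k = 1)
    (hA : A.PosSemidef) (hB : B.PosSemidef) {t : ℝ} (ht : 0 ≤ t) (X : Matrix m m ℂ) :
    quadForm (krausMap K A) (krausMap K B) t X ≤
      quadForm A B t (krausMap (fun k => (K k)ᴴ) X) := by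
  have dual : ∀ Z, krausMap (fun k => (K k)ᴴ) Z = ∑ k, (K k)ᴴ * Z * K k := fun Z => by
    simp only [krausMap, conjTranspose_conjTranspose]
  have hX := rtr_mul_le_rtr_mul hA (kadison_schwarz hK fun _ => X)
  have hX' := rtr_mul_le_rtr_mul hB (kadison_schwarz hK fun _ => Xᴴ)
  simp only [← dual, conjTranspose_conjTranspose, conjTranspose_krausMap] at hX hX'
  simp only [quadForm, rtr_krausMap_mul, conjTranspose_krausMap]
  linarith [mul_le_mul_of_nonneg_left hX' ht]

lemma two_mul_rtr_sub_le {τ : Matrix n n ℂ} (hτ : τ.PosSemidef) (X : Matrix n n ℂ) (θ : ℝ) :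
    2 * θ * rtr (τ * X) - θ ^ 2 * rtr τ ≤ rtr (τ * (Xᴴ * X)) := by
  classical
  have h := rtr_mul_nonneg hτ
    (posSemidef_conjTranspose_mul_self (X - (θ : ℂ) • (1 : Matrix n n ℂ)))
  have expand : τ * ((X - (θ : ℂ) • (1 : Matrix n n ℂ))ᴴ * (X - (θ : ℂ) • (1 : Matrix n n ℂ))) =
      τ * (Xᴴ * X) - (θ : ℂ) • (τ * Xᴴ) - (θ : ℂ) • (τ * X) + ((θ * θ : ℝ) : ℂ) • τ := by
    simp only [conjTranspose_sub, conjTranspose_smul, conjTranspose_one, RCLike.star_def,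
      Complex.conj_ofReal, Matrix.sub_mul, Matrix.mul_sub, Matrix.smul_mul, Matrix.mul_smul,
      Matrix.one_mul, Matrix.mul_one, Complex.ofReal_mul]
    module
  rw [expand, rtr_add, rtr_sub, rtr_sub, rtr_smul, rtr_smul, rtr_smul,
    rtr_mul_conjTranspose_of_isHermitian hτ.1] at h
  linarith [pow_two θ]

lemma two_mul_rtr_sub_le' {τ : Matrix n n ℂ} (hτ : τ.PosSemidef) (X : Matrix n n ℂ) (θ : ℝ) :
    2 * θ * rtr (τ * X) - θ ^ 2 * rtr τ ≤ rtr (τ * (X * Xᴴ)) := by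
  simpa only [rtr_mul_conjTranspose_of_isHermitian hτ.1, conjTranspose_conjTranspose] using
    two_mul_rtr_sub_le hτ Xᴴ θ

namespace SpectralDecomp

variable [DecidableEq n] [DecidableEq m] (S : SpectralDecomp A) (T : SpectralDecomp B)

/-- The functional `⟨√A, Δ (Δ + t)⁻¹ √A⟩` of the relative modular operator `Δ = A ⊗ B⁻¹`. -/
def resolvent (t : ℝ) : ℝ :=
  ∑ b, ∑ a, S.overlap T b a * S.eig a * (S.eig a / (S.eig a + t * T.eig b))

lemma quadForm_eq_sum (t : ℝ) (X : Matrix n n ℂ) :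
    quadForm A B t X = ∑ b, ∑ a,
      (2 * (S.eig a * (starRingEnd ℂ (S.toEigenbases T 1 b a) * S.toEigenbases T X b a).re) -
        Complex.normSq (S.toEigenbases T X b a) * (S.eig a + t * T.eig b)) := by
  have h1 := S.rtr_mul_conjTranspose_mul T X 1
  rw [conjTranspose_one, Matrix.one_mul] at h1
  rw [quadForm, h1, S.rtr_mul_conjTranspose_mul_self T, S.rtr_mul_self_mul_conjTranspose T]
  simp only [Finset.mul_sum, ← Finset.sum_sub_distrib]
  refine Finset.sum_congr rfl fun b _ => Finset.sum_congr rfl fun a _ => ?_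
  ring

lemma quadForm_le_resolvent {t : ℝ} (ht : 0 < t) (X : Matrix n n ℂ) :
    quadForm A B t X ≤ S.resolvent T t := by
  rw [S.quadForm_eq_sum T]
  refine Finset.sum_le_sum fun b _ => Finset.sum_le_sum fun a _ => ?_
  have hr := S.eig_nonneg a
  have hs := mul_nonneg ht.le (T.eig_nonneg b)
  rw [overlap]
  set u := S.toEigenbases T 1 b a
  set y := S.toEigenbases T X b a
  rcases hr.eq_or_lt with h0 | h0
  · simp only [← h0, zero_mul, mul_zero, zero_add, zero_sub, Left.neg_nonpos_iff, zero_div]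
    exact mul_nonneg (Complex.normSq_nonneg y) hs
  · have hd : 0 < S.eig a + t * T.eig b := by positivity
    simp only [Complex.mul_re, Complex.conj_re, Complex.conj_im, Complex.normSq_apply]
    rw [← mul_div_assoc, le_div_iff₀ hd]
    nlinarith [sq_nonneg (S.eig a * u.re - (S.eig a + t * T.eig b) * y.re),
      sq_nonneg (S.eig a * u.im - (S.eig a + t * T.eig b) * y.im)]

lemma exists_quadForm_eq_resolvent {t : ℝ} (ht : 0 < t) :
    ∃ X : Matrix n n ℂ, quadForm A B t X = S.resolvent T t := by
  refine ⟨T.basis * of (fun b a => ((S.eig a / (S.eig a + t * T.eig b) : ℝ) : ℂ) *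
    S.toEigenbases T 1 b a) * S.basisᴴ, ?_⟩
  rw [S.quadForm_eq_sum T, toEigenbases_basis_mul]
  refine Finset.sum_congr rfl fun b _ => Finset.sum_congr rfl fun a _ => ?_
  have hr := S.eig_nonneg a
  have hs := T.eig_nonneg b
  simp only [of_apply, overlap]
  set u := S.toEigenbases T 1 b a
  simp only [Complex.mul_re, Complex.mul_im, Complex.conj_re, Complex.conj_im,
    Complex.normSq_apply, Complex.ofReal_re, Complex.ofReal_im]
  rcases hr.eq_or_lt with h0 | h0
  · simp [← h0]
  · have hd : S.eig a + t * T.eig b ≠ 0 := by positivity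
    field_simp
    ring

lemma resolvent_krausMap_le {K : κ → Matrix m n ℂ} (hK : ∑ k, (K k)ᴴ * K k = 1)
    (S' : SpectralDecomp (krausMap K A)) (T' : SpectralDecomp (krausMap K B)) {t : ℝ}
    (ht : 0 < t) : S'.resolvent T' t ≤ S.resolvent T t := by
  obtain ⟨X, hX⟩ := S'.exists_quadForm_eq_resolvent T' ht
  rw [← hX]
  exact (quadForm_krausMap_le hK S.posSemidef T.posSemidef ht.le X).trans
    (S.quadForm_le_resolvent T ht _)

lemma resolvent_le_of_eq_sum {τ : κ → Matrix n n ℂ} {δ : κ → ℝ} (hτ : ∀ x, (τ x).PosSemidef)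
    (hδ : ∀ x, 0 ≤ δ x) (hA : A = ∑ x, (δ x : ℂ) • τ x) (hB : B = ∑ x, τ x) {t : ℝ}
    (ht : 0 < t) : S.resolvent T t ≤ ∑ x, rtr (τ x) * δ x * (δ x / (δ x + t)) := by
  obtain ⟨Z, hZ⟩ := S.exists_quadForm_eq_resolvent T ht
  rw [← hZ, quadForm, hA, hB]
  simp only [Finset.sum_mul, rtr_sum, Finset.mul_sum, Matrix.smul_mul, rtr_smul,
    ← Finset.sum_sub_distrib]
  refine Finset.sum_le_sum fun x _ => ?_
  have hd : 0 < δ x + t := add_pos_of_nonneg_of_pos (hδ x) ht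
  set θ := δ x / (δ x + t) with hθ
  have hδθ : δ x = θ * (δ x + t) := by rw [hθ]; field_simp
  have h1 := mul_le_mul_of_nonneg_left (two_mul_rtr_sub_le (hτ x) Z θ) (hδ x)
  have h2 := mul_le_mul_of_nonneg_left (two_mul_rtr_sub_le' (hτ x) Z θ) ht.le
  linear_combination h1 + h2 + (2 * rtr (τ x * Z) - θ * rtr (τ x)) * hδθ

lemma sum_measurement_le_resolvent {P : κ → Matrix n n ℂ} (hP : ∀ x, (P x).PosSemidef)
    (hP1 : ∑ x, P x = 1) {t : ℝ} (ht : 0 < t) :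
    ∑ x, rtr (A * P x) * (rtr (A * P x) / (rtr (A * P x) + t * rtr (B * P x))) ≤
      S.resolvent T t := by
  have hp : ∀ x, 0 ≤ rtr (A * P x) := fun x => rtr_mul_nonneg S.posSemidef (hP x)
  have hq : ∀ x, 0 ≤ rtr (B * P x) := fun x => rtr_mul_nonneg T.posSemidef (hP x)
  have optimum : ∀ x, ∃ y, y = rtr (A * P x) / (rtr (A * P x) + t * rtr (B * P x)) ∧
      y * (rtr (A * P x) + t * rtr (B * P x)) = rtr (A * P x) := fun x =>
    ⟨_, rfl, div_mul_cancel_of_imp fun h => by nlinarith [hp x, mul_nonneg ht.le (hq x)]⟩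
  choose y hy hyp using optimum
  simp only [← hy]
  have hX := posSemidef_sum_sq_smul_sub_sq hP hP1 y
  refine le_trans ?_ (S.quadForm_le_resolvent T ht (∑ x, (y x : ℂ) • P x))
  have hXh : (∑ x, (y x : ℂ) • P x)ᴴ = ∑ x, (y x : ℂ) • P x := by
    simp only [conjTranspose_sum, conjTranspose_smul, RCLike.star_def, Complex.conj_ofReal,
      fun x => (hP x).1.eq]
  have hA := rtr_mul_le_rtr_mul S.posSemidef hX
  have hB := mul_le_mul_of_nonneg_left (rtr_mul_le_rtr_mul T.posSemidef hX) ht.le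
  have key : ∑ x, rtr (A * P x) * y x = 2 * rtr (A * ∑ x, (y x : ℂ) • P x) -
      rtr (A * ∑ x, ((y x ^ 2 : ℝ) : ℂ) • P x) -
      t * rtr (B * ∑ x, ((y x ^ 2 : ℝ) : ℂ) • P x) := by
    simp only [Finset.mul_sum, rtr_sum, Matrix.mul_smul, rtr_smul, ← Finset.sum_sub_distrib]
    refine Finset.sum_congr rfl fun x _ => ?_
    linear_combination (y x) * hyp x
  rw [quadForm, hXh]
  linarith

end SpectralDecomp

end Resolvent

/-! ### Power sums and their resolvents -/

section PowerSums

open MeasureTheory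

variable {ι ι' : Type} [Fintype ι] [Fintype ι']

lemma rpowIntegrand₀₁_eq_mul_resolvent {t y : ℝ} (ht : 0 < t) (hy : 0 ≤ y) (γ : ℝ) :
    Real.rpowIntegrand₀₁ γ t y = t ^ γ / t * (y / (y + t)) := by
  have h1 : t + y ≠ 0 := by positivity
  have h2 : y + t ≠ 0 := by positivity
  rw [Real.rpowIntegrand₀₁]
  field_simp
  ring

lemma sum_mul_rpow_eq_integral {γ : ℝ} (hγ : γ ∈ Set.Ioo 0 1) (w : ι → ℝ) {x : ι → ℝ}
    (hx : ∀ i, 0 ≤ x i) :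
    ∑ i, w i * x i ^ γ = (∫ t in Set.Ioi 0, Real.rpowIntegrand₀₁ γ t 1)⁻¹ *
      ∫ t in Set.Ioi 0, ∑ i, w i * Real.rpowIntegrand₀₁ γ t (x i) := by
  rw [integral_finsetSum _ fun i _ =>
    (Real.integrableOn_rpowIntegrand₀₁_Ioi hγ (hx i)).const_mul (w i), Finset.mul_sum]
  refine Finset.sum_congr rfl fun i _ => ?_
  rw [integral_const_mul, Real.rpow_eq_const_mul_integral hγ (hx i), mul_left_comm]

lemma sum_mul_rpow_le_of_resolvent_le {w x : ι → ℝ} {w' x' : ι' → ℝ} (hx : ∀ i, 0 ≤ x i)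
    (hx' : ∀ i, 0 ≤ x' i)
    (h : ∀ t : ℝ, 0 < t → ∑ i, w i * (x i / (x i + t)) ≤ ∑ i, w' i * (x' i / (x' i + t)))
    {γ : ℝ} (hγ : γ ∈ Set.Ioo 0 1) : ∑ i, w i * x i ^ γ ≤ ∑ i, w' i * x' i ^ γ := by
  have integrable : ∀ {κ : Type} [Fintype κ] (w x : κ → ℝ), (∀ i, 0 ≤ x i) →
      IntegrableOn (fun t => ∑ i, w i * Real.rpowIntegrand₀₁ γ t (x i)) (Set.Ioi 0) :=
    fun w x hx => integrable_finsetSum _ fun i _ =>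
      (Real.integrableOn_rpowIntegrand₀₁_Ioi hγ (hx i)).const_mul (w i)
  have factor : ∀ {κ : Type} [Fintype κ] (w x : κ → ℝ), (∀ i, 0 ≤ x i) → ∀ t : ℝ, 0 < t →
      ∑ i, w i * Real.rpowIntegrand₀₁ γ t (x i) =
        t ^ γ / t * ∑ i, w i * (x i / (x i + t)) := fun w x hx t ht => by
    rw [Finset.mul_sum]
    exact Finset.sum_congr rfl fun i _ => by
      rw [rpowIntegrand₀₁_eq_mul_resolvent ht (hx i), mul_left_comm]
  rw [sum_mul_rpow_eq_integral hγ w hx, sum_mul_rpow_eq_integral hγ w' hx']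
  refine mul_le_mul_of_nonneg_left ?_
    (inv_nonneg.2 (Real.integral_rpowIntegrand₀₁_one_pos hγ).le)
  refine setIntegral_mono_on (integrable w x hx) (integrable w' x' hx') measurableSet_Ioi
    fun t (ht : 0 < t) => ?_
  rw [factor w x hx t ht, factor w' x' hx' t ht]
  exact mul_le_mul_of_nonneg_left (h t ht) (by positivity)

lemma sum_mul_rpow_le_rpow_sum {u δ : ι → ℝ} (hu : ∀ i, 0 ≤ u i) (hs : ∑ i, u i = 1)
    (hδ : ∀ i, 0 ≤ δ i) {a b : ℝ} (ha : 0 < a) (hab : a ≤ b) :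
    ∑ i, u i * δ i ^ a ≤ (∑ i, u i * δ i ^ b) ^ (a / b) := by
  have hb : 0 < b := ha.trans_le hab
  have hexp : ∀ i, (δ i ^ a) ^ (b / a) = δ i ^ b := fun i => by
    rw [← Real.rpow_mul (hδ i), mul_div_cancel₀ b ha.ne']
  have hpow := Real.rpow_arith_mean_le_arith_mean_rpow Finset.univ u (fun i => δ i ^ a)
    (fun i _ => hu i) hs (fun i _ => Real.rpow_nonneg (hδ i) _) ((one_le_div ha).2 hab)
  simp only [hexp] at hpow
  have hn : 0 ≤ ∑ i, u i * δ i ^ a :=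
    Finset.sum_nonneg fun i _ => mul_nonneg (hu i) (Real.rpow_nonneg (hδ i) _)
  rw [← inv_div b a]
  exact (Real.le_rpow_inv_iff_of_pos hn ((Real.rpow_nonneg hn _).trans hpow)
    (div_pos hb ha)).2 hpow

lemma div_add_one_le_rpow {y γ : ℝ} (hy : 0 ≤ y) (h0 : 0 ≤ γ) (h1 : γ ≤ 1) :
    y / (y + 1) ≤ y ^ γ := by
  rcases le_total y 1 with h | h
  · calc y / (y + 1) ≤ y := div_le_self hy (by linarith)
      _ = y ^ (1 : ℝ) := (Real.rpow_one y).symm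
      _ ≤ y ^ γ := Real.rpow_le_rpow_of_exponent_ge' hy h h0 h1
  · exact (div_le_one_of_le₀ (by linarith) (by linarith)).trans (Real.one_le_rpow h h0)

-- Termwise comparison of the power series of `cosh`.
lemma cosh_mul_le {θ : ℝ} (h0 : 0 ≤ θ) (h1 : θ ≤ 1) (z : ℝ) :
    Real.cosh (θ * z) ≤ 1 + θ ^ 2 * (Real.cosh z - 1) := by
  have hsum := ((Real.hasSum_cosh z).mul_left (θ ^ 2)).add (hasSum_ite_eq 0 (1 - θ ^ 2))
  refine (hasSum_le (fun k => ?_) (Real.hasSum_cosh (θ * z)) hsum).trans (by linarith)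
  rcases Nat.eq_zero_or_pos k with rfl | hk
  · simp
  · rw [if_neg hk.ne', add_zero, mul_pow, ← mul_div_assoc]
    gcongr ?_ * _ / _
    · exact (even_two_mul k).pow_nonneg z
    · exact pow_le_pow_of_le_one h0 h1 (by omega)

lemma rpow_add_rpow_neg_sub_two_le {x a γ : ℝ} (hx : 0 < x) (ha : 0 < a) (h0 : 0 ≤ γ)
    (h1 : γ ≤ a) : x ^ γ + x ^ (-γ) - 2 ≤ (γ / a) ^ 2 * (x ^ a + x ^ (-a) - 2) := by
  have hcosh : ∀ c : ℝ, x ^ c + x ^ (-c) = 2 * Real.cosh (c * Real.log x) := fun c => by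
    rw [Real.cosh_eq, Real.rpow_def_of_pos hx, Real.rpow_def_of_pos hx, mul_neg, mul_comm c]
    ring
  have h := cosh_mul_le (div_nonneg h0 ha.le) ((div_le_one ha).2 h1) (a * Real.log x)
  rw [← mul_assoc, div_mul_cancel₀ _ ha.ne'] at h
  rw [hcosh, hcosh]
  linarith

lemma sum_mul_rpow_neg_le_one {w x : ι → ℝ} (hw : ∀ i, 0 ≤ w i) (hs : ∑ i, w i = 1)
    (hx : ∀ i, 0 ≤ x i) (h : ∑ i, w i * (x i)⁻¹ ≤ 1) {a : ℝ} (h0 : 0 < a) (h1 : a ≤ 1) :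
    ∑ i, w i * x i ^ (-a) ≤ 1 := by
  have hpow := sum_mul_rpow_le_rpow_sum hw hs (fun i => inv_nonneg.2 (hx i)) h0 h1
  simp only [Real.rpow_one, div_one, Real.inv_rpow (hx _), ← Real.rpow_neg (hx _)] at hpow
  exact hpow.trans (Real.rpow_le_one
    (Finset.sum_nonneg fun i _ => mul_nonneg (hw i) (inv_nonneg.2 (hx i))) h h0.le)

lemma sum_mul_rpow_pos {w x : ι → ℝ} (hw : ∀ i, 0 ≤ w i) (hs : ∑ i, w i = 1)
    (hx : ∀ i, 0 ≤ x i) (hpos : ∀ i, w i ≠ 0 → 0 < x i) (γ : ℝ) : 0 < ∑ i, w i * x i ^ γ := by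
  obtain ⟨i, -, hi⟩ := Finset.exists_ne_zero_of_sum_ne_zero (hs.trans_ne one_ne_zero)
  exact Finset.sum_pos' (fun i _ => mul_nonneg (hw i) (Real.rpow_nonneg (hx i) _))
    ⟨i, Finset.mem_univ _, mul_pos ((hw i).lt_of_ne' hi) (Real.rpow_pos_of_pos (hpos i hi) _)⟩

lemma log_sum_mul_rpow_add_log_sum_mul_rpow_neg_le {w x : ι → ℝ} (hw : ∀ i, 0 ≤ w i)
    (hs : ∑ i, w i = 1) (hx : ∀ i, 0 ≤ x i) (hpos : ∀ i, w i ≠ 0 → 0 < x i) {a γ : ℝ}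
    (ha : 0 < a) (ha1 : a ≤ 1) (h0 : 0 ≤ γ) (h1 : γ ≤ a) (hp : ∑ i, w i * x i ^ a ≤ 2)
    (hm : ∑ i, w i * (x i)⁻¹ ≤ 1) :
    Real.log (∑ i, w i * x i ^ γ) + Real.log (∑ i, w i * x i ^ (-γ)) ≤ (γ / a) ^ 2 := by
  have compare : ∑ i, w i * x i ^ γ + ∑ i, w i * x i ^ (-γ) - 2 * ∑ i, w i ≤
      (γ / a) ^ 2 * (∑ i, w i * x i ^ a + ∑ i, w i * x i ^ (-a) - 2 * ∑ i, w i) := by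
    simp only [Finset.mul_sum, ← Finset.sum_add_distrib, ← Finset.sum_sub_distrib]
    refine Finset.sum_le_sum fun i _ => ?_
    by_cases hwi : w i = 0
    · simp [hwi]
    · linarith [mul_le_mul_of_nonneg_left
        (rpow_add_rpow_neg_sub_two_le (hpos i hwi) ha h0 h1) (hw i)]
  have hbound : (γ / a) ^ 2 * (∑ i, w i * x i ^ a + ∑ i, w i * x i ^ (-a) - 2 * ∑ i, w i) ≤
      (γ / a) ^ 2 * 1 :=
    mul_le_mul_of_nonneg_left (by linarith [sum_mul_rpow_neg_le_one hw hs hx hm ha ha1])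
      (sq_nonneg _)
  linarith [Real.log_le_sub_one_of_pos (sum_mul_rpow_pos hw hs hx hpos γ),
    Real.log_le_sub_one_of_pos (sum_mul_rpow_pos hw hs hx hpos (-γ))]

end PowerSums

/-! ### Petz quasi-entropies -/

section QuasiEntropy

variable {n m κ : Type} [Fintype n] [DecidableEq n] [Fintype m] [DecidableEq m] [Fintype κ]

namespace SpectralDecomp

variable {A B : Matrix n n ℂ} (S : SpectralDecomp A) (T : SpectralDecomp B)

/-- The quasi-entropy `Tr A ^ (1 + γ) B ^ (-γ)` underlying the Petz–Rényi divergence of order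
`1 + γ`, as a moment of the Nussbaum–Szkoła likelihood ratio. -/
def quasiEntropy (γ : ℝ) : ℝ := ∑ i, S.nsWeight T i * S.nsRatio T i ^ γ

variable {S T}

lemma resolvent_eq_sum (hST : S.IsDominated T) (t : ℝ) :
    S.resolvent T t = ∑ i, S.nsWeight T i * (S.nsRatio T i / (S.nsRatio T i + t)) := by
  rw [resolvent, Fintype.sum_prod_type]
  refine Finset.sum_congr rfl fun b _ => Finset.sum_congr rfl fun a _ => ?_
  change S.nsWeight T (b, a) * _ = _
  by_cases h : T.eig b = 0
  · rw [hST (b, a) h, zero_mul, zero_mul]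
  · simp only [nsRatio]
    rw [div_add' _ _ _ h, div_div_div_cancel_right₀ h]

lemma quasiEntropy_krausMap_le (hST : S.IsDominated T) {K : κ → Matrix m n ℂ}
    (hK : ∑ k, (K k)ᴴ * K k = 1) {S' : SpectralDecomp (krausMap K A)}
    {T' : SpectralDecomp (krausMap K B)} (hST' : S'.IsDominated T') {γ : ℝ}
    (hγ : γ ∈ Set.Ioo 0 1) : S'.quasiEntropy T' γ ≤ S.quasiEntropy T γ := by
  refine sum_mul_rpow_le_of_resolvent_le (S'.nsRatio_nonneg T') (S.nsRatio_nonneg T)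
    (fun t ht => ?_) hγ
  rw [← resolvent_eq_sum hST' t, ← resolvent_eq_sum hST t]
  exact S.resolvent_krausMap_le T hK S' T' ht

lemma quasiEntropy_le_of_eq_sum (hST : S.IsDominated T) {τ : κ → Matrix n n ℂ} {δ : κ → ℝ}
    (hτ : ∀ x, (τ x).PosSemidef) (hδ : ∀ x, 0 ≤ δ x) (hA : A = ∑ x, (δ x : ℂ) • τ x)
    (hB : B = ∑ x, τ x) {γ : ℝ} (hγ : γ ∈ Set.Ioo 0 1) :
    S.quasiEntropy T γ ≤ ∑ x, rtr (τ x) * δ x * δ x ^ γ := by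
  refine sum_mul_rpow_le_of_resolvent_le (S.nsRatio_nonneg T) hδ (fun t ht => ?_) hγ
  rw [← resolvent_eq_sum hST t]
  exact S.resolvent_le_of_eq_sum T hτ hδ hA hB ht

lemma sum_measurement_le_quasiEntropy (hST : S.IsDominated T) {P : κ → Matrix n n ℂ}
    (hP : ∀ x, (P x).PosSemidef) (hP1 : ∑ x, P x = 1) (hq : ∀ x, 0 < rtr (B * P x)) {γ : ℝ}
    (hγ : γ ∈ Set.Ioo 0 1) :
    ∑ x, rtr (A * P x) * (rtr (A * P x) / rtr (B * P x)) ^ γ ≤ S.quasiEntropy T γ := by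
  have hp : ∀ x, 0 ≤ rtr (A * P x) := fun x => rtr_mul_nonneg S.posSemidef (hP x)
  refine sum_mul_rpow_le_of_resolvent_le (fun x => div_nonneg (hp x) (hq x).le)
    (S.nsRatio_nonneg T) (fun t ht => ?_) hγ
  rw [← resolvent_eq_sum hST t]
  refine le_of_eq_of_le (Finset.sum_congr rfl fun x _ => ?_)
    (S.sum_measurement_le_resolvent T hP hP1 ht)
  rw [div_add' _ _ _ (hq x).ne', div_div_div_cancel_right₀ (hq x).ne']

lemma quasiEntropy_pos (hST : S.IsDominated T) (hA : rtr A = 1) (γ : ℝ) :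
    0 < S.quasiEntropy T γ :=
  sum_mul_rpow_pos (S.nsWeight_nonneg T) ((S.sum_nsWeight T).trans hA) (S.nsRatio_nonneg T)
    (fun _ => S.nsRatio_pos_of_nsWeight_ne_zero T hST) γ

-- The Petz–Rényi divergences of orders `1 + γ` and `1 - γ` differ by `O(γ)`.
lemma log_quasiEntropy_add_log_quasiEntropy_neg_le (hST : S.IsDominated T) (hA : rtr A = 1)
    (hB : rtr B = 1) {a γ : ℝ} (ha : 0 < a) (ha1 : a ≤ 1) (h0 : 0 ≤ γ) (h1 : γ ≤ a)
    (hQ : S.quasiEntropy T a ≤ 2) :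
    Real.log (S.quasiEntropy T γ) + Real.log (S.quasiEntropy T (-γ)) ≤ (γ / a) ^ 2 :=
  log_sum_mul_rpow_add_log_sum_mul_rpow_neg_le (S.nsWeight_nonneg T)
    ((S.sum_nsWeight T).trans hA) (S.nsRatio_nonneg T)
    (fun _ => S.nsRatio_pos_of_nsWeight_ne_zero T hST) ha ha1 h0 h1 hQ
    ((S.sum_nsWeight_mul_inv_nsRatio_le T).trans hB.le)

end SpectralDecomp

end QuasiEntropy

/-! ### Functional calculus -/

section FunCalc

variable {n : Type} [Fintype n] [DecidableEq n] {A B : Matrix n n ℂ}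

namespace SpectralDecomp

variable (S S' : SpectralDecomp A) (T : SpectralDecomp B)

/-- The functional calculus `f(A)`; it is independent of the decomposition, see `funCalc_unique`. -/
def funCalc (f : ℝ → ℝ) : Matrix n n ℂ :=
  S.basis * diagonal (fun i => (f (S.eig i) : ℂ)) * S.basisᴴ

lemma funCalc_id : S.funCalc (fun x => x) = A := S.eq.symm

lemma funCalc_congr {f g : ℝ → ℝ} (h : ∀ x, 0 ≤ x → f x = g x) : S.funCalc f = S.funCalc g := by
  simp only [funCalc, h _ (S.eig_nonneg _)]

lemma funCalc_mul_funCalc (f g : ℝ → ℝ) :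
    S.funCalc f * S.funCalc g = S.funCalc fun x => f x * g x := by
  simp only [funCalc, Matrix.mul_assoc]
  rw [← Matrix.mul_assoc S.basisᴴ, S.conjTranspose_mul_basis, Matrix.one_mul,
    ← Matrix.mul_assoc (diagonal _) (diagonal _), diagonal_mul_diagonal]
  simp only [Complex.ofReal_mul]

lemma one_sub_funCalc (f : ℝ → ℝ) : 1 - S.funCalc f = S.funCalc fun x => 1 - f x := by
  have h : diagonal (fun i => ((1 - f (S.eig i) : ℝ) : ℂ)) =
      1 - diagonal fun i => (f (S.eig i) : ℂ) := by
    rw [← diagonal_one, diagonal_sub]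
    simp only [Complex.ofReal_sub, Complex.ofReal_one]
  rw [funCalc, funCalc, h, Matrix.mul_sub, Matrix.sub_mul, Matrix.mul_one,
    S.basis_mul_conjTranspose]

lemma posSemidef_funCalc {f : ℝ → ℝ} (hf : ∀ x, 0 ≤ x → 0 ≤ f x) : (S.funCalc f).PosSemidef :=
  posSemidef_mul_diagonal_mul_conjTranspose _ fun i => hf _ (S.eig_nonneg i)

-- The overlap matrix intertwines the two diagonal matrices, hence also any function of them.
lemma funCalc_unique (f : ℝ → ℝ) : S.funCalc f = S'.funCalc f := by
  have intertwine : S.toEigenbases S' 1 * diagonal (fun i => (S.eig i : ℂ)) =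
      diagonal (fun i => (S'.eig i : ℂ)) * S.toEigenbases S' 1 := by
    have h := congrArg (fun M => S'.basisᴴ * M * S.basis) (S.eq.symm.trans S'.eq)
    simp only [Matrix.mul_assoc, S.conjTranspose_mul_basis, Matrix.mul_one] at h
    rw [← Matrix.mul_assoc S'.basisᴴ S'.basis, S'.conjTranspose_mul_basis, Matrix.one_mul] at h
    simpa only [toEigenbases, Matrix.mul_one, Matrix.mul_assoc] using h
  have intertwine_fun : S.toEigenbases S' 1 * diagonal (fun i => (f (S.eig i) : ℂ)) =
      diagonal (fun i => (f (S'.eig i) : ℂ)) * S.toEigenbases S' 1 := by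
    ext i j
    have h := congrFun (congrFun intertwine i) j
    rw [mul_diagonal, diagonal_mul, mul_comm] at h ⊢
    by_cases h0 : S.toEigenbases S' 1 i j = 0
    · simp only [h0, mul_zero]
    · have heig : S.eig j = S'.eig i := by exact_mod_cast mul_right_cancel₀ h0 h
      rw [heig]
  have h := congrArg (fun M => S'.basis * M * S.basisᴴ) intertwine_fun
  simp only [toEigenbases, Matrix.mul_one, Matrix.mul_assoc, S.basis_mul_conjTranspose] at h
  rw [← Matrix.mul_assoc S'.basis, S'.basis_mul_conjTranspose, Matrix.one_mul] at h
  simpa only [funCalc, Matrix.mul_assoc] using h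

lemma matFun_eq_funCalc (f : ℝ → ℝ) : matFun f A = S.funCalc f := by
  rw [S.funCalc_unique (spectralDecomp S.posSemidef), matFun, dif_pos S.posSemidef.1]
  rfl

open scoped MatrixOrder Matrix.Norms.L2Operator in
lemma rpow_eq_funCalc (p : ℝ) : A ^ p = S.funCalc fun x => x ^ p := by
  have hA := S.posSemidef
  rw [CFC.rpow_eq_cfc_real hA.nonneg, hA.1.cfc_eq, IsHermitian.cfc,
    Unitary.conjStarAlgAut_apply, S.funCalc_unique (spectralDecomp hA)]
  rfl

lemma rtr_funCalc_mul_funCalc (f g : ℝ → ℝ) :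
    rtr (S.funCalc f * T.funCalc g) =
      ∑ i : n × n, S.overlap T i.1 i.2 * f (S.eig i.2) * g (T.eig i.1) := by
  have h := rtr_mul_diagonal_mul_conjTranspose
    (diagonal (fun i => (g (T.eig i) : ℂ)) * S.toEigenbases T 1) (S.toEigenbases T 1)
    (fun i => f (S.eig i))
  rw [funCalc.eq_1 T, Matrix.mul_assoc T.basis, ← Matrix.mul_assoc, rtr_mul_comm]
  simp only [toEigenbases, funCalc, Matrix.mul_one, conjTranspose_mul, conjTranspose_conjTranspose,
    Matrix.mul_assoc] at h ⊢
  rw [h, Fintype.sum_prod_type]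
  refine Finset.sum_congr rfl fun b _ => Finset.sum_congr rfl fun a _ => ?_
  rw [diagonal_mul, mul_left_comm, ← Complex.normSq_eq_conj_mul_self, ← Complex.ofReal_mul,
    Complex.ofReal_re, overlap, toEigenbases, Matrix.mul_one]
  ring

open scoped MatrixOrder Matrix.Norms.L2Operator in
include S in
lemma rpow_mul_rpow_of_add_eq_one {p q : ℝ} (h : p + q = 1) : A ^ p * A ^ q = A := by
  rw [S.rpow_eq_funCalc, S.rpow_eq_funCalc, S.funCalc_mul_funCalc]
  refine (S.funCalc_congr fun x hx => ?_).trans S.funCalc_id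
  rw [← Real.rpow_add' hx (by simp [h]), h, Real.rpow_one]

/-- The orthogonal projection onto the support of `A`; the junk value `0⁻¹ = 0` removes the
kernel. -/
def supp : Matrix n n ℂ := S.funCalc fun x => x⁻¹ * x

lemma posSemidef_supp : S.supp.PosSemidef :=
  S.posSemidef_funCalc fun _ hx => mul_nonneg (inv_nonneg.2 hx) hx

lemma posSemidef_one_sub_supp : (1 - S.supp).PosSemidef := by
  rw [supp, one_sub_funCalc]
  exact S.posSemidef_funCalc fun x _ => sub_nonneg.2 inv_mul_le_one

lemma supp_mul_supp : S.supp * S.supp = S.supp := by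
  rw [supp, funCalc_mul_funCalc]
  congr 1
  ext x
  by_cases hx : x = 0 <;> simp [hx]

lemma funCalc_inv_mul_self : (S.funCalc fun x => x⁻¹) * A = S.supp := by
  have h := S.funCalc_mul_funCalc (fun x => x⁻¹) fun x => x
  rwa [S.funCalc_id] at h

open scoped MatrixOrder Matrix.Norms.L2Operator in
lemma rpow_mul_rpow_neg {p : ℝ} (hp : p ≠ 0) : A ^ p * A ^ (-p) = S.supp := by
  rw [S.rpow_eq_funCalc, S.rpow_eq_funCalc, S.funCalc_mul_funCalc]
  refine S.funCalc_congr fun x hx => ?_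
  rcases hx.eq_or_lt with rfl | hx
  · simp [Real.zero_rpow hp]
  · rw [← Real.rpow_add hx, add_neg_cancel, Real.rpow_zero, inv_mul_cancel₀ hx.ne']

lemma supp_mul_eq_of_suppLE {X : Matrix n n ℂ} (hX : X.IsHermitian) (h : SuppLE X A) :
    S.supp * X = X := by
  have hA : A * (1 - S.supp) = 0 := by
    have h1 := S.funCalc_mul_funCalc (fun x => x) fun x => 1 - x⁻¹ * x
    rw [S.funCalc_id, ← one_sub_funCalc, ← supp] at h1
    simpa [funCalc, ← mul_assoc, mul_sub] using h1
  have hX' : X * (1 - S.supp) = 0 := by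
    ext i j
    have := congrFun (h (fun k => (1 - S.supp) k j) (funext fun i => congrFun (congrFun hA i) j)) i
    exact this
  rw [Matrix.mul_sub, Matrix.mul_one, sub_eq_zero] at hX'
  rw [← S.posSemidef_supp.1.eq, ← hX.eq, ← conjTranspose_mul, ← hX']

end SpectralDecomp

omit [DecidableEq n] in
lemma suppLE_of_le {A B : Matrix n n ℂ} {L : ℝ} (hA : A.PosSemidef)
    (h : ((L : ℂ) • B - A).PosSemidef) : SuppLE A B := fun v hv => by
  have h1 := h.dotProduct_mulVec_nonneg v
  rw [sub_mulVec, smul_mulVec, hv, smul_zero, zero_sub, dotProduct_neg, Left.nonneg_neg_iff] at h1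
  exact (hA.dotProduct_mulVec_zero_iff v).1 (le_antisymm h1 (hA.dotProduct_mulVec_nonneg v))

open scoped MatrixOrder Matrix.Norms.L2Operator in
lemma exists_posPart {C : Matrix n n ℂ} (hC : C.IsHermitian) :
    ∃ P Δ : Matrix n n ℂ, P.PosSemidef ∧ (1 - P).PosSemidef ∧ P * P = P ∧ Δ.PosSemidef ∧
      (Δ - C).PosSemidef ∧ P * C = Δ := by
  have hpos : (C⁺).PosSemidef := (CFC.posPart_nonneg C).posSemidef
  have hsub : C⁺ - C⁻ = C := CFC.posPart_sub_negPart C hC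
  let S := spectralDecomp hpos
  refine ⟨S.supp, C⁺, S.posSemidef_supp, S.posSemidef_one_sub_supp, S.supp_mul_supp, hpos, ?_, ?_⟩
  · have h : C⁺ - C = C⁻ := by rw [sub_eq_iff_eq_add, add_comm, ← sub_eq_iff_eq_add, hsub]
    rw [h]
    exact (CFC.negPart_nonneg C).posSemidef
  · have h : S.supp * C⁻ = 0 := by
      rw [← S.funCalc_inv_mul_self, Matrix.mul_assoc, CFC.posPart_mul_negPart, Matrix.mul_zero]
    have hmul : S.supp * C = S.supp * (C⁺ - C⁻) := congrArg (S.supp * ·) hsub.symm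
    rw [hmul, Matrix.mul_sub, h, sub_zero, S.supp_mul_eq_of_suppLE hpos.1 fun _ => id]

end FunCalc

/-! ### Audenaert's test and smoothing -/

section OneShot

variable {n : Type} [Fintype n] [DecidableEq n] {A B : Matrix n n ℂ}

-- Ozawa's argument: `A ≤ B + Δ` and `B ≤ B + Δ` are used under the operator monotone powers.
open scoped MatrixOrder Matrix.Norms.L2Operator in
lemma rtr_sub_rtr_le_rtr_rpow_mul_rpow {Δ : Matrix n n ℂ} (hA : A.PosSemidef)
    (hB : B.PosSemidef) (hΔ : Δ.PosSemidef) (h : (B + Δ - A).PosSemidef) {γ : ℝ}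
    (hγ : γ ∈ Set.Ioo 0 1) : rtr A - rtr Δ ≤ rtr (A ^ (1 - γ) * B ^ γ) := by
  have hγ' : 1 - γ ∈ Set.Ioo (0 : ℝ) 1 := ⟨by linarith [hγ.2], by linarith [hγ.1]⟩
  have hBC : B ≤ B + Δ := le_add_of_nonneg_right hΔ.nonneg
  have mono : ∀ {X Y : Matrix n n ℂ} {p : ℝ}, p ∈ Set.Ioo 0 1 → X ≤ Y →
      (Y ^ p - X ^ p).PosSemidef := fun hp hXY => CFC.rpow_le_rpow (Set.Ioo_subset_Icc_self hp) hXY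
  have psd : ∀ (X : Matrix n n ℂ) (p : ℝ), (X ^ p).PosSemidef := fun X p =>
    CFC.rpow_nonneg.posSemidef
  have h1 := rtr_mul_le_rtr_mul (psd A (1 - γ)) (mono hγ h)
  have h2 := rtr_mul_le_rtr_mul (mono hγ hBC) (mono hγ' h)
  have h3 := rtr_mul_le_rtr_mul (psd B γ) (mono hγ' hBC)
  have split : ∀ {X : Matrix n n ℂ}, X.PosSemidef → X ^ (1 - γ) * X ^ γ = X := fun hX =>
    (spectralDecomp hX).rpow_mul_rpow_of_add_eq_one (sub_add_cancel 1 γ)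
  rw [rtr_mul_comm (B ^ γ), rtr_mul_comm (B ^ γ), split hB] at h3
  rw [split hA] at h1
  rw [rtr_mul_comm _ (A ^ (1 - γ)), rtr_mul_comm _ ((B + Δ) ^ (1 - γ)), Matrix.mul_sub,
    Matrix.mul_sub, rtr_sub, rtr_sub, split (hB.add hΔ), rtr_add] at h2
  linarith

namespace SpectralDecomp

/-- The spectral decomposition of a nonnegative multiple. -/
def smul (T : SpectralDecomp B) {c : ℝ} (hc : 0 ≤ c) : SpectralDecomp ((c : ℂ) • B) where
  basis := T.basis
  eig i := c * T.eig i
  conjTranspose_mul_basis := T.conjTranspose_mul_basis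
  eig_nonneg i := mul_nonneg hc (T.eig_nonneg i)
  eq := by
    conv_lhs => rw [T.eq]
    rw [← Matrix.smul_mul, ← Matrix.mul_smul, ← diagonal_smul]
    simp only [Complex.ofReal_mul, Pi.smul_def, smul_eq_mul]

lemma quasiEntropy_neg_eq (S : SpectralDecomp A) (T : SpectralDecomp B) {γ : ℝ} (hγ : γ < 1) :
    S.quasiEntropy T (-γ) = ∑ i : n × n, S.overlap T i.1 i.2 * S.eig i.2 ^ (1 - γ) *
      T.eig i.1 ^ γ := by
  refine Finset.sum_congr rfl fun i _ => ?_
  rw [nsWeight, nsRatio]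
  rcases (S.eig_nonneg i.2).eq_or_lt with h | h
  · simp [← h, Real.zero_rpow (sub_pos.2 hγ).ne']
  · rw [Real.rpow_neg (div_nonneg h.le (T.eig_nonneg _)),
      Real.div_rpow h.le (T.eig_nonneg _), inv_div, Real.rpow_sub h, Real.rpow_one]
    ring

variable (S : SpectralDecomp A) (T : SpectralDecomp B)

lemma exists_test_le_quasiEntropy_neg {c γ : ℝ} (hc : 0 < c) (hγ : γ ∈ Set.Ioo 0 1) :
    ∃ P : Matrix n n ℂ, P.PosSemidef ∧ (1 - P).PosSemidef ∧
      rtr ((1 - P) * A) + c * rtr (P * B) ≤ c ^ γ * S.quasiEntropy T (-γ) := by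
  let T' := T.smul hc.le
  obtain ⟨P, Δ, hP, hP1, -, hΔ, hΔ1, hPΔ⟩ := exists_posPart (S.posSemidef.1.sub T'.posSemidef.1)
  refine ⟨P, hP, hP1, ?_⟩
  have value : rtr ((1 - P) * A) + c * rtr (P * B) = rtr A - rtr Δ := by
    rw [← hPΔ, Matrix.sub_mul, Matrix.one_mul, Matrix.mul_sub, rtr_sub, rtr_sub, Matrix.mul_smul,
      rtr_smul]
    ring
  rw [sub_sub_eq_add_sub, add_comm] at hΔ1
  rw [value]
  refine (rtr_sub_rtr_le_rtr_rpow_mul_rpow S.posSemidef T'.posSemidef hΔ hΔ1 hγ).trans_eq ?_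
  rw [S.rpow_eq_funCalc, T'.rpow_eq_funCalc, S.rtr_funCalc_mul_funCalc,
    S.quasiEntropy_neg_eq T hγ.2, Finset.mul_sum]
  refine Finset.sum_congr rfl fun i _ => ?_
  rw [show T'.eig i.1 = c * T.eig i.1 from rfl, Real.mul_rpow hc.le (T.eig_nonneg _)]
  change S.overlap T i.1 i.2 * _ * _ = _
  ring

end SpectralDecomp

open scoped MatrixOrder Matrix.Norms.L2Operator in
-- Douglas' factorisation lemma, with `W = C^(-1/2) G`.
lemma exists_contraction_of_le {m : Type} [Fintype m] {C : Matrix n n ℂ} {G : Matrix n m ℂ}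
    (h : (C - G * Gᴴ).PosSemidef) :
    ∃ W : Matrix n m ℂ, C ^ (1 / 2 : ℝ) * W = G ∧ (1 - W * Wᴴ).PosSemidef := by
  have hG := posSemidef_self_mul_conjTranspose G
  let S := spectralDecomp (show C.PosSemidef by simpa using h.add hG)
  set H := C ^ (-(1 / 2) : ℝ)
  have herm : Hᴴ = H := CFC.rpow_nonneg.posSemidef.1
  have hCH : C ^ (1 / 2 : ℝ) * H = S.supp := S.rpow_mul_rpow_neg (by norm_num)
  have hHC : H * C ^ (1 / 2 : ℝ) = S.supp := by
    simpa only [conjTranspose_mul, herm, S.posSemidef_supp.1.eq,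
      show (C ^ (1 / 2 : ℝ))ᴴ = C ^ (1 / 2 : ℝ) from CFC.rpow_nonneg.posSemidef.1]
      using congrArg conjTranspose hCH
  have hHCH : H * C * H = S.supp := by
    conv_lhs => rw [← S.rpow_mul_rpow_of_add_eq_one (add_halves 1)]
    rw [← Matrix.mul_assoc, hHC, Matrix.mul_assoc, hCH, S.supp_mul_supp]
  have hsupp : S.supp * G = G := by
    have h1 := S.supp_mul_eq_of_suppLE hG.1 (suppLE_of_le (L := 1) hG (by simpa using h))
    rw [← sub_eq_zero, ← Matrix.one_mul G, ← Matrix.mul_assoc, Matrix.mul_one, ← Matrix.sub_mul,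
      ← mul_self_mul_conjTranspose_eq_zero, Matrix.sub_mul, h1, Matrix.one_mul, sub_self]
  refine ⟨H * G, by rw [← Matrix.mul_assoc, hCH, hsupp], ?_⟩
  have hsum := S.posSemidef_one_sub_supp.add (h.mul_mul_conjTranspose_same H)
  rw [herm, Matrix.mul_sub, Matrix.sub_mul, hHCH, sub_add_sub_cancel] at hsum
  simpa only [conjTranspose_mul, herm, Matrix.mul_assoc] using hsum

open scoped MatrixOrder Matrix.Norms.L2Operator in
-- The Powers–Størmer inequality, for ordered matrices.
lemma rtr_mul_self_sub_rpow_half_le {C : Matrix n n ℂ} (hB : B.PosSemidef)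
    (hBC : (C - B).PosSemidef) :
    rtr ((C ^ (1 / 2 : ℝ) - B ^ (1 / 2 : ℝ)) * (C ^ (1 / 2 : ℝ) - B ^ (1 / 2 : ℝ))) ≤
      rtr (C - B) := by
  have hC : C.PosSemidef := by simpa using hBC.add hB
  have mono : (C ^ (1 / 2 : ℝ) - B ^ (1 / 2 : ℝ)).PosSemidef :=
    CFC.rpow_le_rpow (by constructor <;> norm_num) (show B ≤ C from hBC)
  have h := rtr_mul_le_rtr_mul CFC.rpow_nonneg.posSemidef mono (A := B ^ (1 / 2 : ℝ))
  rw [(spectralDecomp hB).rpow_mul_rpow_of_add_eq_one (add_halves 1)] at h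
  rw [Matrix.sub_mul, Matrix.mul_sub, Matrix.mul_sub,
    (spectralDecomp hB).rpow_mul_rpow_of_add_eq_one (add_halves 1),
    (spectralDecomp hC).rpow_mul_rpow_of_add_eq_one (add_halves 1), rtr_sub, rtr_sub, rtr_sub,
    rtr_sub, rtr_mul_comm (C ^ (1 / 2 : ℝ))]
  linarith

omit [DecidableEq n] in
open scoped MatrixOrder Matrix.Norms.L2Operator in
lemma exists_factor_near_of_le {Δ : Matrix n n ℂ} (hA : A.PosSemidef) (hB : B.PosSemidef)
    (hΔ : Δ.PosSemidef) (h : (B + Δ - A).PosSemidef) :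
    ∃ G Z : Matrix n n ℂ, A = G * Gᴴ ∧ (B - Z * Zᴴ).PosSemidef ∧ rtr (Z * Zᴴ) ≤ rtr A ∧
      rtr ((G - Z) * (G - Z)ᴴ) ≤ rtr Δ := by
  classical
  obtain ⟨G, rfl⟩ := exists_eq_mul_conjTranspose hA
  obtain ⟨W, hW, hW1⟩ := exists_contraction_of_le h
  set C := B + Δ with hC
  have herm : ∀ X : Matrix n n ℂ, (X ^ (1 / 2 : ℝ))ᴴ = X ^ (1 / 2 : ℝ) := fun X =>
    CFC.rpow_nonneg.posSemidef.1
  have half : ∀ {X : Matrix n n ℂ}, X.PosSemidef → X ^ (1 / 2 : ℝ) * X ^ (1 / 2 : ℝ) = X :=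
    fun hX => (spectralDecomp hX).rpow_mul_rpow_of_add_eq_one (add_halves 1)
  have rotate : ∀ X : Matrix n n ℂ, rtr (X * W * (X * W)ᴴ) = rtr (W * Wᴴ * (Xᴴ * X)) := fun X => by
    rw [conjTranspose_mul, Matrix.mul_assoc, rtr_mul_comm]
    simp only [Matrix.mul_assoc]
  have hWW := posSemidef_self_mul_conjTranspose W
  refine ⟨G, B ^ (1 / 2 : ℝ) * W, rfl, ?_, ?_, ?_⟩
  · have hBW := hW1.mul_mul_conjTranspose_same (B ^ (1 / 2 : ℝ))
    rw [herm, Matrix.mul_sub, Matrix.sub_mul, Matrix.mul_one, half hB] at hBW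
    simpa only [conjTranspose_mul, herm, Matrix.mul_assoc] using hBW
  · rw [← hW, rotate, rotate, herm, herm, half hB, half (hB.add hΔ)]
    exact rtr_mul_le_rtr_mul hWW (by simpa [hC] using hΔ)
  · rw [← hW, ← Matrix.sub_mul, rotate, conjTranspose_sub, herm, herm, rtr_mul_comm]
    set D := C ^ (1 / 2 : ℝ) - B ^ (1 / 2 : ℝ) with hD
    have hDD : (D * D).PosSemidef := by
      simpa only [hD, conjTranspose_sub, herm] using posSemidef_conjTranspose_mul_self D
    have hle := rtr_mul_le_rtr_mul hDD hW1
    rw [Matrix.mul_one] at hle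
    have hPS := rtr_mul_self_sub_rpow_half_le hB (C := C) (by simpa [hC] using hΔ)
    rw [hC, add_sub_cancel_left] at hPS
    exact hle.trans hPS

lemma rtr_mul_mul_conjTranspose_le {T X Y : Matrix n n ℂ} (hT : T.PosSemidef)
    (hT1 : (1 - T).PosSemidef) {ε : ℝ} (hε : 0 < ε) (hX : rtr (X * Xᴴ) ≤ ε ^ 2)
    (hY : rtr (Y * Yᴴ) ≤ 1) : rtr (T * (X * Yᴴ)) ≤ ε := by
  have le_rtr : ∀ Z : Matrix n n ℂ, rtr (T * (Z * Zᴴ)) ≤ rtr (Z * Zᴴ) := fun Z => by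
    have h := rtr_mul_le_rtr_mul (posSemidef_self_mul_conjTranspose Z) hT1
    rwa [Matrix.mul_one, rtr_mul_comm] at h
  have symm : rtr (T * (Y * Xᴴ)) = rtr (T * (X * Yᴴ)) := by
    simpa using rtr_mul_conjTranspose_of_isHermitian hT.1 (X * Yᴴ)
  have h := rtr_mul_nonneg hT (posSemidef_self_mul_conjTranspose (X - (ε : ℂ) • Y))
  have expand : (X - (ε : ℂ) • Y) * (X - (ε : ℂ) • Y)ᴴ =
      X * Xᴴ - (ε : ℂ) • (X * Yᴴ) - (ε : ℂ) • (Y * Xᴴ) + ((ε ^ 2 : ℝ) : ℂ) • (Y * Yᴴ) := by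
    simp only [conjTranspose_sub, conjTranspose_smul, RCLike.star_def, Complex.conj_ofReal,
      Matrix.sub_mul, Matrix.mul_sub, Matrix.smul_mul, Matrix.mul_smul, Complex.ofReal_pow]
    module
  rw [expand, Matrix.mul_add, Matrix.mul_sub, Matrix.mul_sub, Matrix.mul_smul, Matrix.mul_smul,
    Matrix.mul_smul, rtr_add, rtr_sub, rtr_sub, rtr_smul, rtr_smul, rtr_smul, symm] at h
  have hYε := mul_le_mul_of_nonneg_left ((le_rtr Y).trans hY) (sq_nonneg ε)
  refine le_of_mul_le_mul_left ?_ (mul_pos two_pos hε)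
  linarith [le_rtr X]

lemma rtr_mul_sub_two_mul_le {T G Z : Matrix n n ℂ} (hT : T.PosSemidef)
    (hT1 : (1 - T).PosSemidef) {ε : ℝ} (hε : 0 < ε) (hG : rtr (G * Gᴴ) ≤ 1)
    (hZ : rtr (Z * Zᴴ) ≤ 1) (hGZ : rtr ((G - Z) * (G - Z)ᴴ) ≤ ε ^ 2) :
    rtr (T * (G * Gᴴ)) - 2 * ε ≤ rtr (T * (Z * Zᴴ)) := by
  have h1 := rtr_mul_mul_conjTranspose_le hT hT1 hε hGZ hG
  have h2 := rtr_mul_mul_conjTranspose_le hT hT1 hε hGZ hZ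
  have symm : rtr (T * (Z * (G - Z)ᴴ)) = rtr (T * ((G - Z) * Zᴴ)) := by
    simpa using rtr_mul_conjTranspose_of_isHermitian hT.1 ((G - Z) * Zᴴ)
  rw [← symm] at h2
  have split : T * (G * Gᴴ) = T * (Z * Zᴴ) + T * ((G - Z) * Gᴴ) + T * (Z * (G - Z)ᴴ) := by
    rw [conjTranspose_sub]
    noncomm_ring
  rw [split, rtr_add, rtr_add]
  linarith

omit [DecidableEq n] in
lemma exists_isState_le_two_smul {D : Matrix n n ℂ} (hD : D.PosSemidef) (h : 1 / 2 ≤ rtr D)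
    (h1 : rtr D ≤ 1) :
    ∃ A : Matrix n n ℂ, IsState A ∧ (A - D).PosSemidef ∧ ((2 : ℂ) • D - A).PosSemidef := by
  have hpos : 0 < rtr D := by linarith
  have hinv : 1 ≤ (rtr D)⁻¹ := (one_le_inv₀ hpos).2 h1
  have hinv2 : (rtr D)⁻¹ ≤ 2 := inv_le_of_inv_le₀ two_pos (by rwa [← one_div])
  refine ⟨((rtr D)⁻¹ : ℝ) • D, ⟨hD.smul (by positivity), ?_⟩, ?_, ?_⟩
  · rw [trace_smul, trace_eq_rtr hD, Complex.real_smul, ← Complex.ofReal_mul,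
      inv_mul_cancel₀ hpos.ne', Complex.ofReal_one]
  · convert hD.smul (sub_nonneg.2 hinv) using 1
    rw [sub_smul, one_smul]
  · convert hD.smul (sub_nonneg.2 hinv2) using 1
    rw [sub_smul, ← Complex.coe_smul (2 : ℝ), Complex.ofReal_ofNat]

namespace SpectralDecomp

variable {S : SpectralDecomp A} {T : SpectralDecomp B}

lemma resolvent_le_mul_quasiEntropy (hST : S.IsDominated T) {t γ : ℝ} (ht : 0 < t)
    (hγ : γ ∈ Set.Ioo 0 1) : S.resolvent T t ≤ (t ^ γ)⁻¹ * S.quasiEntropy T γ := by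
  rw [resolvent_eq_sum hST, quasiEntropy, Finset.mul_sum]
  refine Finset.sum_le_sum fun i _ => ?_
  have hx := S.nsRatio_nonneg T i
  have scale : S.nsRatio T i / (S.nsRatio T i + t) =
      S.nsRatio T i / t / (S.nsRatio T i / t + 1) := by field_simp
  have h := div_add_one_le_rpow (div_nonneg hx ht.le) hγ.1.le hγ.2.le
  rw [← scale, Real.div_rpow hx ht.le] at h
  refine (mul_le_mul_of_nonneg_left h (S.nsWeight_nonneg T i)).trans_eq ?_
  ring

variable (S T)

-- Datta–Renner smoothing: `A ≤ t B + Δ` is cut down to `Z Zᴴ ≤ t B`, which is then normalised.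
lemma exists_isState_le_of_resolvent_le (hA : rtr A = 1) {t ε : ℝ} (ht : 0 < t) (hε : 0 < ε)
    (hε1 : ε ≤ 1 / 4) (h : S.resolvent T t ≤ ε ^ 2) :
    ∃ A' : Matrix n n ℂ, IsState A' ∧ (((2 * t : ℝ) : ℂ) • B - A').PosSemidef ∧
      ∀ P : Matrix n n ℂ, P.PosSemidef → (1 - P).PosSemidef →
        rtr (P * A) - 2 * ε ≤ rtr (P * A') := by
  let T' := T.smul ht.le
  obtain ⟨P, Δ, hP, -, hPP, hΔ, hΔ1, hPΔ⟩ := exists_posPart (S.posSemidef.1.sub T'.posSemidef.1)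
  have hΔε : rtr Δ ≤ ε ^ 2 := by
    refine le_trans (le_of_eq ?_) ((S.quadForm_le_resolvent T ht P).trans h)
    rw [← hPΔ, quadForm, hP.1.eq, hPP, Matrix.mul_sub, rtr_sub, Matrix.mul_smul, rtr_smul,
      rtr_mul_comm P, rtr_mul_comm P]
    ring
  rw [sub_sub_eq_add_sub, add_comm] at hΔ1
  obtain ⟨G, Z, rfl, hZB, hZ, hGZ⟩ :=
    exists_factor_near_of_le S.posSemidef T'.posSemidef hΔ hΔ1
  rw [hA] at hZ
  have close : ∀ P : Matrix n n ℂ, P.PosSemidef → (1 - P).PosSemidef →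
      rtr (P * (G * Gᴴ)) - 2 * ε ≤ rtr (P * (Z * Zᴴ)) := fun P hP hP1 =>
    rtr_mul_sub_two_mul_le hP hP1 hε hA.le hZ (hGZ.trans hΔε)
  set c := rtr (Z * Zᴴ) with hc
  have hc2 : 1 / 2 ≤ c := by
    have h1 := close 1 PosSemidef.one (by simpa using PosSemidef.zero)
    rw [Matrix.one_mul, Matrix.one_mul, hA, ← hc] at h1
    linarith
  obtain ⟨A', hA', hle, hge⟩ :=
    exists_isState_le_two_smul (posSemidef_self_mul_conjTranspose Z) hc2 hZ
  refine ⟨A', hA', ?_, fun P hP hP1 => (close P hP hP1).trans (rtr_mul_le_rtr_mul hP hle)⟩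
  convert (posSemidef_ofReal_smul hZB zero_le_two).add hge using 1
  rw [smul_sub, Complex.ofReal_mul, Complex.ofReal_ofNat, mul_smul]
  abel

end SpectralDecomp

end OneShot

/-! ### Tensor products -/

section Tensor

variable {n m : Type} [Fintype n] [DecidableEq n] [Fintype m] [DecidableEq m]
  {A B : Matrix n n ℂ} {A' B' : Matrix m m ℂ}

namespace SpectralDecomp

/-- The product eigenbasis of a Kronecker product. -/
def kron (S : SpectralDecomp A) (S' : SpectralDecomp A') : SpectralDecomp (A ⊗ₖ A') where
  basis := S.basis ⊗ₖ S'.basis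
  eig i := S.eig i.1 * S'.eig i.2
  conjTranspose_mul_basis := by
    rw [conjTranspose_kronecker, ← mul_kronecker_mul, S.conjTranspose_mul_basis,
      S'.conjTranspose_mul_basis, one_kronecker_one]
  eig_nonneg i := mul_nonneg (S.eig_nonneg _) (S'.eig_nonneg _)
  eq := by
    have h : (diagonal fun i : n × m => ((S.eig i.1 * S'.eig i.2 : ℝ) : ℂ)) =
        diagonal (fun i => (S.eig i : ℂ)) ⊗ₖ diagonal (fun i => (S'.eig i : ℂ)) := by
      simp only [diagonal_kronecker_diagonal, Complex.ofReal_mul]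
    rw [h, conjTranspose_kronecker, ← mul_kronecker_mul, ← mul_kronecker_mul, ← S.eq, ← S'.eq]

/-- The reindexed eigenbasis. -/
def submatrix (S : SpectralDecomp A) (e : m ≃ n) : SpectralDecomp (A.submatrix e e) where
  basis := S.basis.submatrix e e
  eig i := S.eig (e i)
  conjTranspose_mul_basis := by
    rw [conjTranspose_submatrix, submatrix_mul_equiv, S.conjTranspose_mul_basis,
      submatrix_one_equiv]
  eig_nonneg i := S.eig_nonneg _
  eq := by
    have h : (diagonal fun i => (S.eig (e i) : ℂ)) =
        (diagonal fun i => (S.eig i : ℂ)).submatrix e e := by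
      rw [submatrix_diagonal_equiv]
      rfl
    rw [h, conjTranspose_submatrix, submatrix_mul_equiv, submatrix_mul_equiv, ← S.eq]

/-- The standard basis as an eigenbasis of the identity. -/
def one : SpectralDecomp (1 : Matrix n n ℂ) where
  basis := 1
  eig _ := 1
  conjTranspose_mul_basis := by simp
  eig_nonneg _ := zero_le_one
  eq := by simp

lemma overlap_kron (S : SpectralDecomp A) (T : SpectralDecomp B) (S' : SpectralDecomp A')
    (T' : SpectralDecomp B') (b a : n × m) :
    (S.kron S').overlap (T.kron T') b a = S.overlap T b.1 a.1 * S'.overlap T' b.2 a.2 := by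
  simp only [overlap, toEigenbases, kron, Matrix.mul_one, conjTranspose_kronecker,
    ← mul_kronecker_mul]
  exact Complex.normSq_mul _ _

lemma nsWeight_kron (S : SpectralDecomp A) (T : SpectralDecomp B) (S' : SpectralDecomp A')
    (T' : SpectralDecomp B') (i : (n × m) × (n × m)) :
    (S.kron S').nsWeight (T.kron T') i =
      S.nsWeight T (i.1.1, i.2.1) * S'.nsWeight T' (i.1.2, i.2.2) := by
  rw [nsWeight, overlap_kron]
  exact mul_mul_mul_comm _ _ _ _

lemma overlap_submatrix (S : SpectralDecomp A) (T : SpectralDecomp B) (e : m ≃ n) (b a : m) :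
    (S.submatrix e).overlap (T.submatrix e) b a = S.overlap T (e b) (e a) := by
  simp only [overlap, toEigenbases, submatrix, Matrix.mul_one, conjTranspose_submatrix,
    submatrix_mul_equiv, submatrix_apply]

variable {S : SpectralDecomp A} {T : SpectralDecomp B} {S' : SpectralDecomp A'}
  {T' : SpectralDecomp B'}

lemma IsDominated.kron (h : S.IsDominated T) (h' : S'.IsDominated T') :
    (S.kron S').IsDominated (T.kron T') := by
  rintro ⟨b, a⟩ hb
  rw [nsWeight_kron]
  rcases mul_eq_zero.1 hb with hb | hb
  · rw [h (b.1, a.1) hb, zero_mul]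
  · rw [h' (b.2, a.2) hb, mul_zero]

lemma IsDominated.submatrix (h : S.IsDominated T) (e : m ≃ n) :
    (S.submatrix e).IsDominated (T.submatrix e) := by
  rintro ⟨b, a⟩ hb
  rw [nsWeight, overlap_submatrix]
  exact h (e b, e a) hb

lemma quasiEntropy_kron (γ : ℝ) :
    (S.kron S').quasiEntropy (T.kron T') γ = S.quasiEntropy T γ * S'.quasiEntropy T' γ := by
  rw [quasiEntropy, quasiEntropy, quasiEntropy, Finset.sum_mul_sum, ← Finset.sum_product',
    Finset.univ_product_univ]
  refine Fintype.sum_equiv (Equiv.prodProdProdComm _ _ _ _) _ _ fun i => ?_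
  have hratio : (S.kron S').nsRatio (T.kron T') i =
      S.nsRatio T (i.1.1, i.2.1) * S'.nsRatio T' (i.1.2, i.2.2) := mul_div_mul_comm _ _ _ _
  rw [hratio, nsWeight_kron, Real.mul_rpow (S.nsRatio_nonneg T _) (S'.nsRatio_nonneg T' _)]
  exact mul_mul_mul_comm _ _ _ _

lemma quasiEntropy_submatrix (e : m ≃ n) (γ : ℝ) :
    (S.submatrix e).quasiEntropy (T.submatrix e) γ = S.quasiEntropy T γ := by
  refine Fintype.sum_equiv (e.prodCongr e) _ _ fun i => ?_
  rw [nsWeight, overlap_submatrix]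
  rfl

lemma quasiEntropy_one_one [Unique n] (γ : ℝ) :
    (one : SpectralDecomp (1 : Matrix n n ℂ)).quasiEntropy one γ = 1 := by
  rw [quasiEntropy, Fintype.sum_prod_type, Fintype.sum_unique, Fintype.sum_unique]
  simp [nsWeight, nsRatio, overlap, toEigenbases, one]

/-- The product eigenbasis of a tensor power. -/
def tensorPow (S : SpectralDecomp A) : ∀ k : ℕ, SpectralDecomp (tpowMat A k)
  | 0 => one
  | k + 1 => (S.tensorPow k).kron S

lemma IsDominated.tensorPow (h : S.IsDominated T) (k : ℕ) :
    (S.tensorPow k).IsDominated (T.tensorPow k) := by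
  induction k with
  | zero => exact fun _ hi => absurd hi one_ne_zero
  | succ k ih => exact ih.kron h

instance uniqueTpowZero (ι : Type) : Unique (tpow ι 0) := inferInstanceAs (Unique PUnit)

lemma quasiEntropy_tensorPow (k : ℕ) (γ : ℝ) :
    (S.tensorPow k).quasiEntropy (T.tensorPow k) γ = S.quasiEntropy T γ ^ k := by
  induction k with
  | zero => exact quasiEntropy_one_one γ
  | succ k ih =>
    rw [pow_succ, ← ih]
    exact quasiEntropy_kron γ

end SpectralDecomp

lemma trace_tpowMat (A : Matrix n n ℂ) (k : ℕ) : (tpowMat A k).trace = A.trace ^ k := by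
  induction k with
  | zero => simp [tpowMat]
  | succ k ih =>
    rw [pow_succ, ← ih]
    exact trace_kronecker _ _

/-- Regrouping of the factors of a bipartite tensor power. -/
def tpowProdEquiv (n m : Type) : ∀ k : ℕ, tpow n k × tpow m k ≃ tpow (n × m) k
  | 0 => Equiv.prodPUnit (tpow n 0)
  | k + 1 => (Equiv.prodProdProdComm _ _ _ _).trans ((tpowProdEquiv n m k).prodCongr (.refl _))

/-- The `k`-fold tensor power of a bipartite matrix, regarded as a bipartite matrix. -/
def bipartitePow (M : Matrix (n × m) (n × m) ℂ) (k : ℕ) :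
    Matrix (tpow n k × tpow m k) (tpow n k × tpow m k) ℂ :=
  (tpowMat M k).submatrix (tpowProdEquiv n m k) (tpowProdEquiv n m k)

lemma trace_bipartitePow (M : Matrix (n × m) (n × m) ℂ) (k : ℕ) :
    (bipartitePow M k).trace = M.trace ^ k := by
  rw [← trace_tpowMat, bipartitePow]
  exact Fintype.sum_equiv (tpowProdEquiv n m k) _ _ fun _ => rfl

end Tensor

/-! ### Kraus representations of channels -/

section Channels

variable {n m k κ ι : Type} [Fintype n] [DecidableEq n] [Fintype m] [Fintype k]
  [Fintype κ] [Fintype ι] {Φ : Matrix n n ℂ →ₗ[ℂ] Matrix m m ℂ}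
  {K : κ → Matrix m n ℂ}

/-- `K` is a family of Kraus operators of the trace-preserving map `Φ`. -/
structure IsKrausFamily (K : κ → Matrix m n ℂ) (Φ : Matrix n n ℂ →ₗ[ℂ] Matrix m m ℂ) : Prop where
  apply_eq : ∀ M, Φ M = krausMap K M
  sum_eq_one : ∑ x, (K x)ᴴ * K x = 1

omit [Fintype n] in
lemma sum_conjTranspose_mul_kronecker_one [DecidableEq k]
    (hK : ∑ x, (K x)ᴴ * K x = 1) :
    ∑ x, (K x ⊗ₖ (1 : Matrix k k ℂ))ᴴ * (K x ⊗ₖ (1 : Matrix k k ℂ)) = 1 := by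
  simp only [conjTranspose_kronecker, conjTranspose_one, ← mul_kronecker_mul, Matrix.mul_one]
  rw [← one_kronecker_one, ← hK]
  ext ⟨i, j⟩ ⟨i', j'⟩
  simp only [Matrix.sum_apply, kronecker_apply, Finset.sum_mul]

omit [DecidableEq n] [Fintype m] in
lemma blockApplyRight_eq_sum_smul [DecidableEq k] {c : κ → ℂ}
    (h : ∀ M, Φ M = ∑ x, c x • (K x * M * (K x)ᴴ)) (M : Matrix (n × k) (n × k) ℂ) :
    blockApplyRight Φ M =
      ∑ x, c x • (K x ⊗ₖ (1 : Matrix k k ℂ) * M * (K x ⊗ₖ (1 : Matrix k k ℂ))ᴴ) := by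
  ext ⟨b, i⟩ ⟨b', i'⟩
  simp only [blockApplyRight, of_apply, h, Matrix.sum_apply, Matrix.smul_apply]
  refine Finset.sum_congr rfl fun x _ => ?_
  congr 1
  simp only [mul_apply, Fintype.sum_prod_type, kronecker_apply, conjTranspose_apply, of_apply,
    one_apply]
  simp [apply_ite (starRingEnd ℂ)]

omit [DecidableEq n] [Fintype m] in
lemma blockApply_eq_krausMap [DecidableEq k] (h : ∀ M, Φ M = krausMap K M)
    (M : Matrix (k × n) (k × n) ℂ) :
    blockApply Φ M = krausMap (fun x => (1 : Matrix k k ℂ) ⊗ₖ K x) M := by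
  ext ⟨i, b⟩ ⟨i', b'⟩
  simp only [blockApply, krausMap, of_apply, h, Matrix.sum_apply]
  refine Finset.sum_congr rfl fun x _ => ?_
  simp only [mul_apply, Fintype.sum_prod_type, kronecker_apply, conjTranspose_apply, of_apply,
    one_apply]
  simp [apply_ite (starRingEnd ℂ)]

namespace IsKrausFamily

lemma blockApplyRight_eq [DecidableEq k] (h : IsKrausFamily K Φ) (M : Matrix (n × k) (n × k) ℂ) :
    blockApplyRight Φ M = krausMap (fun x => K x ⊗ₖ (1 : Matrix k k ℂ)) M := by
  have h1 := blockApplyRight_eq_sum_smul (Φ := Φ) (K := K) (c := fun _ => 1)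
    (by simpa only [one_smul, krausMap] using h.apply_eq) M
  simpa only [one_smul, krausMap] using h1

omit [Fintype k] in
lemma posSemidef_blockApplyRight [Finite k] (h : IsKrausFamily K Φ) {M : Matrix (n × k) (n × k) ℂ}
    (hM : M.PosSemidef) : (blockApplyRight Φ M).PosSemidef := by
  classical
  have := Fintype.ofFinite k
  rw [h.blockApplyRight_eq]
  exact posSemidef_krausMap _ hM

lemma tensorChannel {n' m' : Type} [Fintype n'] [DecidableEq n'] [Fintype m']
    {K' : ι → Matrix m' n' ℂ} {Φ' : Matrix n' n' ℂ →ₗ[ℂ] Matrix m' m' ℂ}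
    (h : IsKrausFamily K Φ) (h' : IsKrausFamily K' Φ') :
    IsKrausFamily (fun x : κ × ι => K x.1 ⊗ₖ K' x.2) (tensorChannel Φ Φ') where
  apply_eq M := by
    classical
    have split : ∀ x y,
        K x ⊗ₖ K' y = (K x ⊗ₖ (1 : Matrix m' m' ℂ)) * ((1 : Matrix n n ℂ) ⊗ₖ K' y) :=
      fun x y => by rw [← mul_kronecker_mul, Matrix.mul_one, Matrix.one_mul]
    refine (h.blockApplyRight_eq (blockApply Φ' M)).trans ?_
    simp only [blockApply_eq_krausMap h'.apply_eq, krausMap, Fintype.sum_prod_type, split,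
      conjTranspose_mul, Matrix.mul_sum, Matrix.sum_mul, Matrix.mul_assoc]
  sum_eq_one := by
    simp only [conjTranspose_kronecker, ← mul_kronecker_mul]
    rw [← one_kronecker_one, ← h.sum_eq_one, ← h'.sum_eq_one]
    ext ⟨i, j⟩ ⟨i', j'⟩
    simp only [Matrix.sum_apply, kronecker_apply, Finset.sum_mul_sum, Fintype.sum_prod_type]

lemma exists_tpowChannel (h : IsKrausFamily K Φ) (l : ℕ) :
    ∃ (ι : Type) (_ : Fintype ι) (L : ι → Matrix (tpow m l) (tpow n l) ℂ),
      IsKrausFamily L (tpowChannel Φ l) := by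
  induction l with
  | zero =>
    refine ⟨Unit, inferInstance, fun _ => (1 : Matrix PUnit PUnit ℂ), fun M => ?_, ?_⟩
    · have h1 : ∀ M : Matrix PUnit PUnit ℂ, M = krausMap (fun _ : Unit => 1) M := by simp [krausMap]
      exact h1 M
    · have h1 : ∑ _ : Unit, (1 : Matrix PUnit PUnit ℂ)ᴴ * 1 = 1 := by simp
      exact h1
  | succ l ih =>
    obtain ⟨ι, _, L, hL⟩ := ih
    exact ⟨ι × κ, inferInstance, fun x => L x.1 ⊗ₖ K x.2, hL.tensorChannel h⟩

end IsKrausFamily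

omit [Fintype n] [DecidableEq n] [Fintype m] in
lemma tensorChannel_kronecker {n' m' : Type} (Φ' : Matrix n' n' ℂ →ₗ[ℂ] Matrix m' m' ℂ)
    (M : Matrix n n ℂ) (M' : Matrix n' n' ℂ) :
    tensorChannel Φ Φ' (M ⊗ₖ M') = Φ M ⊗ₖ Φ' M' := by
  ext ⟨x, b⟩ ⟨x', b'⟩
  have inner : ∀ u u', (of fun a a' => M u u' * M' a a') = M u u' • M' := fun _ _ => rfl
  have outer : (of fun u u' => M u u' * Φ' M' b b') = Φ' M' b b' • M := by
    ext u u'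
    exact mul_comm _ _
  change Φ (of fun u u' => Φ' (of fun a a' => M u u' * M' a a') b b') x x' = Φ M x x' * Φ' M' b b'
  simp only [inner, map_smul, Matrix.smul_apply, smul_eq_mul]
  rw [outer, map_smul, Matrix.smul_apply, smul_eq_mul, mul_comm]

omit [Fintype n] [Fintype m] [Fintype k] in
lemma blockApplyRight_tpowChannel_bipartitePow [DecidableEq m] [DecidableEq k]
    (M : Matrix (n × k) (n × k) ℂ) (l : ℕ) :
    blockApplyRight (tpowChannel Φ l) (bipartitePow M l) =
      bipartitePow (blockApplyRight Φ M) l := by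
  induction l with
  | zero =>
    ext p q
    obtain rfl : p = q := Prod.ext (Subsingleton.elim (α := PUnit) _ _)
      (Subsingleton.elim (α := PUnit) _ _)
    rfl
  | succ l ih =>
    ext ⟨⟨x, b⟩, ⟨y, c⟩⟩ ⟨⟨x', b'⟩, ⟨y', c'⟩⟩
    have hprod := congrFun (congrFun (tensorChannel_kronecker (Φ := tpowChannel Φ l) Φ
      (of fun u u' => bipartitePow M l (u, y) (u', y')) (of fun a a' => M (a, c) (a', c')))
      (x, b)) (x', b')
    have hl : tpowChannel Φ l (of fun u u' => bipartitePow M l (u, y) (u', y')) x x' =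
        bipartitePow (blockApplyRight Φ M) l (x, y) (x', y') :=
      congrFun (congrFun ih (x, y)) (x', y')
    exact hprod.trans (congrArg (· * blockApplyRight Φ M (b, c) (b', c')) hl)

omit [DecidableEq n] in
lemma trace_blockApplyRight (hΦ : ∀ M, (Φ M).trace = M.trace) (M : Matrix (n × k) (n × k) ℂ) :
    (blockApplyRight Φ M).trace = M.trace := by
  simp only [trace, diag_apply, blockApplyRight, of_apply, Fintype.sum_prod_type]
  rw [Finset.sum_comm, Finset.sum_comm (s := (Finset.univ : Finset n))]
  exact Finset.sum_congr rfl fun c _ => hΦ (of fun a b => M (a, c) (b, c))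

end Channels

/-! ### Tests of channel outputs without a large reference system -/

section LocalTest

variable {n m k R κ ι : Type} [Fintype n] [DecidableEq n] [Fintype m] [DecidableEq m] [Fintype k]
  [Fintype R] [Fintype κ] [Fintype ι]

omit [DecidableEq n] [Fintype m] [DecidableEq m] in
lemma krausMap_vecMulVec (K : κ → Matrix m n ℂ) (v : n → ℂ) :
    krausMap K (vecMulVec v (star v)) = ∑ x, vecMulVec (K x *ᵥ v) (star (K x *ᵥ v)) := by
  refine Finset.sum_congr rfl fun x _ => ?_
  rw [mul_vecMulVec, vecMulVec_mul, star_mulVec]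

omit [Fintype m] [DecidableEq m] [DecidableEq n] in
lemma mul_conjTranspose_eq_sum_vecMulVec (G : Matrix m n ℂ) :
    G * Gᴴ = ∑ x, vecMulVec (G.col x) (star (G.col x)) := by
  ext
  simp only [mul_apply, Matrix.sum_apply, vecMulVec_apply, conjTranspose_apply, Pi.star_apply,
    col_apply]

omit [DecidableEq n] [DecidableEq m] in
lemma trace_vecMulVec_vec (X : Matrix m n ℂ) :
    (vecMulVec (vec X) (star (vec X))).trace = (Xᴴ * X).trace := by
  rw [trace_vecMulVec, dotProduct_comm, star_vec_dotProduct_vec]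

open scoped MatrixOrder Matrix.Norms.L2Operator in
-- The Schmidt decomposition: a purification of the marginal of `ρ` on the first factor already
-- lives on `n × n`, and compressing its second factor gives back `ρ`.
lemma IsState.exists_eq_krausMap_one_kronecker {ρ : Matrix (n × R) (n × R) ℂ} (hρ : IsState ρ) :
    ∃ (ν : Matrix (n × n) (n × n) ℂ) (L : n × R → Matrix R n ℂ), IsState ν ∧
      ρ = krausMap (fun x => (1 : Matrix n n ℂ) ⊗ₖ L x) ν ∧
      (1 - ∑ x, (L x)ᴴ * L x).PosSemidef := by
  obtain ⟨G, rfl⟩ := exists_eq_mul_conjTranspose hρ.1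
  let M : Matrix n (R × (n × R)) ℂ := of fun a p => G (a, p.1) p.2
  obtain ⟨W, hW, hW1⟩ := exists_contraction_of_le (C := M * Mᴴ) (G := M)
    (by simpa using PosSemidef.zero)
  set S := (M * Mᴴ) ^ (1 / 2 : ℝ)
  have hS : S * Sᴴ = M * Mᴴ := by
    rw [show Sᴴ = S from CFC.rpow_nonneg.posSemidef.1]
    exact (spectralDecomp (posSemidef_self_mul_conjTranspose M)).rpow_mul_rpow_of_add_eq_one
      (add_halves 1)
  let L : n × R → Matrix R n ℂ := fun x => of fun c j => W j (c, x)
  have column : ∀ x, ((1 : Matrix n n ℂ) ⊗ₖ L x) *ᵥ vec Sᵀ = G.col x := fun x => by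
    rw [← vec_mul_eq_mulVec]
    ext ⟨a, c⟩
    have h := congrFun (congrFun hW a) (c, x)
    rw [mul_apply] at h
    simp only [vec, mul_apply, transpose_apply, mul_comm (L x c _)]
    exact h
  refine ⟨vecMulVec (vec Sᵀ) (star (vec Sᵀ)), L, ⟨posSemidef_vecMulVec_self_star _, ?_⟩, ?_, ?_⟩
  · rw [trace_vecMulVec_vec, show Sᵀᴴ = Sᴴᵀ from rfl, ← transpose_mul, trace_transpose, hS, ← hρ.2]
    simp only [trace, diag_apply, mul_apply, Fintype.sum_prod_type, M, of_apply,
      conjTranspose_apply]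
  · rw [krausMap_vecMulVec, mul_conjTranspose_eq_sum_vecMulVec]
    simp only [column]
  · have transp : ∑ x, (L x)ᴴ * L x = (W * Wᴴ)ᵀ := by
      ext i j
      simp only [Matrix.sum_apply, mul_apply, transpose_apply, conjTranspose_apply, of_apply, L]
      rw [Finset.sum_comm]
      simp only [mul_comm (star _)]
      exact (Fintype.sum_prod_type fun p => W j p * star (W i p)).symm
    rw [transp, ← transpose_one, ← transpose_sub]
    exact hW1.transpose

omit [Fintype R] in
lemma IsKrausFamily.blockApplyRight_krausMap [Finite R] {Φ : Matrix n n ℂ →ₗ[ℂ] Matrix m m ℂ}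
    {K : ι → Matrix m n ℂ} (h : IsKrausFamily K Φ) (L : κ → Matrix R k ℂ)
    (ν : Matrix (n × k) (n × k) ℂ) :
    blockApplyRight Φ (krausMap (fun x => (1 : Matrix n n ℂ) ⊗ₖ L x) ν) =
      krausMap (fun x => (1 : Matrix m m ℂ) ⊗ₖ L x) (blockApplyRight Φ ν) := by
  classical
  have := Fintype.ofFinite R
  have comm : ∀ x y, (K x ⊗ₖ (1 : Matrix R R ℂ)) * ((1 : Matrix n n ℂ) ⊗ₖ L y) =
      ((1 : Matrix m m ℂ) ⊗ₖ L y) * (K x ⊗ₖ (1 : Matrix k k ℂ)) := fun x y => by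
    simp only [← mul_kronecker_mul, Matrix.one_mul, Matrix.mul_one]
  have conj : ∀ x y (Z : Matrix (n × k) (n × k) ℂ),
      (K x ⊗ₖ (1 : Matrix R R ℂ)) *
        (((1 : Matrix n n ℂ) ⊗ₖ L y) * Z * ((1 : Matrix n n ℂ) ⊗ₖ L y)ᴴ) *
        (K x ⊗ₖ (1 : Matrix R R ℂ))ᴴ =
      ((1 : Matrix m m ℂ) ⊗ₖ L y) * ((K x ⊗ₖ (1 : Matrix k k ℂ)) * Z *
        (K x ⊗ₖ (1 : Matrix k k ℂ))ᴴ) * ((1 : Matrix m m ℂ) ⊗ₖ L y)ᴴ := fun x y Z => by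
    have h1 := congrArg conjTranspose (comm x y)
    rw [conjTranspose_mul, conjTranspose_mul] at h1
    rw [Matrix.mul_assoc, Matrix.mul_assoc, h1]
    simp only [← Matrix.mul_assoc, comm]
  rw [h.blockApplyRight_eq, h.blockApplyRight_eq]
  simp only [krausMap, Matrix.mul_sum, Matrix.sum_mul, conj]
  exact Finset.sum_comm

omit [Fintype n] in
lemma posSemidef_one_sub_krausMap_conjTranspose [Finite n] {K : κ → Matrix m n ℂ}
    (hK : (1 - ∑ x, (K x)ᴴ * K x).PosSemidef) {P : Matrix m m ℂ} (hP : (1 - P).PosSemidef) :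
    (1 - krausMap (fun x => (K x)ᴴ) P).PosSemidef := by
  have := Fintype.ofFinite n
  convert hK.add (posSemidef_krausMap (fun x => (K x)ᴴ) hP) using 1
  simp only [krausMap, conjTranspose_conjTranspose, Matrix.mul_sub, Matrix.sub_mul, Matrix.mul_one,
    Finset.sum_sub_distrib]
  abel

omit [Fintype k] in
lemma posSemidef_one_sub_sum_one_kronecker [Finite k] [DecidableEq k] {L : κ → Matrix R k ℂ}
    (hL : (1 - ∑ x, (L x)ᴴ * L x).PosSemidef) :
    (1 - ∑ x, ((1 : Matrix m m ℂ) ⊗ₖ L x)ᴴ * ((1 : Matrix m m ℂ) ⊗ₖ L x)).PosSemidef := by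
  have := Fintype.ofFinite k
  have factor : 1 - ∑ x, ((1 : Matrix m m ℂ) ⊗ₖ L x)ᴴ * ((1 : Matrix m m ℂ) ⊗ₖ L x) =
      (1 : Matrix m m ℂ) ⊗ₖ (1 - ∑ x, (L x)ᴴ * L x) := by
    simp only [conjTranspose_kronecker, conjTranspose_one, ← mul_kronecker_mul, Matrix.mul_one]
    ext ⟨i, j⟩ ⟨i', j'⟩
    simp only [Matrix.sub_apply, Matrix.sum_apply, kronecker_apply, mul_sub, Finset.mul_sum]
    rw [← one_kronecker_one, kronecker_apply]
  rw [factor]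
  exact PosSemidef.one.kronecker hL

lemma exists_input_prod_self_of_test [DecidableEq R] {K : κ → Matrix m n ℂ} {K' : ι → Matrix m n ℂ}
    {E F : Matrix n n ℂ →ₗ[ℂ] Matrix m m ℂ} (hE : IsKrausFamily K E) (hF : IsKrausFamily K' F)
    {ρ : Matrix (n × R) (n × R) ℂ} (hρ : IsState ρ) {P : Matrix (m × R) (m × R) ℂ}
    (hP : P.PosSemidef) (hP1 : (1 - P).PosSemidef) :
    ∃ ν : Matrix (n × n) (n × n) ℂ, IsState ν ∧ ∃ T : Matrix (m × n) (m × n) ℂ,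
      T.PosSemidef ∧ (1 - T).PosSemidef ∧
      rtr (T * blockApplyRight E ν) = rtr (P * blockApplyRight E ρ) ∧
      rtr (T * blockApplyRight F ν) = rtr (P * blockApplyRight F ρ) := by
  obtain ⟨ν, L, hν, rfl, hL⟩ := hρ.exists_eq_krausMap_one_kronecker
  refine ⟨ν, hν, krausMap (fun x => ((1 : Matrix m m ℂ) ⊗ₖ L x)ᴴ) P, posSemidef_krausMap _ hP,
    posSemidef_one_sub_krausMap_conjTranspose (posSemidef_one_sub_sum_one_kronecker hL) hP1, ?_, ?_⟩
  · rw [hE.blockApplyRight_krausMap, rtr_mul_comm, ← rtr_krausMap_mul, rtr_mul_comm]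
  · rw [hF.blockApplyRight_krausMap, rtr_mul_comm, ← rtr_krausMap_mul, rtr_mul_comm]

end LocalTest

/-! ### Parallel tests from Rényi quasi-entropies -/

section ParallelTest

namespace SpectralDecomp

variable {n : Type} [Fintype n] [DecidableEq n] {A B : Matrix n n ℂ} (S : SpectralDecomp A)
  (T : SpectralDecomp B)

lemma exists_isState_le_of_isDominated (hST : S.IsDominated T) (hA : rtr A = 1) {γ ε : ℝ}
    (hγ : γ ∈ Set.Ioo 0 1) (hε : 0 < ε) (hε1 : ε ≤ 1 / 4) :
    ∃ A' : Matrix n n ℂ, IsState A' ∧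
      (((2 * (S.quasiEntropy T γ / ε ^ 2) ^ γ⁻¹ : ℝ) : ℂ) • B - A').PosSemidef ∧
      ∀ P : Matrix n n ℂ, P.PosSemidef → (1 - P).PosSemidef →
        rtr (P * A) - 2 * ε ≤ rtr (P * A') := by
  have hQ := quasiEntropy_pos hST hA γ
  refine S.exists_isState_le_of_resolvent_le T hA (Real.rpow_pos_of_pos (by positivity) _) hε hε1
    ((resolvent_le_mul_quasiEntropy hST (Real.rpow_pos_of_pos (by positivity) _) hγ).trans_eq ?_)
  rw [Real.rpow_inv_rpow (by positivity) hγ.1.ne']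
  field_simp

lemma exists_test_of_quasiEntropy_neg_pos (hA : rtr A = 1) {γ ε : ℝ} (hγ : γ ∈ Set.Ioo 0 1)
    (hε : 0 < ε) (hε1 : ε ≤ 1) (hQ : 0 < S.quasiEntropy T (-γ)) :
    ∃ P : Matrix n n ℂ, P.PosSemidef ∧ (1 - P).PosSemidef ∧ 1 - ε ≤ rtr (P * A) ∧
      rtr (P * B) ≤ (S.quasiEntropy T (-γ) / ε) ^ γ⁻¹ := by
  set q := S.quasiEntropy T (-γ)
  have hc : 0 < (ε / q) ^ γ⁻¹ := Real.rpow_pos_of_pos (by positivity) _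
  obtain ⟨P, hP, hP1, h⟩ := S.exists_test_le_quasiEntropy_neg T hc hγ
  rw [Real.rpow_inv_rpow (by positivity) hγ.1.ne', div_mul_cancel₀ _ hQ.ne'] at h
  have hPB := mul_nonneg hc.le (rtr_mul_nonneg hP T.posSemidef)
  have hPA := rtr_mul_nonneg hP1 S.posSemidef
  refine ⟨P, hP, hP1, ?_, ?_⟩
  · rw [Matrix.sub_mul, Matrix.one_mul, rtr_sub, hA] at h
    linarith
  · rw [← inv_div, Real.inv_rpow (by positivity), inv_eq_one_div, le_div_iff₀' hc]
    linarith

/-- The decomposition of the regrouped tensor power of a bipartite matrix induced by a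
decomposition of the matrix. -/
def bipartitePow {R : Type} [Fintype R] [DecidableEq R] {A : Matrix (n × R) (n × R) ℂ}
    (S : SpectralDecomp A) (l : ℕ) : SpectralDecomp (QCD.bipartitePow A l) :=
  (S.tensorPow l).submatrix (tpowProdEquiv n R l)

section BipartitePow

variable {R : Type} [Fintype R] [DecidableEq R] {A B : Matrix (n × R) (n × R) ℂ}
  {S : SpectralDecomp A} {T : SpectralDecomp B}

lemma IsDominated.bipartitePow (h : S.IsDominated T) (l : ℕ) :
    (S.bipartitePow l).IsDominated (T.bipartitePow l) :=
  (h.tensorPow l).submatrix _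

lemma quasiEntropy_bipartitePow (l : ℕ) (γ : ℝ) :
    (S.bipartitePow l).quasiEntropy (T.bipartitePow l) γ = S.quasiEntropy T γ ^ l :=
  (quasiEntropy_submatrix _ γ).trans (quasiEntropy_tensorPow l γ)

end BipartitePow

end SpectralDecomp

variable {n m R κ ι : Type} [Fintype n] [DecidableEq n] [Fintype m] [DecidableEq m] [Fintype R]
  [DecidableEq R] [Fintype κ] [Fintype ι] {Φ : Matrix n n ℂ →ₗ[ℂ] Matrix m m ℂ}
  {K : κ → Matrix m n ℂ} {K' : ι → Matrix m n ℂ} {E F : Matrix n n ℂ →ₗ[ℂ] Matrix m m ℂ}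

namespace IsKrausFamily

omit [DecidableEq m] in
lemma trace_eq (h : IsKrausFamily K Φ) (M : Matrix n n ℂ) : (Φ M).trace = M.trace := by
  have cycle : ∀ x, (K x * M * (K x)ᴴ).trace = ((K x)ᴴ * K x * M).trace := fun x => by
    rw [trace_mul_cycle]
  simp only [h.apply_eq, krausMap, trace_sum, cycle]
  rw [← trace_sum, ← Matrix.sum_mul, h.sum_eq_one, Matrix.one_mul]

omit [DecidableEq m] [DecidableEq R] [Fintype R] in
lemma posSemidef_smul_blockApplyRight_sub [Finite R] (h : IsKrausFamily K Φ) {c : ℂ}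
    {M N : Matrix (n × R) (n × R) ℂ} (hMN : (c • N - M).PosSemidef) :
    (c • blockApplyRight Φ N - blockApplyRight Φ M).PosSemidef := by
  have lin : blockApplyRight Φ (c • N - M) = c • blockApplyRight Φ N - blockApplyRight Φ M := by
    change blockApplyRightL R Φ (c • N - M) = _
    rw [map_sub, map_smul]
    rfl
  exact lin ▸ h.posSemidef_blockApplyRight hMN

lemma rtr_mul_blockApplyRight_sub_le (h : IsKrausFamily K Φ) {δ : ℝ}
    {A A' : Matrix (n × R) (n × R) ℂ}
    (hA : ∀ P : Matrix (n × R) (n × R) ℂ, P.PosSemidef → (1 - P).PosSemidef →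
      rtr (P * A) - δ ≤ rtr (P * A'))
    {P : Matrix (m × R) (m × R) ℂ} (hP : P.PosSemidef) (hP1 : (1 - P).PosSemidef) :
    rtr (P * blockApplyRight Φ A) - δ ≤ rtr (P * blockApplyRight Φ A') := by
  have pull : ∀ M, rtr (P * blockApplyRight Φ M) =
      rtr (krausMap (fun x => (K x ⊗ₖ (1 : Matrix R R ℂ))ᴴ) P * M) := fun M => by
    rw [h.blockApplyRight_eq, rtr_mul_comm, rtr_krausMap_mul, rtr_mul_comm]
  rw [pull, pull]
  refine hA _ (posSemidef_krausMap _ hP) (posSemidef_one_sub_krausMap_conjTranspose ?_ hP1)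
  rw [sum_conjTranspose_mul_kronecker_one h.sum_eq_one, sub_self]
  exact PosSemidef.zero

end IsKrausFamily

lemma rtr_bipartitePow_of_trace_eq_one {ρ : Matrix (n × R) (n × R) ℂ} (hρ : ρ.trace = 1)
    (l : ℕ) : rtr (bipartitePow ρ l) = 1 := by
  rw [rtr, trace_bipartitePow, hρ, one_pow, Complex.one_re]

-- The smoothed input is close to `ρ^⊗l` and dominated by `σ^⊗l`, so a test that separates
-- `(E ρ)^⊗l` from `(F σ)^⊗l` also separates the images of the smoothed input under `E` and `F`.
lemma exists_parallel_test_of_isDominated (hE : IsKrausFamily K E) (hF : IsKrausFamily K' F)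
    {ρ σ : Matrix (n × R) (n × R) ℂ} (hρ : ρ.trace = 1) {S : SpectralDecomp ρ}
    {T : SpectralDecomp σ} (hST : S.IsDominated T)
    {S' : SpectralDecomp (blockApplyRight E ρ)} {T' : SpectralDecomp (blockApplyRight F σ)}
    (hST' : S'.IsDominated T') {γ ε : ℝ} (hγ : γ ∈ Set.Ioo 0 1) (hε : 0 < ε) (hε1 : ε < 1)
    (l : ℕ) :
    ∃ ν : Matrix (tpow n l × tpow n l) (tpow n l × tpow n l) ℂ, IsState ν ∧
      ∃ P : Matrix (tpow m l × tpow n l) (tpow m l × tpow n l) ℂ,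
      P.PosSemidef ∧ (1 - P).PosSemidef ∧
      1 - ε ≤ rtr (P * blockApplyRight (tpowChannel E l) ν) ∧
      rtr (P * blockApplyRight (tpowChannel F l) ν) ≤
        2 * (32 * S.quasiEntropy T γ ^ l * S'.quasiEntropy T' (-γ) ^ l / ε ^ 3) ^ γ⁻¹ := by
  have hEρ : (blockApplyRight E ρ).trace = 1 := (trace_blockApplyRight hE.trace_eq ρ).trans hρ
  have hp := SpectralDecomp.quasiEntropy_pos hST (congrArg Complex.re hρ) γ
  have hq := SpectralDecomp.quasiEntropy_pos hST' (congrArg Complex.re hEρ) (-γ)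
  obtain ⟨_, _, L, hL⟩ := hE.exists_tpowChannel l
  obtain ⟨_, _, L', hL'⟩ := hF.exists_tpowChannel l
  obtain ⟨ρ', hρ', hle, hclose⟩ := (S.bipartitePow l).exists_isState_le_of_isDominated
    (T.bipartitePow l) (hST.bipartitePow l) (rtr_bipartitePow_of_trace_eq_one hρ l) hγ
    (by positivity : 0 < ε / 4) (by linarith)
  obtain ⟨P, hP, hP1, haccept, hreject⟩ :=
    (S'.bipartitePow l).exists_test_of_quasiEntropy_neg_pos (T'.bipartitePow l)
      (rtr_bipartitePow_of_trace_eq_one hEρ l) hγ (by positivity : 0 < ε / 2) (by linarith)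
      (by rw [SpectralDecomp.quasiEntropy_bipartitePow]; exact pow_pos hq l)
  rw [SpectralDecomp.quasiEntropy_bipartitePow] at hle hreject
  have hclose' := hL.rtr_mul_blockApplyRight_sub_le hclose hP hP1
  rw [blockApplyRight_tpowChannel_bipartitePow] at hclose'
  have hle' := rtr_mul_nonneg hP (hL'.posSemidef_smul_blockApplyRight_sub hle)
  rw [blockApplyRight_tpowChannel_bipartitePow, Matrix.mul_sub, rtr_sub, Matrix.mul_smul, rtr_smul,
    sub_nonneg] at hle'
  obtain ⟨ν, hν, P', hP', hP1', hEP, hFP⟩ := exists_input_prod_self_of_test hL hL' hρ' hP hP1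
  refine ⟨ν, hν, P', hP', hP1', by linarith, hFP ▸ hle'.trans ?_⟩
  refine (mul_le_mul_of_nonneg_left hreject (by positivity)).trans_eq ?_
  rw [mul_assoc, ← Real.mul_rpow (by positivity) (by positivity)]
  congr 2
  field_simp
  norm_num

end ParallelTest

/-! ### Choi matrices and the optimal reverse test -/

section Choi

variable {n m k κ : Type} [Fintype n] [Fintype k] [Fintype κ]
  {Φ : Matrix n n ℂ →ₗ[ℂ] Matrix m m ℂ}

omit [Fintype n] in
lemma mul_mul_conjTranspose_eq_sum_vecMulVec (Z : Matrix n k ℂ) (N : Matrix k k ℂ) :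
    Z * N * Zᴴ = ∑ i, ∑ j, N i j • vecMulVec (Z.col i) (star (Z.col j)) := by
  ext a b
  simp only [mul_apply, Matrix.sum_apply, Matrix.smul_apply, vecMulVec_apply, conjTranspose_apply,
    Pi.star_apply, col_apply, Finset.sum_mul, smul_eq_mul]
  rw [Finset.sum_comm]
  exact Finset.sum_congr rfl fun i _ => Finset.sum_congr rfl fun j _ => by ring

omit [Fintype n] in
-- Both sides are linear in `N`, and the blocks of the hypothesis are the case of a matrix unit.
lemma apply_mul_mul_conjTranspose_of_blockApply_vec {Z : Matrix n k ℂ} {c : κ → ℂ}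
    {Y : κ → Matrix m k ℂ}
    (h : blockApply Φ (vecMulVec (vec Z) (star (vec Z))) =
      ∑ x, c x • vecMulVec (vec (Y x)) (star (vec (Y x)))) (N : Matrix k k ℂ) :
    Φ (Z * N * Zᴴ) = ∑ x, c x • (Y x * N * (Y x)ᴴ) := by
  have block : ∀ i j, Φ (vecMulVec (Z.col i) (star (Z.col j))) =
      ∑ x, c x • vecMulVec ((Y x).col i) (star ((Y x).col j)) := fun i j => by
    ext b b'
    have hb := congrFun (congrFun h (i, b)) (j, b')
    simp only [Matrix.sum_apply, Matrix.smul_apply] at hb ⊢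
    exact hb
  simp only [mul_mul_conjTranspose_eq_sum_vecMulVec, map_sum, map_smul, block, Finset.smul_sum]
  calc ∑ i, ∑ j, ∑ x, N i j • c x • vecMulVec ((Y x).col i) (star ((Y x).col j))
      = ∑ i, ∑ x, ∑ j, N i j • c x • vecMulVec ((Y x).col i) (star ((Y x).col j)) :=
        Finset.sum_congr rfl fun i _ => Finset.sum_comm
    _ = ∑ x, ∑ i, ∑ j, N i j • c x • vecMulVec ((Y x).col i) (star ((Y x).col j)) :=
        Finset.sum_comm
    _ = _ := by simp only [smul_comm (N _ _)]

lemma apply_eq_sum_of_blockApply_vec [DecidableEq n] {Z : Matrix n k ℂ} {Z' : Matrix k n ℂ}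
    (hZ : Z * Z' = 1) {c : κ → ℂ} {Y : κ → Matrix m k ℂ}
    (h : blockApply Φ (vecMulVec (vec Z) (star (vec Z))) =
      ∑ x, c x • vecMulVec (vec (Y x)) (star (vec (Y x)))) (M : Matrix n n ℂ) :
    Φ M = ∑ x, c x • (Y x * Z' * M * (Y x * Z')ᴴ) := by
  have hM : M = Z * (Z' * M * Z'ᴴ) * Zᴴ :=
    calc M = Z * Z' * M * (Z * Z')ᴴ := by
          rw [hZ, conjTranspose_one, Matrix.one_mul, Matrix.mul_one]
      _ = _ := by simp only [conjTranspose_mul, Matrix.mul_assoc]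
  conv_lhs => rw [hM, apply_mul_mul_conjTranspose_of_blockApply_vec h]
  simp only [conjTranspose_mul, Matrix.mul_assoc]

lemma isKrausFamily_of_trace_eq [DecidableEq n] [Fintype m] {K : κ → Matrix m n ℂ}
    (hΦ : ∀ M, (Φ M).trace = M.trace) (h : ∀ M, Φ M = krausMap K M) : IsKrausFamily K Φ where
  apply_eq := h
  sum_eq_one := Matrix.ext_iff_trace_mul_right.2 fun M => by
    rw [Matrix.one_mul, ← hΦ M, h M, krausMap, Matrix.sum_mul, trace_sum, trace_sum]
    refine Finset.sum_congr rfl fun x _ => ?_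
    rw [← trace_mul_cycle]

/-- The matrix with vectorization `w`. -/
def unvec {k m : Type} (w : k × m → ℂ) : Matrix m k ℂ := of fun b i => w (i, b)

lemma IsQChannel.exists_isKrausFamily [DecidableEq n] [Fintype m] (h : IsQChannel Φ) :
    ∃ (κ : Type) (_ : Fintype κ) (K : κ → Matrix m n ℂ), IsKrausFamily K Φ := by
  classical
  cases isEmpty_or_nonempty n
  · exact ⟨Empty, inferInstance, fun x => x.elim, isKrausFamily_of_trace_eq h.1 fun M => by
      rw [Subsingleton.elim M 0, map_zero, krausMap, Finset.univ_eq_empty, Finset.sum_empty]⟩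
  · let e := Fintype.equivFin n
    let Z : Matrix n (Fin (Fintype.card n)) ℂ := (1 : Matrix n n ℂ).submatrix id e.symm
    let Z' : Matrix (Fin (Fintype.card n)) n ℂ := (1 : Matrix n n ℂ).submatrix e.symm id
    have hZ : Z * Z' = 1 := by
      rw [submatrix_mul_equiv, Matrix.one_mul, submatrix_id_id]
    obtain ⟨W, hW⟩ := exists_eq_mul_conjTranspose
      (h.2 _ Fintype.card_pos _ (posSemidef_vecMulVec_self_star (vec Z)))
    have hF := apply_eq_sum_of_blockApply_vec hZ (Φ := Φ) (c := fun _ => 1)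
      (Y := fun x => unvec (W.col x)) (by
        rw [hW, mul_conjTranspose_eq_sum_vecMulVec]
        simp only [one_smul]
        rfl)
    refine ⟨_, inferInstance, fun x => unvec (W.col x) * Z', isKrausFamily_of_trace_eq h.1 ?_⟩
    simpa only [krausMap, one_smul] using hF

end Choi

section ReverseTest

variable {n : Type} [Fintype n] [DecidableEq n]

open scoped MatrixOrder Matrix.Norms.L2Operator in
lemma mpow_eq_rpow {A : Matrix n n ℂ} (hA : A.PosSemidef) {t : ℝ} (ht : t ≠ 0) :
    mpow A t = A ^ t := by
  rw [mpow, (spectralDecomp hA).matFun_eq_funCalc, (spectralDecomp hA).rpow_eq_funCalc]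
  refine SpectralDecomp.funCalc_congr _ fun x _ => ?_
  split_ifs with hx
  · rw [hx, Real.zero_rpow ht]
  · rfl

lemma mul_diagonal_mul_conjTranspose_eq_sum_vecMulVec (W : Matrix n n ℂ) (c : n → ℂ) :
    W * diagonal c * Wᴴ = ∑ x, c x • vecMulVec (W.col x) (star (W.col x)) := by
  rw [mul_mul_conjTranspose_eq_sum_vecMulVec]
  refine Finset.sum_congr rfl fun x _ => ?_
  rw [Finset.sum_eq_single x (fun y _ hy => by rw [diagonal_apply_ne' _ hy, zero_smul]) (by simp),
    diagonal_apply_eq]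

-- The vectors are `Y^{1/2} o` for an eigenbasis `o` of `Y^{-1/2} X Y^{-1/2}`.
open scoped MatrixOrder Matrix.Norms.L2Operator in
lemma exists_vecMulVec_reverseTest {X Y : Matrix n n ℂ} (hX : X.PosSemidef) (hY : Y.PosSemidef)
    (hs : SuppLE X Y) {α : ℝ} (hα : 0 < α) :
    ∃ (w : n → n → ℂ) (δ : n → ℝ), (∀ x, 0 ≤ δ x) ∧ Y = ∑ x, vecMulVec (w x) (star (w x)) ∧
      X = ∑ x, (δ x : ℂ) • vecMulVec (w x) (star (w x)) ∧
      ∑ x, δ x ^ α * rtr (vecMulVec (w x) (star (w x))) =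
        rtr (Y * mpow (mpow Y (-(1 / 2)) * X * mpow Y (-(1 / 2))) α) := by
  let S := spectralDecomp hY
  set H := Y ^ (1 / 2 : ℝ)
  set J := Y ^ (-(1 / 2) : ℝ)
  have hHH : H * H = Y := S.rpow_mul_rpow_of_add_eq_one (by norm_num)
  have hHJ : H * J = S.supp := S.rpow_mul_rpow_neg (by norm_num)
  have hH : Hᴴ = H := CFC.rpow_nonneg.posSemidef.1
  have hJ : Jᴴ = J := CFC.rpow_nonneg.posSemidef.1
  have hJH : J * H = S.supp := by
    rw [← S.posSemidef_supp.1.eq, ← hHJ, conjTranspose_mul, hH, hJ]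
  have hPX : S.supp * X = X := S.supp_mul_eq_of_suppLE hX.1 hs
  have hXP : X * S.supp = X := by
    rw [← hX.1.eq, ← S.posSemidef_supp.1.eq, ← conjTranspose_mul, hPX]
  have hJXJ : (J * X * J).PosSemidef := by
    simpa only [hJ] using hX.mul_mul_conjTranspose_same J
  let O := spectralDecomp hJXJ
  set W := H * O.basis
  have conj_funCalc : ∀ f : ℝ → ℝ, H * O.funCalc f * H =
      ∑ x, (f (O.eig x) : ℂ) • vecMulVec (W.col x) (star (W.col x)) := fun f => by
    rw [← mul_diagonal_mul_conjTranspose_eq_sum_vecMulVec]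
    simp only [W, SpectralDecomp.funCalc, conjTranspose_mul, hH, Matrix.mul_assoc]
  refine ⟨W.col, O.eig, O.eig_nonneg, ?_, ?_, ?_⟩
  · have h := mul_conjTranspose_eq_sum_vecMulVec W
    rw [← h, conjTranspose_mul, hH, Matrix.mul_assoc, ← Matrix.mul_assoc O.basis,
      O.basis_mul_conjTranspose, Matrix.one_mul, hHH]
  · rw [← conj_funCalc fun x => x, O.funCalc_id]
    simp only [← Matrix.mul_assoc, hHJ]
    rw [hPX, Matrix.mul_assoc, hJH, hXP]
  · have h := congrArg rtr (conj_funCalc fun x => x ^ α)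
    simp only [rtr_sum, rtr_smul] at h
    rw [← h, mpow_eq_rpow hY (by norm_num), mpow_eq_rpow hJXJ hα.ne', O.rpow_eq_funCalc,
      Matrix.mul_assoc, rtr_mul_comm, Matrix.mul_assoc, hHH, rtr_mul_comm]

end ReverseTest

/-! ### Joint Kraus families from the geometric Rényi divergence -/

/-- Kraus operators of `F` which represent `E` after reweighting by `δ`: the analogue for channels
of a reverse test for states. -/
structure IsJointKrausFamily {n m κ : Type} [Fintype n] [DecidableEq n] [Fintype m] [Fintype κ]
    (K : κ → Matrix m n ℂ) (δ : κ → ℝ) (E F : Matrix n n ℂ →ₗ[ℂ] Matrix m m ℂ) : Prop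
    extends IsKrausFamily K F where
  weight_nonneg : ∀ x, 0 ≤ δ x
  apply_eq_sum : ∀ M, E M = ∑ x, (δ x : ℂ) • (K x * M * (K x)ᴴ)

section Geometric

variable {n m : Type} [Fintype n] [DecidableEq n] [Fintype m] [DecidableEq m] {α : ℝ}

lemma suppLE_of_geomRenyi_ne_top {ρ σ : Matrix n n ℂ} (h : geomRenyi α ρ σ ≠ ⊤) :
    SuppLE ρ σ := by
  by_contra hs
  exact h (if_neg hs)

lemma rtr_le_of_geomRenyi_le {ρ σ : Matrix n n ℂ} (hα : 1 < α) {D : EReal} (hD : D ≠ ⊤)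
    (h : geomRenyi α ρ σ ≤ D) :
    rtr (σ * mpow (mpow σ (-(1 / 2)) * ρ * mpow σ (-(1 / 2))) α) ≤
      (2 : ℝ) ^ ((α - 1) * D.toReal) := by
  rw [geomRenyi, if_pos (suppLE_of_geomRenyi_ne_top (ne_top_of_le_ne_top hD h))] at h
  set q := rtr (σ * mpow (mpow σ (-(1 / 2)) * ρ * mpow σ (-(1 / 2))) α)
  rcases le_or_gt q 0 with hq | hq
  · exact hq.trans (by positivity)
  · rw [elog, if_neg hq.not_ge, ← EReal.coe_mul] at h
    have hD' : D ≠ ⊥ := fun hb => EReal.coe_ne_bot _ (le_bot_iff.1 (hb ▸ h))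
    rw [← EReal.coe_toReal hD hD', EReal.coe_le_coe_iff, inv_mul_le_iff₀ (sub_pos.2 hα)] at h
    exact (Real.logb_le_iff_le_rpow one_lt_two hq).1 h

-- The joint Kraus operators are read off an optimal reverse test for the images of the pure state
-- `vec Z`; the factor `Z⁻¹` undoes the preparation of that state.
lemma exists_isJointKrausFamily_of_mul_eq_one {E F : Matrix n n ℂ →ₗ[ℂ] Matrix m m ℂ}
    (hE : IsQChannel E) (hF : IsQChannel F) (hα : 1 < α) (hfin : chDiv (geomD α) E F ≠ ⊤) {k : ℕ}
    (hk : 1 ≤ k) {Z : Matrix n (Fin k) ℂ} {Z' : Matrix (Fin k) n ℂ} (hZ : Z * Z' = 1)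
    (hZ' : Z' * Z = 1) (htr : (Z * Zᴴ).trace = 1) :
    ∃ (κ : Type) (_ : Fintype κ) (K : κ → Matrix m n ℂ) (δ : κ → ℝ), IsJointKrausFamily K δ E F ∧
      ∑ x, δ x ^ α * rtr (K x * (Z * Zᴴ) * (K x)ᴴ) ≤
        (2 : ℝ) ^ ((α - 1) * (chDiv (geomD α) E F).toReal) := by
  set ν := vecMulVec (vec Z) (star (vec Z))
  have hν : IsState ν :=
    ⟨posSemidef_vecMulVec_self_star _, by rw [trace_vecMulVec_vec, trace_mul_comm, htr]⟩
  have hle : geomRenyi α (blockApply E ν) (blockApply F ν) ≤ chDiv (geomD α) E F :=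
    le_iSup_of_le k (le_iSup_of_le hk (le_iSup₂_of_le ν hν le_rfl))
  obtain ⟨w, δ, hδ, hFw, hEw, hsum⟩ := exists_vecMulVec_reverseTest (hE.2 k hk ν hν.1)
    (hF.2 k hk ν hν.1) (suppLE_of_geomRenyi_ne_top (ne_top_of_le_ne_top hfin hle))
    (zero_lt_one.trans hα)
  have hF' := apply_eq_sum_of_blockApply_vec hZ (c := fun _ => 1) (Y := fun x => unvec (w x))
    (by simp only [one_smul]; exact hFw)
  have hE' := apply_eq_sum_of_blockApply_vec hZ (c := fun x => (δ x : ℂ))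
    (Y := fun x => unvec (w x)) hEw
  refine ⟨Fin k × m, inferInstance, fun x => unvec (w x) * Z', δ,
    ⟨isKrausFamily_of_trace_eq hF.1 (by simpa only [krausMap, one_smul] using hF'), hδ, hE'⟩,
    le_of_eq_of_le ?_ (hsum.trans_le (rtr_le_of_geomRenyi_le hα hfin hle))⟩
  refine Finset.sum_congr rfl fun x _ => ?_
  have cancel : unvec (w x) * Z' * (Z * Zᴴ) * (unvec (w x) * Z')ᴴ =
      unvec (w x) * (unvec (w x))ᴴ :=
    calc _ = unvec (w x) * (Z' * Z) * (unvec (w x) * (Z' * Z))ᴴ := by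
          simp only [conjTranspose_mul, Matrix.mul_assoc]
      _ = _ := by rw [hZ', Matrix.mul_one]
  rw [cancel, rtr_mul_comm, rtr, ← trace_vecMulVec_vec]
  rfl

lemma exists_invertible_factor_of_posSemidef [Nonempty n] {θ : Matrix n n ℂ}
    (hθ : θ.PosSemidef) {η : ℝ} (hη : 0 < η) :
    ∃ (Z : Matrix n (Fin (Fintype.card n)) ℂ) (Z' : Matrix (Fin (Fintype.card n)) n ℂ),
      Z * Z' = 1 ∧ Z' * Z = 1 ∧ (Z * Zᴴ).trace = 1 ∧
        (((rtr θ + η : ℝ) : ℂ) • (Z * Zᴴ) - θ).PosSemidef := by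
  set t := rtr θ + η
  set c := η / Fintype.card n
  have hn : (0 : ℝ) < Fintype.card n := by exact_mod_cast Fintype.card_pos
  have ht : 0 < t := add_pos_of_nonneg_of_pos (rtr_nonneg hθ) hη
  have hc : (((c : ℝ) : ℂ) • (1 : Matrix n n ℂ)).PosDef :=
    PosDef.one.smul (by exact_mod_cast div_pos hη hn)
  have hH : (((t⁻¹ : ℝ) : ℂ) • (θ + (c : ℂ) • (1 : Matrix n n ℂ))).PosDef :=
    (hc.posSemidef_add hθ).smul (by exact_mod_cast inv_pos.2 ht)
  obtain ⟨G, hG⟩ := exists_eq_mul_conjTranspose hH.posSemidef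
  have hdet : IsUnit G.det := by
    have h := hH.isUnit
    rw [hG, isUnit_iff_isUnit_det, det_mul] at h
    exact isUnit_of_mul_isUnit_left h
  let e := Fintype.equivFin n
  have hZ : G.submatrix id e.symm * (G.submatrix id e.symm)ᴴ =
      ((t⁻¹ : ℝ) : ℂ) • (θ + (c : ℂ) • (1 : Matrix n n ℂ)) := by
    rw [conjTranspose_submatrix, submatrix_mul_equiv, submatrix_id_id, hG]
  refine ⟨G.submatrix id e.symm, G⁻¹.submatrix e.symm id, ?_, ?_, ?_, ?_⟩
  · rw [submatrix_mul_equiv, mul_nonsing_inv _ hdet, submatrix_id_id]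
  · rw [← submatrix_mul _ _ _ _ _ Function.bijective_id, nonsing_inv_mul _ hdet,
      submatrix_one_equiv]
  · rw [hZ, trace_smul, trace_add, trace_smul, trace_one, trace_eq_rtr hθ, smul_eq_mul, smul_eq_mul]
    norm_cast
    rw [div_mul_cancel₀ _ hn.ne', inv_mul_cancel₀ ht.ne']
  · rw [hZ, smul_smul, ← Complex.ofReal_mul, mul_inv_cancel₀ ht.ne', Complex.ofReal_one, one_smul,
      add_sub_cancel_left]
    exact hc.posSemidef

lemma IsQChannel.exists_isJointKrausFamily [Nonempty n] {E F : Matrix n n ℂ →ₗ[ℂ] Matrix m m ℂ}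
    (hE : IsQChannel E) (hF : IsQChannel F) (hα : 1 < α) (hfin : chDiv (geomD α) E F ≠ ⊤)
    {θ : Matrix n n ℂ} (hθ : θ.PosSemidef) {η : ℝ} (hη : 0 < η) :
    ∃ (κ : Type) (_ : Fintype κ) (K : κ → Matrix m n ℂ) (δ : κ → ℝ), IsJointKrausFamily K δ E F ∧
      ∑ x, δ x ^ α * rtr (K x * θ * (K x)ᴴ) ≤
        (2 : ℝ) ^ ((α - 1) * (chDiv (geomD α) E F).toReal) * (rtr θ + η) := by
  obtain ⟨Z, Z', hZ, hZ', htr, hdom⟩ := exists_invertible_factor_of_posSemidef hθ hη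
  obtain ⟨κ, _, K, δ, hK, hsum⟩ :=
    exists_isJointKrausFamily_of_mul_eq_one hE hF hα hfin Fintype.card_pos hZ hZ' htr
  have hterm : ∀ x, rtr (K x * θ * (K x)ᴴ) ≤ (rtr θ + η) * rtr (K x * (Z * Zᴴ) * (K x)ᴴ) := by
    intro x
    have h := rtr_nonneg (hdom.mul_mul_conjTranspose_same (K x))
    rwa [Matrix.mul_sub, Matrix.sub_mul, rtr_sub, Matrix.mul_smul, Matrix.smul_mul, rtr_smul,
      sub_nonneg] at h
  refine ⟨κ, inferInstance, K, δ, hK, ?_⟩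
  calc _ ≤ ∑ x, δ x ^ α * ((rtr θ + η) * rtr (K x * (Z * Zᴴ) * (K x)ᴴ)) :=
        Finset.sum_le_sum fun x _ => mul_le_mul_of_nonneg_left (hterm x)
          (Real.rpow_nonneg (hK.weight_nonneg x) _)
    _ = (∑ x, δ x ^ α * rtr (K x * (Z * Zᴴ) * (K x)ᴴ)) * (rtr θ + η) := by
        rw [Finset.sum_mul]
        exact Finset.sum_congr rfl fun x _ => by ring
    _ ≤ _ := mul_le_mul_of_nonneg_right hsum (add_pos_of_nonneg_of_pos (rtr_nonneg hθ) hη).le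

end Geometric

/-! ### Reverse tests and adaptive protocols -/

section ReverseTests

variable {n m R : Type} [Fintype n] [Fintype R] {α g : ℝ} {ρ σ : Matrix n n ℂ}

/-- `ρ` and `σ` are the images of nonnegative functions `p ≥ 0` and `q ≥ 0` under one preparation
of states, such that the classical quantity `∑ p ^ α * q ^ (1 - α)` is at most `g`. The encoding
uses the likelihood ratio `δ = p / q` and absorbs `q` into the operators `τ`. -/
def HasReverseTest (α g : ℝ) (ρ σ : Matrix n n ℂ) : Prop :=
  ∃ (κ : Type) (_ : Fintype κ) (τ : κ → Matrix n n ℂ) (δ : κ → ℝ), (∀ x, (τ x).PosSemidef) ∧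
    (∀ x, 0 ≤ δ x) ∧ ρ = ∑ x, (δ x : ℂ) • τ x ∧ σ = ∑ x, τ x ∧ ∑ x, δ x ^ α * rtr (τ x) ≤ g

lemma hasReverseTest_self (hρ : IsState ρ) (α : ℝ) : HasReverseTest α 1 ρ ρ := by
  refine ⟨Unit, inferInstance, fun _ => ρ, fun _ => 1, fun _ => hρ.1, fun _ => zero_le_one, ?_⟩
  simp [rtr, hρ.2]

namespace HasReverseTest

lemma posSemidef_left (h : HasReverseTest α g ρ σ) : ρ.PosSemidef := by
  obtain ⟨κ, _, τ, δ, hτ, hδ, rfl, -, -⟩ := h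
  exact posSemidef_sum _ fun x _ => posSemidef_ofReal_smul (hτ x) (hδ x)

lemma posSemidef_right (h : HasReverseTest α g ρ σ) : σ.PosSemidef := by
  obtain ⟨κ, _, τ, δ, hτ, -, -, rfl, -⟩ := h
  exact posSemidef_sum _ fun x _ => hτ x

lemma exists_posSemidef_smul_sub (h : HasReverseTest α g ρ σ) :
    ∃ L : ℝ, ((L : ℂ) • σ - ρ).PosSemidef := by
  obtain ⟨κ, _, τ, δ, hτ, hδ, rfl, rfl, -⟩ := h
  refine ⟨∑ x, δ x, ?_⟩
  rw [Finset.smul_sum, ← Finset.sum_sub_distrib]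
  refine posSemidef_sum _ fun y _ => ?_
  rw [← sub_smul, ← Complex.ofReal_sub]
  exact posSemidef_ofReal_smul (hτ y)
    (sub_nonneg.2 (Finset.single_le_sum (fun x _ => hδ x) (Finset.mem_univ y)))

lemma isDominated [DecidableEq n] (h : HasReverseTest α g ρ σ) (S : SpectralDecomp ρ)
    (T : SpectralDecomp σ) : S.IsDominated T :=
  have ⟨_, hL⟩ := h.exists_posSemidef_smul_sub
  S.isDominated_of_le T hL

lemma quasiEntropy_le [DecidableEq n] (h : HasReverseTest α g ρ σ) (S : SpectralDecomp ρ)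
    (T : SpectralDecomp σ) (hρ : rtr ρ = 1) {a : ℝ} (ha : a ∈ Set.Ioo 0 1) (haα : a ≤ α - 1) :
    S.quasiEntropy T a ≤ g ^ (a / (α - 1)) := by
  have hST := h.isDominated S T
  obtain ⟨κ, _, τ, δ, hτ, hδ, hA, hB, hg⟩ := h
  have hα : 0 < α - 1 := ha.1.trans_le haα
  have hu : ∀ x, 0 ≤ rtr (τ x) * δ x := fun x => mul_nonneg (rtr_nonneg (hτ x)) (hδ x)
  have hu1 : ∑ x, rtr (τ x) * δ x = 1 := by
    rw [← hρ, hA, rtr_sum]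
    exact Finset.sum_congr rfl fun x _ => by rw [rtr_smul, mul_comm]
  have hpow : ∀ x, rtr (τ x) * δ x * δ x ^ (α - 1) = δ x ^ α * rtr (τ x) := fun x => by
    rw [mul_assoc, ← Real.rpow_one_add' (hδ x) (by linarith), add_sub_cancel, mul_comm]
  calc S.quasiEntropy T a ≤ ∑ x, rtr (τ x) * δ x * δ x ^ a :=
        SpectralDecomp.quasiEntropy_le_of_eq_sum hST hτ hδ hA hB ha
    _ ≤ (∑ x, rtr (τ x) * δ x * δ x ^ (α - 1)) ^ (a / (α - 1)) :=
        sum_mul_rpow_le_rpow_sum hu hu1 hδ ha.1 haα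
    _ ≤ g ^ (a / (α - 1)) := by
        simp only [hpow]
        exact Real.rpow_le_rpow (Finset.sum_nonneg fun x _ =>
          mul_nonneg (Real.rpow_nonneg (hδ x) _) (rtr_nonneg (hτ x))) hg (div_nonneg ha.1.le hα.le)

lemma map [Fintype m] (h : HasReverseTest α g ρ σ)
    {Λ : Matrix n n ℂ →ₗ[ℂ] Matrix m m ℂ} (hΛ : IsQChannel Λ) :
    HasReverseTest α g (Λ ρ) (Λ σ) := by
  classical
  obtain ⟨κ, _, τ, δ, hτ, hδ, rfl, rfl, hg⟩ := h
  obtain ⟨_, _, K, hK⟩ := hΛ.exists_isKrausFamily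
  refine ⟨κ, inferInstance, fun x => Λ (τ x), δ, fun x => ?_, hδ, ?_, ?_, ?_⟩
  · simpa only [hK.apply_eq] using posSemidef_krausMap K (hτ x)
  · simp only [map_sum, map_smul]
  · simp only [map_sum]
  · simpa only [rtr, hΛ.1] using hg

end HasReverseTest

/-- The partial trace over the second factor. -/
def partialTrace (τ : Matrix (n × R) (n × R) ℂ) : Matrix n n ℂ :=
  ∑ c, τ.submatrix (·, c) (·, c)

omit [Fintype n] in
lemma posSemidef_partialTrace {τ : Matrix (n × R) (n × R) ℂ} (hτ : τ.PosSemidef) :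
    (partialTrace τ).PosSemidef :=
  posSemidef_sum _ fun _ _ => hτ.submatrix _

lemma rtr_kronecker_one_mul [DecidableEq R] (H : Matrix n n ℂ) (τ : Matrix (n × R) (n × R) ℂ) :
    rtr ((H ⊗ₖ (1 : Matrix R R ℂ)) * τ) = rtr (H * partialTrace τ) := by
  refine congrArg Complex.re ?_
  simp only [trace, diag_apply, mul_apply, partialTrace, Matrix.sum_apply, Fintype.sum_prod_type,
    kronecker_apply, one_apply, submatrix_apply, Finset.mul_sum, mul_ite, ite_mul, mul_one,
    mul_zero, zero_mul, Finset.sum_ite_eq, Finset.mem_univ, if_true]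

lemma rtr_partialTrace (τ : Matrix (n × R) (n × R) ℂ) : rtr (partialTrace τ) = rtr τ := by
  classical
  rw [← Matrix.one_mul (partialTrace τ), ← rtr_kronecker_one_mul, one_kronecker_one,
    Matrix.one_mul]

lemma rtr_kronecker_one_conj [Fintype m] [DecidableEq R] (K : Matrix m n ℂ)
    (τ : Matrix (n × R) (n × R) ℂ) :
    rtr ((K ⊗ₖ (1 : Matrix R R ℂ)) * τ * (K ⊗ₖ (1 : Matrix R R ℂ))ᴴ) =
      rtr (K * partialTrace τ * Kᴴ) := by
  rw [rtr_mul_comm, rtr_mul_comm (K * partialTrace τ), ← Matrix.mul_assoc, ← Matrix.mul_assoc,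
    ← rtr_kronecker_one_mul, conjTranspose_kronecker, conjTranspose_one, ← mul_kronecker_mul,
    Matrix.mul_one]

lemma IsJointKrausFamily.hasReverseTest_blockApplyRight {κ : Type} [DecidableEq n] [Fintype m]
    [Fintype κ] {E F : Matrix n n ℂ →ₗ[ℂ] Matrix m m ℂ} {K : κ → Matrix m n ℂ} {ε : κ → ℝ}
    (hK : IsJointKrausFamily K ε E F) {X : Type} [Fintype X] {τ : X → Matrix (n × R) (n × R) ℂ}
    {δ : X → ℝ} (hτ : ∀ x, (τ x).PosSemidef) (hδ : ∀ x, 0 ≤ δ x) :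
    HasReverseTest α
      (∑ y, ε y ^ α * rtr (K y * (∑ x, ((δ x ^ α : ℝ) : ℂ) • partialTrace (τ x)) * (K y)ᴴ))
      (blockApplyRight E (∑ x, (δ x : ℂ) • τ x)) (blockApplyRight F (∑ x, τ x)) := by
  classical
  refine ⟨X × κ, inferInstance, fun p => (K p.2 ⊗ₖ (1 : Matrix R R ℂ)) * τ p.1 *
    (K p.2 ⊗ₖ (1 : Matrix R R ℂ))ᴴ, fun p => δ p.1 * ε p.2,
    fun p => (hτ p.1).mul_mul_conjTranspose_same _,
    fun p => mul_nonneg (hδ _) (hK.weight_nonneg _), ?_, ?_, le_of_eq ?_⟩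
  · rw [blockApplyRight_eq_sum_smul hK.apply_eq_sum, Fintype.sum_prod_type, Finset.sum_comm]
    simp only [Matrix.mul_sum, Matrix.sum_mul, Finset.smul_sum, Matrix.mul_smul, Matrix.smul_mul,
      smul_smul, Complex.ofReal_mul, mul_comm]
  · rw [hK.blockApplyRight_eq, Fintype.sum_prod_type, Finset.sum_comm]
    simp only [krausMap, Matrix.mul_sum, Matrix.sum_mul]
  · rw [Fintype.sum_prod_type, Finset.sum_comm]
    refine Finset.sum_congr rfl fun y _ => ?_
    rw [Matrix.mul_sum, Matrix.sum_mul, rtr_sum, Finset.mul_sum]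
    refine Finset.sum_congr rfl fun x _ => ?_
    rw [rtr_kronecker_one_conj, Matrix.mul_smul, Matrix.smul_mul, rtr_smul,
      Real.mul_rpow (hδ x) (hK.weight_nonneg y), mul_comm (δ x ^ α), mul_assoc]

lemma HasReverseTest.mono {g' : ℝ} (h : HasReverseTest α g ρ σ) (hg : g ≤ g') :
    HasReverseTest α g' ρ σ := by
  obtain ⟨κ, _, τ, δ, hτ, hδ, hA, hB, hs⟩ := h
  exact ⟨κ, inferInstance, τ, δ, hτ, hδ, hA, hB, hs.trans hg⟩

-- Chain rule for the geometric Rényi divergence: one channel use costs a factor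
-- `2 ^ ((α - 1) * D̂_α(E‖F))`, whatever reverse test the inputs come with. The strict inequality
-- leaves room for inputs whose marginal is not of full rank.
lemma HasReverseTest.blockApplyRight [Nonempty n] [Fintype m] [DecidableEq m]
    {E F : Matrix n n ℂ →ₗ[ℂ] Matrix m m ℂ} (hE : IsQChannel E) (hF : IsQChannel F) (hα : 1 < α)
    (hfin : chDiv (geomD α) E F ≠ ⊤) {G : ℝ} (hg : 0 < g)
    (hG : (2 : ℝ) ^ ((α - 1) * (chDiv (geomD α) E F).toReal) < G)
    {ρ σ : Matrix (n × R) (n × R) ℂ} (h : HasReverseTest α g ρ σ) :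
    HasReverseTest α (G * g) (blockApplyRight E ρ) (blockApplyRight F σ) := by
  classical
  set G₀ := (2 : ℝ) ^ ((α - 1) * (chDiv (geomD α) E F).toReal)
  have hG₀ : 0 < G₀ := by positivity
  obtain ⟨X, _, τ, δ, hτ, hδ, rfl, rfl, hs⟩ := h
  set θ := ∑ x, ((δ x ^ α : ℝ) : ℂ) • partialTrace (τ x) with hθ
  have hθ_psd : θ.PosSemidef := posSemidef_sum _ fun x _ =>
    posSemidef_ofReal_smul (posSemidef_partialTrace (hτ x)) (Real.rpow_nonneg (hδ x) _)
  have hθ_tr : rtr θ ≤ g := by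
    simpa only [hθ, rtr_sum, rtr_smul, rtr_partialTrace] using hs
  obtain ⟨κ, _, K, ε, hK, hb⟩ := hE.exists_isJointKrausFamily hF hα hfin hθ_psd
    (η := g * (G - G₀) / G₀) (div_pos (mul_pos hg (sub_pos.2 hG)) hG₀)
  refine (hK.hasReverseTest_blockApplyRight hτ hδ).mono ?_
  calc _ ≤ G₀ * (rtr θ + g * (G - G₀) / G₀) := hb
    _ ≤ G₀ * (g + g * (G - G₀) / G₀) := by gcongr
    _ = G * g := by field_simp; ring

end ReverseTests

section Protocol

variable {dA dB : ℕ} {E F : Matrix (Fin dA) (Fin dA) ℂ →ₗ[ℂ] Matrix (Fin dB) (Fin dB) ℂ}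

lemma AdaptiveProtocol.trace_stateAt (P : AdaptiveProtocol dA dB)
    (hE : ∀ M, (E M).trace = M.trace) (i : ℕ) : (P.stateAt E i).trace = 1 := by
  induction i with
  | zero => exact P.init_isState.2
  | succ i ih =>
    exact ((P.prep_isChannel i).1 _).trans ((trace_blockApplyRight hE _).trans ih)

lemma AdaptiveProtocol.nonempty_fin (P : AdaptiveProtocol dA dB) : Nonempty (Fin dA) := by
  by_contra h
  rw [not_nonempty_iff] at h
  have htr := P.init_isState.2
  rw [trace, Finset.univ_eq_empty, Finset.sum_empty] at htr
  exact zero_ne_one htr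

lemma AdaptiveProtocol.hasReverseTest_stateAt (P : AdaptiveProtocol dA dB) (hE : IsQChannel E)
    (hF : IsQChannel F) {α : ℝ} (hα : 1 < α) (hfin : chDiv (geomD α) E F ≠ ⊤) {G : ℝ}
    (hG : (2 : ℝ) ^ ((α - 1) * (chDiv (geomD α) E F).toReal) < G) (i : ℕ) :
    HasReverseTest α (G ^ i) (P.stateAt E i) (P.stateAt F i) := by
  have := P.nonempty_fin
  have hG₀ : 0 < G := lt_trans (by positivity) hG
  induction i with
  | zero => exact hasReverseTest_self P.init_isState α
  | succ i ih =>
    rw [pow_succ']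
    exact (ih.blockApplyRight hE hF hα hfin (pow_pos hG₀ i) hG).map (P.prep_isChannel i)

end Protocol

/-! ### The hypothesis testing divergence -/

section HypothesisTesting

variable {n : Type} [Fintype n] [DecidableEq n] {ρ σ T : Matrix n n ℂ} {ε b : ℝ}

lemma neg_logb_le_dH (hσ : σ.PosSemidef) (hT : T.PosSemidef) (hT' : (1 - T).PosSemidef)
    (hρ : 1 - ε ≤ rtr (T * ρ)) (hb : rtr (T * σ) ≤ b) :
    ((-Real.logb 2 b : ℝ) : EReal) ≤ dH ε ρ σ := by
  rw [dH, elog]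
  split_ifs with h0
  · simp
  · rw [← EReal.coe_neg, EReal.coe_le_coe_iff, neg_le_neg_iff]
    refine Real.logb_le_logb_of_le one_lt_two (not_le.1 h0) (le_trans ?_ hb)
    refine csInf_le ⟨0, ?_⟩ ⟨T, hT, hT', hρ, rfl⟩
    rintro x ⟨T', hT', -, -, rfl⟩
    exact rtr_mul_nonneg hT' hσ

lemma dH_le_neg_logb (hρ : rtr ρ = 1) (hε : 0 ≤ ε) (hb : 0 < b)
    (h : ∀ T : Matrix n n ℂ, T.PosSemidef → (1 - T).PosSemidef → 1 - ε ≤ rtr (T * ρ) →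
      b ≤ rtr (T * σ)) : dH ε ρ σ ≤ ((-Real.logb 2 b : ℝ) : EReal) := by
  have hle : b ≤ sInf {x : ℝ | ∃ T : Matrix n n ℂ, T.PosSemidef ∧
      ((1 : Matrix n n ℂ) - T).PosSemidef ∧ 1 - ε ≤ rtr (T * ρ) ∧ x = rtr (T * σ)} := by
    refine le_csInf ⟨rtr (1 * σ), 1, PosSemidef.one, by rw [sub_self]; exact PosSemidef.zero,
      by rw [Matrix.one_mul, hρ]; linarith, rfl⟩ ?_
    rintro x ⟨T, hT, hT', hTρ, rfl⟩
    exact h T hT hT' hTρ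
  rw [dH, elog, if_neg (hb.trans_le hle).not_ge, ← EReal.coe_neg, EReal.coe_le_coe_iff,
    neg_le_neg_iff]
  exact Real.logb_le_logb_of_le one_lt_two hb hle

lemma exists_test_eq_of_le (hσ : σ.PosSemidef) (hT : T.PosSemidef) (hT' : (1 - T).PosSemidef)
    {p : ℝ} (hp : 0 < p) (hρ : p ≤ rtr (T * ρ)) :
    ∃ T' : Matrix n n ℂ, T'.PosSemidef ∧ (1 - T').PosSemidef ∧ rtr (T' * ρ) = p ∧
      rtr (T' * σ) ≤ rtr (T * σ) := by
  have hpos : 0 < rtr (T * ρ) := hp.trans_le hρ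
  set c := p / rtr (T * ρ)
  have hc : 0 ≤ c := (div_pos hp hpos).le
  have hc1 : c ≤ 1 := (div_le_one hpos).2 hρ
  refine ⟨(c : ℂ) • T, posSemidef_ofReal_smul hT hc, ?_, ?_, ?_⟩
  · have h : 1 - (c : ℂ) • T = ((1 - c : ℝ) : ℂ) • (1 : Matrix n n ℂ) + (c : ℂ) • (1 - T) := by
      rw [smul_sub, Complex.ofReal_sub, sub_smul, Complex.ofReal_one, one_smul, sub_add_sub_cancel]
    rw [h]
    exact (posSemidef_ofReal_smul PosSemidef.one (sub_nonneg.2 hc1)).add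
      (posSemidef_ofReal_smul hT' hc)
  · rw [Matrix.smul_mul, rtr_smul, div_mul_cancel₀ _ hpos.ne']
  · rw [Matrix.smul_mul, rtr_smul]
    exact mul_le_of_le_one_left (rtr_mul_nonneg hT hσ) hc1

omit [DecidableEq n] in
lemma HasReverseTest.rtr_mul_pos {α g : ℝ} (h : HasReverseTest α g ρ σ) (hT : T.PosSemidef)
    (hρ : 0 < rtr (T * ρ)) : 0 < rtr (T * σ) := by
  obtain ⟨L, hL⟩ := h.exists_posSemidef_smul_sub
  have hle := rtr_mul_le_rtr_mul hT hL
  rw [Matrix.mul_smul, rtr_smul] at hle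
  refine (rtr_mul_nonneg hT h.posSemidef_right).lt_of_ne fun h0 => ?_
  rw [← h0, mul_zero] at hle
  exact hρ.not_ge hle

-- Concavity of the logarithm, discarding the nonnegative term `(1 - p) * (-log (1 - q))`.
lemma mul_neg_logb_le_of_binary_le {p q γ Q : ℝ} (hp : p ∈ Set.Ioo 0 1) (hq : q ∈ Set.Ioo 0 1)
    (hγ : 0 < γ) (h : p * (p / q) ^ γ + (1 - p) * ((1 - p) / (1 - q)) ^ γ ≤ Q) :
    p * -Real.logb 2 q ≤ γ⁻¹ * Real.logb 2 Q + binEnt p := by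
  have hlog2 : 0 < Real.log 2 := Real.log_pos one_lt_two
  have hp' : 0 < 1 - p := sub_pos.2 hp.2
  have hq' : 0 < 1 - q := sub_pos.2 hq.2
  have hx : 0 < (p / q) ^ γ := Real.rpow_pos_of_pos (div_pos hp.1 hq.1) γ
  have hy : 0 < ((1 - p) / (1 - q)) ^ γ := Real.rpow_pos_of_pos (div_pos hp' hq') γ
  have hconc : p * Real.log ((p / q) ^ γ) + (1 - p) * Real.log (((1 - p) / (1 - q)) ^ γ) ≤
      Real.log Q :=
    (strictConcaveOn_log_Ioi.concaveOn.2 hx hy hp.1.le hp'.le (add_sub_cancel p 1)).trans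
      (Real.log_le_log (add_pos (mul_pos hp.1 hx) (mul_pos hp' hy)) h)
  rw [Real.log_rpow (div_pos hp.1 hq.1), Real.log_rpow (div_pos hp' hq'),
    Real.log_div hp.1.ne' hq.1.ne', Real.log_div hp'.ne' hq'.ne'] at hconc
  have hdrop : 0 ≤ γ * ((1 - p) * -Real.log (1 - q)) :=
    mul_nonneg hγ.le (mul_nonneg hp'.le
      (neg_nonneg.2 (Real.log_nonpos hq'.le (sub_le_self 1 hq.1.le))))
  have hγQ : γ * (p * -Real.log q + p * Real.log p + (1 - p) * Real.log (1 - p)) ≤ Real.log Q := by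
    linarith
  rw [mul_comm, ← le_div_iff₀ hγ, div_eq_inv_mul] at hγQ
  refine le_of_mul_le_mul_right ?_ hlog2
  calc p * -Real.logb 2 q * Real.log 2 = p * -Real.log q := by rw [Real.logb]; field_simp
    _ ≤ γ⁻¹ * Real.log Q - p * Real.log p - (1 - p) * Real.log (1 - p) := by linarith
    _ = (γ⁻¹ * Real.logb 2 Q + binEnt p) * Real.log 2 := by
        simp only [binEnt, Real.logb]
        field_simp
        ring

lemma HasReverseTest.mul_neg_logb_le_quasiEntropy {α g : ℝ} (h : HasReverseTest α g ρ σ)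
    (S : SpectralDecomp ρ) (R : SpectralDecomp σ) (hρ : rtr ρ = 1) (hσ : rtr σ = 1) {γ : ℝ}
    (hγ : γ ∈ Set.Ioo 0 1) (hT : T.PosSemidef) (hT' : (1 - T).PosSemidef)
    (hp : rtr (T * ρ) ∈ Set.Ioo 0 1) :
    rtr (T * ρ) * -Real.logb 2 (rtr (T * σ)) ≤
      γ⁻¹ * Real.logb 2 (S.quasiEntropy R γ) + binEnt (rtr (T * ρ)) := by
  have hcompl : ∀ A : Matrix n n ℂ, rtr A = 1 → rtr ((1 - T) * A) = 1 - rtr (T * A) := by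
    intro A hA
    rw [Matrix.sub_mul, rtr_sub, Matrix.one_mul, hA]
  have hq : 0 < rtr (T * σ) := h.rtr_mul_pos hT hp.1
  have hq' : 0 < 1 - rtr (T * σ) :=
    hcompl σ hσ ▸ h.rtr_mul_pos hT' (hcompl ρ hρ ▸ sub_pos.2 hp.2)
  have hmeas := SpectralDecomp.sum_measurement_le_quasiEntropy (h.isDominated S R)
    (P := ![T, 1 - T]) (Fin.forall_fin_two.2 ⟨hT, hT'⟩)
    (by rw [Fin.sum_univ_two]; exact add_sub_cancel T 1)
    (Fin.forall_fin_two.2 ⟨by rw [rtr_mul_comm]; exact hq,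
      by rw [rtr_mul_comm]; exact hcompl σ hσ ▸ hq'⟩) hγ
  simp only [Fin.sum_univ_two, cons_val_zero, cons_val_one, rtr_mul_comm ρ, rtr_mul_comm σ,
    hcompl ρ hρ, hcompl σ hσ] at hmeas
  exact mul_neg_logb_le_of_binary_le hp ⟨hq, sub_pos.1 hq'⟩ hγ.1 hmeas

lemma binEnt_one_sub (x : ℝ) : binEnt (1 - x) = binEnt x := by
  rw [binEnt, binEnt, sub_sub_cancel]
  ring

lemma HasReverseTest.dH_le {α g : ℝ} (h : HasReverseTest α g ρ σ) (S : SpectralDecomp ρ)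
    (R : SpectralDecomp σ) (hρ : rtr ρ = 1) (hσ : rtr σ = 1) {γ : ℝ} (hγ : γ ∈ Set.Ioo 0 1)
    (hε : ε ∈ Set.Ioo 0 1) :
    dH ε ρ σ ≤
      (((1 - ε)⁻¹ * (γ⁻¹ * Real.logb 2 (S.quasiEntropy R γ) + binEnt ε) : ℝ) : EReal) := by
  set D := (1 - ε)⁻¹ * (γ⁻¹ * Real.logb 2 (S.quasiEntropy R γ) + binEnt ε) with hD
  have hε' : 0 < 1 - ε := sub_pos.2 hε.2
  rw [← neg_neg D, ← Real.logb_rpow (x := -D) two_pos (OfNat.ofNat_ne_one 2)]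
  refine dH_le_neg_logb hρ hε.1.le (by positivity) fun T hT hT' hTρ => ?_
  obtain ⟨T₀, hT₀, hT₀', hpow, hle⟩ := exists_test_eq_of_le h.posSemidef_right hT hT' hε' hTρ
  have hq : 0 < rtr (T₀ * σ) := h.rtr_mul_pos hT₀ (hpow.symm ▸ hε')
  have hkey := h.mul_neg_logb_le_quasiEntropy S R hρ hσ hγ hT₀ hT₀'
    (hpow.symm ▸ ⟨hε', sub_lt_self 1 hε.1⟩)
  rw [hpow, binEnt_one_sub] at hkey
  refine le_trans ?_ hle
  rwa [← Real.le_logb_iff_rpow_le one_lt_two hq, neg_le, hD, inv_mul_eq_div, le_div_iff₀' hε']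

end HypothesisTesting

/-! ### From sequential to parallel channel uses -/

section ChannelUse

variable {n m R : Type} [Fintype n] [DecidableEq n] [Fintype m] [DecidableEq m] [Fintype R]
  [DecidableEq R] {E F : Matrix n n ℂ →ₗ[ℂ] Matrix m m ℂ}

lemma neg_log_le_of_neg_logb_le {x y γ ε d : ℝ} (hx : 0 < x) (hy : 0 < y)
    (hγ : γ ∈ Set.Ioo 0 1) (hε : 0 < ε) {l : ℕ} (hl : 1 ≤ l)
    (h : -Real.logb 2 (2 * (32 * x ^ l * y ^ l / ε ^ 3) ^ γ⁻¹) ≤ d) :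
    -Real.log y ≤ Real.log x + (Real.log (64 / ε ^ 3) + γ * Real.log 2 * d) / l := by
  have hl0 : (0 : ℝ) < l := by exact_mod_cast hl
  have hlog2 : 0 < Real.log 2 := Real.log_pos one_lt_two
  have hlog : Real.log (32 * x ^ l * y ^ l / ε ^ 3) =
      Real.log (64 / ε ^ 3) - Real.log 2 + l * Real.log x + l * Real.log y := by
    rw [show 32 * x ^ l * y ^ l / ε ^ 3 = 64 / ε ^ 3 / 2 * x ^ l * y ^ l by ring,
      Real.log_mul (by positivity) (by positivity), Real.log_mul (by positivity) (by positivity),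
      Real.log_div (by positivity) two_ne_zero, Real.log_pow, Real.log_pow]
  rw [Real.logb, neg_le, le_div_iff₀ hlog2, Real.log_mul two_ne_zero (by positivity),
    Real.log_rpow (by positivity), hlog] at h
  have hscaled := mul_le_mul_of_nonneg_left h hγ.1.le
  rw [mul_add, mul_inv_cancel_left₀ hγ.1.ne'] at hscaled
  have hγ2 : γ * Real.log 2 ≤ Real.log 2 := mul_le_of_le_one_left hlog2.le hγ.2.le
  rw [← sub_le_iff_le_add', le_div_iff₀ hl0]
  linarith

/-- The hypothesis testing divergence of error `ε` achieved by `l` parallel uses of `E` and `F` on a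
common state, with an ancilla of the dimension of the input, is at most `d`. -/
def ParallelDHLE (E F : Matrix n n ℂ →ₗ[ℂ] Matrix m m ℂ) (l : ℕ) (ε : ℝ) (d : EReal) : Prop :=
  ∀ ν : Matrix (tpow n l × tpow n l) (tpow n l × tpow n l) ℂ, IsState ν →
    dH ε (blockApplyRight (tpowChannel E l) ν) (blockApplyRight (tpowChannel F l) ν) ≤ d

lemma neg_log_quasiEntropy_neg_le (hE : IsQChannel E) (hF : IsQChannel F)
    {ρ σ : Matrix (n × R) (n × R) ℂ} (hρ : ρ.trace = 1) {S : SpectralDecomp ρ}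
    {T : SpectralDecomp σ} (hST : S.IsDominated T) {S' : SpectralDecomp (blockApplyRight E ρ)}
    {T' : SpectralDecomp (blockApplyRight F σ)} (hST' : S'.IsDominated T') {γ ε d : ℝ}
    (hγ : γ ∈ Set.Ioo 0 1) (hε : ε ∈ Set.Ioo 0 1) {l : ℕ} (hl : 1 ≤ l)
    (hd : ParallelDHLE E F l ε d) :
    -Real.log (S'.quasiEntropy T' (-γ)) ≤ Real.log (S.quasiEntropy T γ) +
      (Real.log (64 / ε ^ 3) + γ * Real.log 2 * d) / l := by
  obtain ⟨_, _, K, hK⟩ := hE.exists_isKrausFamily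
  obtain ⟨_, _, K', hK'⟩ := hF.exists_isKrausFamily
  obtain ⟨ν, hν, Q, hQ, hQ', hE_ge, hF_le⟩ :=
    exists_parallel_test_of_isDominated hK hK' hρ hST hST' hγ hε.1 hε.2 l
  obtain ⟨_, _, L, hL⟩ := hK'.exists_tpowChannel l
  have hρ' : (blockApplyRight E ρ).trace = 1 := (trace_blockApplyRight hE.1 ρ).trans hρ
  exact neg_log_le_of_neg_logb_le (SpectralDecomp.quasiEntropy_pos hST (congrArg Complex.re hρ) γ)
    (SpectralDecomp.quasiEntropy_pos hST' (congrArg Complex.re hρ') (-γ)) hγ hε.1 hl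
    (EReal.coe_le_coe_iff.1 ((neg_logb_le_dH (hL.posSemidef_blockApplyRight hν.1) hQ hQ' hE_ge
      hF_le).trans (hd ν hν)))

/-- The bound on the increase of the logarithmic quasi-entropy of order `γ` under a single channel
use, when the quasi-entropy of order `a` stays at most `2` and `l` parallel uses with error `ε`
achieve at most `d`. -/
def useCost (a γ ε d : ℝ) (l : ℕ) : ℝ :=
  (γ / a) ^ 2 + (Real.log (64 / ε ^ 3) + γ * Real.log 2 * d) / l

lemma log_quasiEntropy_blockApplyRight_le (hE : IsQChannel E) (hF : IsQChannel F)
    {ρ σ : Matrix (n × R) (n × R) ℂ} (hρ : ρ.trace = 1) (hσ : σ.trace = 1) {S : SpectralDecomp ρ}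
    {T : SpectralDecomp σ} (hST : S.IsDominated T) {S' : SpectralDecomp (blockApplyRight E ρ)}
    {T' : SpectralDecomp (blockApplyRight F σ)} (hST' : S'.IsDominated T') {a γ ε d : ℝ}
    (ha : a < 1) (hγ : 0 < γ) (hγa : γ ≤ a) (hQ : S'.quasiEntropy T' a ≤ 2)
    (hε : ε ∈ Set.Ioo 0 1) {l : ℕ} (hl : 1 ≤ l)
    (hd : ParallelDHLE E F l ε d) :
    Real.log (S'.quasiEntropy T' γ) ≤ Real.log (S.quasiEntropy T γ) + useCost a γ ε d l := by
  have hρ' : (blockApplyRight E ρ).trace = 1 := (trace_blockApplyRight hE.1 ρ).trans hρ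
  have hσ' : (blockApplyRight F σ).trace = 1 := (trace_blockApplyRight hF.1 σ).trans hσ
  have hgap := SpectralDecomp.log_quasiEntropy_add_log_quasiEntropy_neg_le hST'
    (congrArg Complex.re hρ') (congrArg Complex.re hσ') (hγ.trans_le hγa) ha.le hγ.le hγa hQ
  have hpar := neg_log_quasiEntropy_neg_le hE hF hρ hST hST' ⟨hγ, hγa.trans_lt ha⟩ hε hl hd
  rw [useCost]
  linarith

end ChannelUse

section AdaptiveChain

lemma IsKrausFamily.quasiEntropy_le {n m κ : Type} [Fintype n] [DecidableEq n] [Fintype m]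
    [DecidableEq m] [Fintype κ] {K : κ → Matrix m n ℂ} {Φ : Matrix n n ℂ →ₗ[ℂ] Matrix m m ℂ}
    (hK : IsKrausFamily K Φ) {A B : Matrix n n ℂ} {S : SpectralDecomp A} {T : SpectralDecomp B}
    (hST : S.IsDominated T) {S' : SpectralDecomp (Φ A)} {T' : SpectralDecomp (Φ B)}
    (hST' : S'.IsDominated T') {γ : ℝ} (hγ : γ ∈ Set.Ioo 0 1) :
    S'.quasiEntropy T' γ ≤ S.quasiEntropy T γ := by
  revert S' T'
  rw [hK.apply_eq A, hK.apply_eq B]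
  exact fun hST' => SpectralDecomp.quasiEntropy_krausMap_le hST hK.sum_eq_one hST' hγ

variable {dA dB : ℕ} {E F : Matrix (Fin dA) (Fin dA) ℂ →ₗ[ℂ] Matrix (Fin dB) (Fin dB) ℂ}
  {P : AdaptiveProtocol dA dB} {α g a γ ε d : ℝ} {i l : ℕ}

lemma AdaptiveProtocol.log_quasiEntropy_init_le (hγ : γ ∈ Set.Ioo 0 1)
    (S : SpectralDecomp (P.stateAt E 0)) (T : SpectralDecomp (P.stateAt F 0)) :
    Real.log (S.quasiEntropy T γ) ≤ 0 := by
  have hself := hasReverseTest_self P.init_isState 2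
  have hρ : rtr P.init = 1 := congrArg Complex.re P.init_isState.2
  refine Real.log_nonpos (SpectralDecomp.quasiEntropy_pos (hself.isDominated S T) hρ γ).le ?_
  exact (hself.quasiEntropy_le S T hρ hγ (by linarith [hγ.2])).trans_eq (Real.one_rpow _)

lemma AdaptiveProtocol.log_quasiEntropy_stateAt_succ_le (hE : IsQChannel E)
    {S : SpectralDecomp (blockApplyRight E (P.stateAt E i))}
    {T : SpectralDecomp (blockApplyRight F (P.stateAt F i))} (hST : S.IsDominated T)
    {S' : SpectralDecomp (P.stateAt E (i + 1))} {T' : SpectralDecomp (P.stateAt F (i + 1))}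
    (hST' : S'.IsDominated T') (hγ : γ ∈ Set.Ioo 0 1) :
    Real.log (S'.quasiEntropy T' γ) ≤ Real.log (S.quasiEntropy T γ) := by
  obtain ⟨_, _, K, hK⟩ := (P.prep_isChannel i).exists_isKrausFamily
  have hpos := SpectralDecomp.quasiEntropy_pos hST' (congrArg Complex.re (P.trace_stateAt hE.1 _)) γ
  exact Real.log_le_log hpos (hK.quasiEntropy_le hST hST' hγ)

lemma AdaptiveProtocol.log_quasiEntropy_stateAt_le {N : ℕ} (hE : IsQChannel E) (hF : IsQChannel F)
    (hin : ∀ i < N, HasReverseTest α g (P.stateAt E i) (P.stateAt F i))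
    (hout : ∀ i < N, HasReverseTest α g (blockApplyRight E (P.stateAt E i))
      (blockApplyRight F (P.stateAt F i)))
    (ha : a < 1) (haα : a ≤ α - 1) (hγ : 0 < γ) (hγa : γ ≤ a) (hg : g ^ (a / (α - 1)) ≤ 2)
    (hε : ε ∈ Set.Ioo 0 1) (hl : 1 ≤ l)
    (hd : ParallelDHLE E F l ε d) (hi : i < N)
    (S : SpectralDecomp (blockApplyRight E (P.stateAt E i)))
    (T : SpectralDecomp (blockApplyRight F (P.stateAt F i))) :
    Real.log (S.quasiEntropy T γ) ≤ (i + 1) * useCost a γ ε d l := by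
  have hγ1 : γ ∈ Set.Ioo 0 1 := ⟨hγ, hγa.trans_lt ha⟩
  let S₀ := fun {j} (hj : j < N) => spectralDecomp (hin j hj).posSemidef_left
  let T₀ := fun {j} (hj : j < N) => spectralDecomp (hin j hj).posSemidef_right
  have huse : ∀ {j} (hj : j < N) (S : SpectralDecomp (blockApplyRight E (P.stateAt E j)))
      (T : SpectralDecomp (blockApplyRight F (P.stateAt F j))), Real.log (S.quasiEntropy T γ) ≤
        Real.log ((S₀ hj).quasiEntropy (T₀ hj) γ) + useCost a γ ε d l := by
    intro j hj S T
    have hρ := P.trace_stateAt hE.1 j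
    have hρ' := (trace_blockApplyRight hE.1 _).trans hρ
    have hQ := (hout j hj).quasiEntropy_le S T (congrArg Complex.re hρ') ⟨hγ.trans_le hγa, ha⟩ haα
    exact log_quasiEntropy_blockApplyRight_le hE hF hρ (P.trace_stateAt hF.1 j)
      ((hin j hj).isDominated _ _) ((hout j hj).isDominated S T) ha hγ hγa (hQ.trans hg) hε hl hd
  induction i with
  | zero =>
    have hinit := log_quasiEntropy_init_le hγ1 (S₀ hi) (T₀ hi)
    have hstep := huse hi S T
    push_cast
    linarith
  | succ i ih =>
    have hi' := Nat.lt_of_succ_lt hi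
    let S₁ := spectralDecomp (hout i hi').posSemidef_left
    let T₁ := spectralDecomp (hout i hi').posSemidef_right
    have hprep := log_quasiEntropy_stateAt_succ_le hE ((hout i hi').isDominated S₁ T₁)
      ((hin _ hi).isDominated (S₀ hi) (T₀ hi)) hγ1
    have hrec := ih hi' S₁ T₁
    have hstep := huse hi S T
    push_cast
    linarith

end AdaptiveChain

/-! ### The choice of parameters -/

section Parameters

variable {dA dB : ℕ} {E F : Matrix (Fin dA) (Fin dA) ℂ →ₗ[ℂ] Matrix (Fin dB) (Fin dB) ℂ}

/-- The expression whose infimum over `α ∈ (1, 2]` is an eighth of `Cconst E F`. -/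
def orderCost (E F : Matrix (Fin dA) (Fin dA) ℂ →ₗ[ℂ] Matrix (Fin dB) (Fin dB) ℂ) (α : ℝ) :
    EReal :=
  if chDiv (geomD α) E F = ⊤ then ⊤
  else (((α - 1)⁻¹ *
    Real.logb 2 ((2 : ℝ) ^ ((α - 1) * (chDiv (geomD α) E F).toReal) + 2) : ℝ) : EReal)

lemma lt_logb_two_rpow_add_two (x : ℝ) : x < Real.logb 2 ((2 : ℝ) ^ x + 2) := by
  rw [Real.lt_logb_iff_rpow_lt one_lt_two (by positivity)]
  exact lt_add_of_pos_right _ two_pos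

lemma one_lt_logb_two_rpow_add_two (x : ℝ) : 1 < Real.logb 2 ((2 : ℝ) ^ x + 2) := by
  rw [Real.lt_logb_iff_rpow_lt one_lt_two (by positivity), Real.rpow_one]
  exact lt_add_of_pos_left _ (by positivity)

lemma one_le_orderCost {α : ℝ} (hα : 1 < α) (hα' : α ≤ 2) : 1 ≤ orderCost E F α := by
  unfold orderCost
  split_ifs
  · exact le_top
  · have hinv : 1 ≤ (α - 1)⁻¹ := (one_le_inv₀ (sub_pos.2 hα)).2 (by linarith)
    exact_mod_cast one_le_mul_of_one_le_of_one_le hinv (one_lt_logb_two_rpow_add_two _).le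

lemma of_orderCost_lt {α c : ℝ} (hα : 1 < α) (h : orderCost E F α < (c : EReal)) :
    chDiv (geomD α) E F ≠ ⊤ ∧ (chDiv (geomD α) E F).toReal < c ∧ 1 < (α - 1) * c := by
  have hα₀ : 0 < α - 1 := sub_pos.2 hα
  unfold orderCost at h
  split_ifs at h with htop
  · exact absurd h not_top_lt
  · rw [EReal.coe_lt_coe_iff, inv_mul_lt_iff₀ hα₀] at h
    exact ⟨htop, lt_of_mul_lt_mul_left ((lt_logb_two_rpow_add_two _).trans h) hα₀.le,
      (one_lt_logb_two_rpow_add_two _).trans h⟩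

lemma exists_Cconst_eq_mul (hfin : ∃ α : ℝ, (1 < α ∧ α ≤ 2) ∧ chDiv (geomD α) E F < ⊤) :
    ∃ c : ℝ, Cconst E F = 4 * c ∧ 2 ≤ c ∧ ∃ α : ℝ, 1 < α ∧ chDiv (geomD α) E F ≠ ⊤ ∧
      (chDiv (geomD α) E F).toReal < c ∧ 1 < (α - 1) * c := by
  set I : EReal := ⨅ α : {a : ℝ // 1 < a ∧ a ≤ 2}, orderCost E F α.1
  have hI1 : 1 ≤ I := le_iInf fun α => one_le_orderCost α.2.1 α.2.2
  have hItop : I ≠ ⊤ := by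
    obtain ⟨α, hα, hαfin⟩ := hfin
    refine ne_top_of_le_ne_top ?_ (iInf_le _ ⟨α, hα⟩)
    rw [orderCost, if_neg hαfin.ne]
    exact EReal.coe_ne_top _
  have hIreal : ((I.toReal : ℝ) : EReal) = I :=
    EReal.coe_toReal hItop (ne_bot_of_le_ne_bot (EReal.coe_ne_bot 1) hI1)
  have hI1' : 1 ≤ I.toReal := by rwa [← hIreal, ← EReal.coe_one, EReal.coe_le_coe_iff] at hI1
  have hlt : I < ((2 * I.toReal : ℝ) : EReal) := by
    conv_lhs => rw [← hIreal]
    exact EReal.coe_lt_coe_iff.2 (by linarith)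
  obtain ⟨⟨α, hα⟩, hαlt⟩ := iInf_lt_iff.1 hlt
  refine ⟨2 * I.toReal, ?_, by linarith, α, hα.1, of_orderCost_lt hα.1 hαlt⟩
  change 8 * I.toReal = _
  ring

/-- The error term of the comparison of `n` adaptive uses with `l` parallel uses at error `ε`. -/
def parallelError (n c l ε : ℝ) : ℝ :=
  n * c / Real.sqrt l * ((1 + Real.log (64 / ε ^ 3)) / Real.log 2)

lemma inv_mul_useCost {n c ε d : ℝ} {l : ℕ} (hn : 0 < n) (hc : 0 < c) (hl : 0 < l) :
    ((n * c)⁻¹ / Real.sqrt l)⁻¹ * (useCost (n * c)⁻¹ ((n * c)⁻¹ / Real.sqrt l) ε d l / Real.log 2) =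
      (l : ℝ)⁻¹ * d + parallelError n c l ε := by
  have hl' : (0 : ℝ) < l := Nat.cast_pos.2 hl
  have hsqrt : 0 < Real.sqrt l := Real.sqrt_pos.2 hl'
  have hsq : (l : ℝ) = Real.sqrt l ^ 2 := (Real.sq_sqrt hl'.le).symm
  have hlog2 : Real.log 2 ≠ 0 := (Real.log_pos one_lt_two).ne'
  rw [useCost, parallelError]
  generalize Real.sqrt l = w at hsqrt hsq ⊢
  rw [hsq]
  field_simp
  ring

lemma parallelError_lt {n c l ε μ : ℝ} (hn : 0 < n) (hc : 0 < c) (hl : 0 < l)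
    (hε : ε ∈ Set.Ioo 0 1) (hμ : 0 ≤ μ) :
    parallelError n c l ε < 4 * c * n / Real.sqrt l * Real.logb 2 (8 / ε) +
      l⁻¹ * (Real.logb 2 (1 / ε) - Real.logb 2 (1 - ε / 4) + μ) := by
  obtain ⟨hε0, hε1⟩ := hε
  have hrest : 0 < l⁻¹ * (Real.logb 2 (1 / ε) - Real.logb 2 (1 - ε / 4) + μ) := by
    have hinv : 0 < Real.logb 2 (1 / ε) :=
      Real.logb_pos one_lt_two (by rwa [one_lt_div hε0])
    have hsub : Real.logb 2 (1 - ε / 4) ≤ 0 :=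
      Real.logb_nonpos one_lt_two (by linarith) (by linarith)
    exact mul_pos (inv_pos.2 hl) (by linarith)
  have hlog64 : Real.log (64 / ε ^ 3) = 6 * Real.log 2 - 3 * Real.log ε := by
    rw [Real.log_div (by norm_num) (by positivity), Real.log_pow, show (64 : ℝ) = 2 ^ 6 by norm_num,
      Real.log_pow]
    norm_num
  have hlog8 : Real.log (8 / ε) = 3 * Real.log 2 - Real.log ε := by
    rw [Real.log_div (by norm_num) hε0.ne', show (8 : ℝ) = 2 ^ 3 by norm_num, Real.log_pow]
    norm_num
  have hlogs : 1 + Real.log (64 / ε ^ 3) ≤ 4 * Real.log (8 / ε) := by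
    linarith [Real.log_two_gt_d9, Real.log_neg hε0 hε1]
  refine lt_add_of_le_of_pos ?_ hrest
  calc parallelError n c l ε ≤ n * c / Real.sqrt l * (4 * Real.log (8 / ε) / Real.log 2) := by
        rw [parallelError]
        gcongr
    _ = 4 * c * n / Real.sqrt l * Real.logb 2 (8 / ε) := by
        rw [Real.logb]
        ring

end Parameters

section Comparison

variable {dA dB : ℕ} {E F : Matrix (Fin dA) (Fin dA) ℂ →ₗ[ℂ] Matrix (Fin dB) (Fin dB) ℂ}

lemma AdaptiveProtocol.hasReverseTest_stateAt_of_lt (P : AdaptiveProtocol dA dB)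
    (hE : IsQChannel E) (hF : IsQChannel F) {α c : ℝ} (hα : 1 < α)
    (hfin : chDiv (geomD α) E F ≠ ⊤) (hc : (chDiv (geomD α) E F).toReal < c) (hαc : 0 ≤ (α - 1) * c)
    {N i : ℕ} (hi : i < N) :
    HasReverseTest α ((2 : ℝ) ^ ((α - 1) * c * N)) (P.stateAt E i) (P.stateAt F i) ∧
      HasReverseTest α ((2 : ℝ) ^ ((α - 1) * c * N)) (blockApplyRight E (P.stateAt E i))
        (blockApplyRight F (P.stateAt F i)) := by
  have := P.nonempty_fin
  set G := (2 : ℝ) ^ ((α - 1) * c) with hG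
  have hG1 : 1 ≤ G := Real.one_le_rpow one_le_two hαc
  have hlt : (2 : ℝ) ^ ((α - 1) * (chDiv (geomD α) E F).toReal) < G :=
    Real.rpow_lt_rpow_of_exponent_lt one_lt_two (mul_lt_mul_of_pos_left hc (sub_pos.2 hα))
  rw [Real.rpow_mul_natCast zero_le_two, ← hG]
  have h := P.hasReverseTest_stateAt hE hF hα hfin hlt i
  have h' := h.blockApplyRight hE hF hα hfin (by positivity) hlt
  rw [← pow_succ'] at h'
  exact ⟨h.mono (pow_le_pow_right₀ hG1 hi.le), h'.mono (pow_le_pow_right₀ hG1 hi)⟩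

lemma AdaptiveProtocol.exists_dH_finalState_le_useCost (P : AdaptiveProtocol dA dB)
    (hE : IsQChannel E) (hF : IsQChannel F) {α g a γ δ ε : ℝ} {n l : ℕ}
    (htest : ∀ i < n, HasReverseTest α g (P.stateAt E i) (P.stateAt F i) ∧
      HasReverseTest α g (blockApplyRight E (P.stateAt E i)) (blockApplyRight F (P.stateAt F i)))
    (ha : a < 1) (haα : a ≤ α - 1) (hγ : 0 < γ) (hγa : γ ≤ a) (hg : g ^ (a / (α - 1)) ≤ 2)
    (hn : 1 ≤ n) (hl : 1 ≤ l) (hδ : δ ∈ Set.Ioo 0 1) (hε : ε ∈ Set.Ioo 0 1) :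
    ∃ x : ℝ, (((n : ℝ)⁻¹ : ℝ) : EReal) * dH δ (P.finalState E n) (P.finalState F n) ≤ x ∧
      ∀ d : ℝ, ParallelDHLE E F l ε d →
        x ≤ (1 - δ)⁻¹ * (γ⁻¹ * (useCost a γ ε d l / Real.log 2) + binEnt δ / n) := by
  obtain ⟨N, rfl⟩ := Nat.exists_eq_add_of_le' hn
  have hn0 : (0 : ℝ) < (N + 1 : ℕ) := Nat.cast_pos.2 hn
  have hδ' : 0 < 1 - δ := sub_pos.2 hδ.2
  have hout := (htest N N.lt_succ_self).2
  let S := spectralDecomp hout.posSemidef_left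
  let T := spectralDecomp hout.posSemidef_right
  have hρ := (trace_blockApplyRight hE.1 _).trans (P.trace_stateAt hE.1 N)
  have hσ := (trace_blockApplyRight hF.1 _).trans (P.trace_stateAt hF.1 N)
  have hdH := hout.dH_le S T (congrArg Complex.re hρ) (congrArg Complex.re hσ)
    ⟨hγ, hγa.trans_lt ha⟩ hδ
  set n : ℝ := ((N + 1 : ℕ) : ℝ) with hn_def
  refine ⟨n⁻¹ * ((1 - δ)⁻¹ * (γ⁻¹ * Real.logb 2 (S.quasiEntropy T γ) + binEnt δ)), ?_, ?_⟩
  · rw [EReal.coe_mul]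
    exact mul_le_mul_of_nonneg_left hdH (EReal.coe_nonneg.2 (by positivity))
  · intro d hd
    have hlog := log_quasiEntropy_stateAt_le hE hF (fun i hi => (htest i hi).1)
      (fun i hi => (htest i hi).2) ha haα hγ hγa hg hε hl hd N.lt_succ_self S T
    rw [← Nat.cast_succ, Nat.succ_eq_add_one, ← hn_def] at hlog
    calc n⁻¹ * ((1 - δ)⁻¹ * (γ⁻¹ * (Real.log (S.quasiEntropy T γ) / Real.log 2) + binEnt δ))
        ≤ n⁻¹ * ((1 - δ)⁻¹ * (γ⁻¹ * (n * useCost a γ ε d l / Real.log 2) + binEnt δ)) := by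
          gcongr
      _ = (1 - δ)⁻¹ * (γ⁻¹ * (useCost a γ ε d l / Real.log 2) + binEnt δ / n) := by
          field_simp

-- The orders are `a = 1 / (n c)`, for which `2 ^ ((α - 1) c n)` raised to `a / (α - 1)` is `2`, and
-- `γ = a / √l`, which balances the two contributions to `useCost`.
lemma AdaptiveProtocol.exists_dH_finalState_le (P : AdaptiveProtocol dA dB) (hE : IsQChannel E)
    (hF : IsQChannel F) {α c : ℝ} (hα : 1 < α) (hfin : chDiv (geomD α) E F ≠ ⊤)
    (hDc : (chDiv (geomD α) E F).toReal < c) (hc : 1 < c) (hαc : 1 ≤ (α - 1) * c) {n l : ℕ}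
    (hn : 1 ≤ n) (hl : 1 ≤ l) {δ ε : ℝ} (hδ : δ ∈ Set.Ioo 0 1) (hε : ε ∈ Set.Ioo 0 1) :
    ∃ x : ℝ, (((n : ℝ)⁻¹ : ℝ) : EReal) * dH δ (P.finalState E n) (P.finalState F n) ≤ x ∧
      ∀ d : ℝ, ParallelDHLE E F l ε d →
        x ≤ (1 - δ)⁻¹ * (l : ℝ)⁻¹ * d + (1 - δ)⁻¹ * (parallelError n c l ε + binEnt δ / n) := by
  have hn1 : (1 : ℝ) ≤ n := Nat.one_le_cast.2 hn
  have hn0 : (0 : ℝ) < n := one_pos.trans_le hn1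
  set a : ℝ := (n * c)⁻¹ with ha_def
  have ha : 0 < a := by positivity
  have ha1 : a < 1 := inv_lt_one_of_one_lt₀ (one_lt_mul_of_le_of_lt hn1 hc)
  have haα : a ≤ α - 1 := by
    rw [ha_def, inv_le_iff_one_le_mul₀ (by positivity)]
    nlinarith
  have hγ : 0 < a / Real.sqrt l := div_pos ha (Real.sqrt_pos.2 (Nat.cast_pos.2 hl))
  have hγa : a / Real.sqrt l ≤ a :=
    div_le_self ha.le (Real.one_le_sqrt.2 (Nat.one_le_cast.2 hl))
  have hg : ((2 : ℝ) ^ ((α - 1) * c * n)) ^ (a / (α - 1)) ≤ 2 := by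
    have hexp : (α - 1) * c * n * (a / (α - 1)) = 1 := by
      have hα₀ : α - 1 ≠ 0 := (sub_pos.2 hα).ne'
      rw [ha_def]
      field_simp
    rw [← Real.rpow_mul zero_le_two, hexp, Real.rpow_one]
  obtain ⟨x, hx, hxd⟩ := P.exists_dH_finalState_le_useCost hE hF
    (fun i hi => P.hasReverseTest_stateAt_of_lt hE hF hα hfin hDc (zero_le_one.trans hαc) hi)
    ha1 haα hγ hγa hg hn hl hδ hε
  refine ⟨x, hx, fun d hd => (hxd d hd).trans_eq ?_⟩
  rw [inv_mul_useCost hn0 (one_pos.trans hc) hl]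
  ring

lemma exists_le_mul_add_of_forall_le {ι : Type*} {p : ι → Prop} {D : ι → EReal}
    {k f f' x : ℝ} (hk : 0 < k) (hf : f' < f)
    (h : ∀ d : ℝ, (∀ i, p i → D i ≤ d) → x ≤ k * d + f') :
    ∃ i, p i ∧ (x : EReal) ≤ (k : EReal) * D i + f := by
  by_contra! hlt
  have hle : ∀ i, p i → D i ≤ (((x - f) / k : ℝ) : EReal) := by
    intro i hi
    by_contra! hDi
    refine (hlt i hi).not_ge ?_
    calc (x : EReal) = k * (((x - f) / k : ℝ) : EReal) + f := by
          rw [← EReal.coe_mul, ← EReal.coe_add, mul_div_cancel₀ _ hk.ne', sub_add_cancel]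
      _ ≤ k * D i + f :=
          add_le_add_left (mul_le_mul_of_nonneg_left hDi.le (EReal.coe_nonneg.2 hk.le)) _
  have := h _ hle
  rw [mul_div_cancel₀ _ hk.ne'] at this
  linarith

end Comparison

/-- One-shot conversion of adaptive to parallel strategies. -/
theorem one_shot_adaptive_to_parallel {dA dB : ℕ}
    (E F : Matrix (Fin dA) (Fin dA) ℂ →ₗ[ℂ] Matrix (Fin dB) (Fin dB) ℂ)
    (hE : IsQChannel E) (hF : IsQChannel F)
    (hfin : ∃ α : ℝ, (1 < α ∧ α ≤ 2) ∧ chDiv (geomD α) E F < ⊤)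
    (P : AdaptiveProtocol dA dB) (n : ℕ) (hn : 1 ≤ n)
    (αa αp : ℝ) (hαa : 0 < αa ∧ αa < 1) (hαp : 0 < αp ∧ αp < 1)
    (μ : ℝ) (hμ : 0 < μ) (m : ℕ) (hm : 1 ≤ m) :
    ∃ ν : Matrix (tpow (Fin dA) m × tpow (Fin dA) m) (tpow (Fin dA) m × tpow (Fin dA) m) ℂ,
      IsState ν ∧
      (((n : ℝ)⁻¹ : ℝ) : EReal) * dH αa (P.finalState E n) (P.finalState F n) ≤
        ((((1 - αa)⁻¹ * (m : ℝ)⁻¹ : ℝ)) : EReal) *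
          dH αp (blockApplyRight (tpowChannel E m) ν) (blockApplyRight (tpowChannel F m) ν) +
        ((((1 - αa)⁻¹ * ((Cconst E F * n / Real.sqrt m) * Real.logb 2 (8 / αp) +
            (m : ℝ)⁻¹ * (Real.logb 2 (1 / αp) - Real.logb 2 (1 - αp / 4) + μ) +
            binEnt αa / n) : ℝ)) : EReal) := by
  obtain ⟨c, hC, hc, α, hα, hαfin, hDc, hαc⟩ := exists_Cconst_eq_mul hfin
  obtain ⟨x, hx, hxd⟩ := P.exists_dH_finalState_le hE hF hα hαfin hDc (one_lt_two.trans_le hc)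
    hαc.le hn hm hαa hαp
  have hm₀ : (0 : ℝ) < m := Nat.cast_pos.2 hm
  have hαa' : 0 < 1 - αa := sub_pos.2 hαa.2
  have herror := parallelError_lt (Nat.cast_pos.2 hn) (two_pos.trans_le hc) hm₀ hαp hμ.le
  rw [← hC] at herror
  obtain ⟨ν, hν, hxν⟩ := exists_le_mul_add_of_forall_le (mul_pos (inv_pos.2 hαa') (inv_pos.2 hm₀))
    (mul_lt_mul_of_pos_left (add_lt_add_left herror (binEnt αa / n)) (inv_pos.2 hαa')) hxd
  exact ⟨ν, hν, hx.trans hxν⟩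

end QCD
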